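/- Suppose there exist real numbers θ > 1, σ > 1 and r₀ > 0 such that ∫_{r₀}^∞ (r·f_σ(r))^{1/(p−1)} dr = ∞ while at least one of the integrals ∫_1^∞ (g_θ(t)·t)^{−1/p} dt, ∫_1^∞ g_θ(t)^{−1/α} dt is infinite. Define F_∞(ξ) = (∫_1^ξ (g_θ(t)·t)^{−1/p} dt)^{p/(p−1)} + ∫_1^ξ g_θ(t)^{−1/α} dt for ξ ≥ 1. Then there exists a constant C > 0, depending only on n, p, θ, σ, α, C₁ and C₂, such that for every nonnegative C¹ solution u, not identically zero, of div A(x,Du) + b(x)|Du|^α ≥ q(x)g(u) in ℝⁿ there exists R > r₀ with: M(r;u) ≥ 1 and F_∞(M(r;u)) ≥ C·∫_{r₀}^r (ξ·f_σ(ξ))^{1/(p−1)} dξ for all r ≥ R (equivalently, M(r;u) ≥ F_∞^{−1}(C·∫_{r₀}^r (ξ f_σ(ξ))^{1/(p−1)} dξ) for all sufficiently large r). -/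

import Mathlib

open MeasureTheory Metric Set Filter
open scoped RealInnerProductSpace ENNReal

noncomputable section

abbrev Euc (n : ℕ) := EuclideanSpace ℝ (Fin n)

/-- Weak solution of `div A(x,Dv) + b(x)|Dv|^α ≥ a(x)` on an open set `U`:
for every nonnegative test function `φ ∈ C₀^∞(U)`,
`-∫ A(x,Dv)·Dφ + ∫ b |Dv|^α φ ≥ ∫ a φ`. -/
def IsWeakSol {n : ℕ} (A : Euc n → Euc n → Euc n) (b : Euc n → ℝ) (α : ℝ)
    (a : Euc n → ℝ) (U : Set (Euc n)) (v : Euc n → ℝ) : Prop :=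
  ∀ φ : Euc n → ℝ, ContDiff ℝ (⊤ : ℕ∞) φ → HasCompactSupport φ → tsupport φ ⊆ U →
    (∀ x, 0 ≤ φ x) →
    (∫ x in U, a x * φ x) ≤
      (-(∫ x in U, ⟪A x (gradient v x), gradient φ x⟫)) +
        ∫ x in U, b x * ‖gradient v x‖ ^ α * φ x

/-- Structural conditions on `A`: measurability, coercivity and growth. -/
def StructCond {n : ℕ} (A : Euc n → Euc n → Euc n) (p C₁ C₂ : ℝ) : Prop :=
  Measurable (Function.uncurry A) ∧
    ∀ x ζ : Euc n, C₁ * ‖ζ‖ ^ p ≤ ⟪ζ, A x ζ⟫ ∧ ‖A x ζ‖ ≤ C₂ * ‖ζ‖ ^ (p - 1)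

/-- Locally bounded function on `ℝⁿ`. -/
def LocBdd {n : ℕ} (b : Euc n → ℝ) : Prop :=
  ∀ K : Set (Euc n), IsCompact K → ∃ C, ∀ x ∈ K, b x ≤ C

/-- `M(r; u) = max_{|x| = r} u x`. -/
def sphMax {n : ℕ} (u : Euc n → ℝ) (r : ℝ) : ℝ := sSup (u '' Metric.sphere (0 : Euc n) r)

/-- `g_θ(t) = inf_{s ∈ (t/θ, θ t)} g s`. -/
def ginf (g : ℝ → ℝ) (θ t : ℝ) : ℝ := sInf (g '' Set.Ioo (t / θ) (θ * t))

/-- The open annulus `{x : r₁ < |x| < r₂}`. -/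
def Ann (n : ℕ) (r₁ r₂ : ℝ) : Set (Euc n) := {x : Euc n | r₁ < ‖x‖ ∧ ‖x‖ < r₂}

/-- `q_σ(r) = ess inf_{r/σ < |x| < σ r} q x`. -/
def qinf {n : ℕ} (q : Euc n → ℝ) (σ r : ℝ) : ℝ :=
  essInf q (volume.restrict (Ann n (r / σ) (σ * r)))

/-- `f_σ(r) = q_σ(r) / (1 + r q_σ(r)^{(α-p+1)/α} ess sup_{r/σ<|x|<σr} b^{(p-1)/α})`. -/
def fdef {n : ℕ} (q b : Euc n → ℝ) (p α σ r : ℝ) : ℝ :=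
  qinf q σ r /
    (1 + r * qinf q σ r ^ ((α - p + 1) / α) *
      essSup (fun x => b x ^ ((p - 1) / α)) (volume.restrict (Ann n (r / σ) (σ * r))))

/-- `F_∞(ξ) = (∫_1^ξ (g_θ(t) t)^{-1/p} dt)^{p/(p-1)} + ∫_1^ξ g_θ(t)^{-1/α} dt`. -/
def Finfty (g : ℝ → ℝ) (θ p α ξ : ℝ) : ℝ :=
  (∫ t in Set.Ioc (1 : ℝ) ξ, (ginf g θ t * t) ^ (-(1 / p))) ^ (p / (p - 1)) +
    ∫ t in Set.Ioc (1 : ℝ) ξ, ginf g θ t ^ (-(1 / α))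



theorem hasDerivAt_psq (t : ℝ) : HasDerivAt (fun t : ℝ => (max t 0) ^ 2) (2 * max t 0) t := by
  rcases lt_trichotomy t 0 with h | h | h
  · have : (fun t : ℝ => (max t 0) ^ 2) =ᶠ[nhds t] fun _ => 0 := by
      filter_upwards [Iio_mem_nhds h] with s hs
      simp [max_eq_right (mem_Iio.1 hs).le]
    rw [max_eq_right h.le, mul_zero]
    exact (hasDerivAt_const t (0 : ℝ)).congr_of_eventuallyEq this
  · subst h
    simp only [max_self, mul_zero]
    rw [hasDerivAt_iff_isLittleO]
    simp only [max_self, sub_zero, smul_zero]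
    have h2 : (fun x : ℝ => x ^ 2) =o[nhds 0] fun x => x := by
      simpa using Asymptotics.isLittleO_pow_pow (𝕜 := ℝ) (m := 1) (n := 2) (by norm_num)
    refine Asymptotics.IsBigO.trans_isLittleO ?_ h2
    refine Asymptotics.IsBigO.of_bound 1 (Eventually.of_forall fun x => ?_)
    have : |max x 0| ≤ |x| := by
      rcases le_total x 0 with h | h
      · simp [max_eq_right h]
      · simp [max_eq_left h]
    simp only [Real.norm_eq_abs, one_mul]
    have h3 : ((0:ℝ))^2 = 0 := by norm_num
    rw [h3, sub_zero, abs_pow, abs_pow]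
    gcongr
  · have : (fun t : ℝ => (max t 0) ^ 2) =ᶠ[nhds t] fun s => s ^ 2 := by
      filter_upwards [Ioi_mem_nhds h] with s hs
      simp [max_eq_left (mem_Ioi.1 hs).le]
    rw [max_eq_left h.le]
    exact (by simpa using hasDerivAt_pow 2 t : HasDerivAt (fun s : ℝ => s ^ 2) (2 * t) t).congr_of_eventuallyEq this

theorem contDiff_psq : ContDiff ℝ 1 (fun t : ℝ => (max t 0) ^ 2) := by
  rw [contDiff_one_iff_deriv]
  refine ⟨fun t => (hasDerivAt_psq t).differentiableAt, ?_⟩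
  have : deriv (fun t : ℝ => (max t 0) ^ 2) = fun t => 2 * max t 0 :=
    funext fun t => (hasDerivAt_psq t).deriv
  rw [this]; fun_prop

theorem sobolev_real (n : ℕ) (hn : 2 ≤ n) : ∃ Cs : ℝ, 0 < Cs ∧ ∀ w : Euc n → ℝ,
    ContDiff ℝ 1 w → HasCompactSupport w →
    ∫ x, |w x| ^ ((n : ℝ) / (n - 1)) ≤ Cs * (∫ x, ‖fderiv ℝ w x‖) ^ ((n : ℝ) / (n - 1)) := by
  have hn1 : (1 : ℝ) < n := by exact_mod_cast (by omega : 1 < n)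
  set p : ℝ := (n : ℝ) / (n - 1) with hpdef
  have hconj : ((Module.finrank ℝ (Euc n) : ℕ) : ℝ).HolderConjugate p := by
    rw [finrank_euclideanSpace, Fintype.card_fin]
    exact Real.HolderConjugate.conjExponent hn1
  have hp0 : 0 < p := by rw [hpdef]; apply div_pos <;> linarith
  set c := lintegralPowLePowLIntegralFDerivConst (volume : Measure (Euc n)) p
  refine ⟨c + 1, by positivity, fun w hw hcw => ?_⟩
  have key := lintegral_pow_le_pow_lintegral_fderiv (volume : Measure (Euc n)) hw hcw hconj
  have hI : Integrable (fun x => ‖fderiv ℝ w x‖) :=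
    (hw.continuous_fderiv one_ne_zero).norm.integrable_of_hasCompactSupport (hcw.fderiv ℝ).norm
  have e1 : (∫⁻ x, ‖fderiv ℝ w x‖ₑ) = ENNReal.ofReal (∫ x, ‖fderiv ℝ w x‖) := by
    rw [ofReal_integral_eq_lintegral_ofReal hI (Eventually.of_forall fun x => norm_nonneg _)]
    simp
  have hnn : 0 ≤ ∫ x, ‖fderiv ℝ w x‖ := integral_nonneg fun x => norm_nonneg _
  have e2 : ∫ x, |w x| ^ p = (∫⁻ x, ‖w x‖ₑ ^ p).toReal := by
    rw [integral_eq_lintegral_of_nonneg_ae (Eventually.of_forall fun x => by positivity)]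
    · congr 1
      apply lintegral_congr
      intro x
      rw [← ofReal_norm, ENNReal.ofReal_rpow_of_nonneg (norm_nonneg _) hp0.le, Real.norm_eq_abs]
    · exact (hw.continuous.abs.rpow_const (fun x => Or.inr hp0.le)).aestronglyMeasurable
  rw [e2]
  rw [e1, ENNReal.ofReal_rpow_of_nonneg hnn hp0.le] at key
  have := ENNReal.toReal_mono (by finiteness) key
  rw [ENNReal.toReal_mul, ENNReal.toReal_ofReal (by positivity)] at this
  refine this.trans ?_
  have : 0 ≤ (∫ x, ‖fderiv ℝ w x‖) ^ p := by positivity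
  simp only [ENNReal.coe_toReal]
  nlinarith

theorem smoothTransition_deriv_bdd : ∃ K : ℝ, 0 < K ∧ ∀ x, |deriv Real.smoothTransition x| ≤ K := by
  have hc : Continuous (deriv Real.smoothTransition) :=
    (Real.smoothTransition.contDiff (n := 1)).continuous_deriv le_rfl
  obtain ⟨K, hK⟩ := isCompact_Icc.exists_bound_of_continuousOn (s := Icc (0:ℝ) 1) hc.continuousOn
  refine ⟨max K 1, by positivity, fun x => ?_⟩
  by_cases hx : x ∈ Icc (0:ℝ) 1
  · exact (hK x hx).trans (le_max_left _ _)
  · have : deriv Real.smoothTransition x = 0 := by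
      rw [mem_Icc, not_and_or, not_le, not_le] at hx
      rcases hx with hx | hx
      · have : Real.smoothTransition =ᶠ[nhds x] fun _ => 0 := by
          filter_upwards [Iio_mem_nhds hx] with s hs
          exact Real.smoothTransition.zero_of_nonpos (le_of_lt hs)
        rw [this.deriv_eq]; simp
      · have : Real.smoothTransition =ᶠ[nhds x] fun _ => 1 := by
          filter_upwards [Ioi_mem_nhds hx] with s hs
          exact Real.smoothTransition.one_of_one_le (le_of_lt hs)
        rw [this.deriv_eq]; simp
    rw [this]; simp

/-- cutoff functions -/
theorem exists_cutoff (n : ℕ) : ∃ K : ℝ, 0 < K ∧ ∀ (z : Euc n) (r' r : ℝ), 0 < r' → r' < r →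
    ∃ ψ : Euc n → ℝ, ContDiff ℝ 1 ψ ∧ (∀ x, 0 ≤ ψ x) ∧ (∀ x, ψ x ≤ 1) ∧
      (∀ x, ‖x - z‖ ≤ r' → ψ x = 1) ∧ (∀ x, r ≤ ‖x - z‖ → ψ x = 0) ∧
      ∀ x, ‖fderiv ℝ ψ x‖ ≤ K / (r - r') := by
  obtain ⟨K, hK, hKb⟩ := smoothTransition_deriv_bdd
  refine ⟨2 * K, by positivity, fun z r' r hr' hr => ?_⟩
  have hd : 0 < r ^ 2 - r' ^ 2 := by nlinarith
  set h : Euc n → ℝ := fun x => (r ^ 2 - ‖x - z‖ ^ 2) / (r ^ 2 - r' ^ 2) with hh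
  have hder : ∀ x, HasFDerivAt h ((r ^ 2 - r' ^ 2)⁻¹ • (-(2 • (innerSL ℝ (x - z)))) : Euc n →L[ℝ] ℝ) x := by
    intro x
    have h1 : HasFDerivAt (fun x : Euc n => ‖x - z‖ ^ 2) (2 • (innerSL ℝ (x - z)) : Euc n →L[ℝ] ℝ) x := by
      simpa using ((hasFDerivAt_id x).sub_const z).norm_sq
    have h2 := (h1.const_sub (r ^ 2)).const_smul ((r ^ 2 - r' ^ 2)⁻¹)
    refine h2.congr_of_eventuallyEq (Eventually.of_forall fun y => ?_)
    simp [hh, div_eq_inv_mul]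
  have hψd : ∀ x, HasFDerivAt (fun x => Real.smoothTransition (h x))
      (deriv Real.smoothTransition (h x) • ((r ^ 2 - r' ^ 2)⁻¹ • (-(2 • (innerSL ℝ (x - z)))) : Euc n →L[ℝ] ℝ)) x := by
    intro x
    have h1 : HasDerivAt Real.smoothTransition (deriv Real.smoothTransition (h x)) (h x) :=
      ((Real.smoothTransition.contDiff (n := 1)).differentiable one_ne_zero _).hasDerivAt
    exact h1.comp_hasFDerivAt x (hder x)
  have hz : ∀ x, r ≤ ‖x - z‖ → Real.smoothTransition (h x) = 0 := by
    intro x hx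
    apply Real.smoothTransition.zero_of_nonpos
    apply div_nonpos_of_nonpos_of_nonneg _ hd.le
    nlinarith
  refine ⟨fun x => Real.smoothTransition (h x), ?_, fun x => Real.smoothTransition.nonneg _,
    fun x => Real.smoothTransition.le_one _, ?_, hz, ?_⟩
  · refine (Real.smoothTransition.contDiff (n := 1)).comp ?_
    apply ContDiff.div_const
    apply contDiff_const.sub
    exact (contDiff_id.sub contDiff_const).norm_sq ℝ
  · intro x hx
    apply Real.smoothTransition.one_of_one_le
    rw [hh, le_div_iff₀ hd]
    have : 0 ≤ ‖x - z‖ := norm_nonneg _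
    nlinarith
  · intro x
    by_cases hx : r ≤ ‖x - z‖
    · have : fderiv ℝ (fun x => Real.smoothTransition (h x)) x = 0 := by
        apply IsLocalMin.fderiv_eq_zero
        apply Eventually.of_forall
        intro y
        simp only [hz x hx]
        exact Real.smoothTransition.nonneg _
      rw [this, norm_zero]
      have : 0 < r - r' := by linarith
      positivity
    · push Not at hx
      rw [(hψd x).fderiv, norm_smul, norm_smul, norm_neg, Real.norm_eq_abs, Real.norm_eq_abs,
        abs_of_pos (inv_pos.2 hd)]
      have e : ‖(2 • (innerSL ℝ (x - z)) : Euc n →L[ℝ] ℝ)‖ ≤ 2 * ‖x - z‖ := by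
        refine (norm_nsmul_le).trans ?_
        rw [innerSL_apply_norm]
        norm_num
      have hrr : 0 < r - r' := by linarith
      calc |deriv Real.smoothTransition (h x)| * ((r ^ 2 - r' ^ 2)⁻¹ * ‖(2 • (innerSL ℝ (x - z)) : Euc n →L[ℝ] ℝ)‖)
          ≤ K * ((r ^ 2 - r' ^ 2)⁻¹ * (2 * r)) := by
            gcongr
            · exact hKb _
            · refine e.trans (by linarith)
        _ ≤ 2 * K / (r - r') := by
            have : (r ^ 2 - r' ^ 2) = (r - r') * (r + r') := by ring
            rw [this, mul_inv, div_eq_mul_inv]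
            have h2 : (r + r')⁻¹ * (2 * r) ≤ 2 := by
              rw [inv_mul_le_iff₀ (by linarith)]; linarith
            have h3 : 0 < (r - r')⁻¹ := inv_pos.2 hrr
            calc K * ((r - r')⁻¹ * (r + r')⁻¹ * (2 * r)) = K * (r - r')⁻¹ * ((r + r')⁻¹ * (2 * r)) := by ring
              _ ≤ K * (r - r')⁻¹ * 2 := by gcongr
              _ = _ := by ring

theorem cutoff_compact {n : ℕ} {ψ : Euc n → ℝ} {z : Euc n} {r : ℝ}
    (h : ∀ x, r ≤ ‖x - z‖ → ψ x = 0) : HasCompactSupport ψ := by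
  apply HasCompactSupport.intro (isCompact_closedBall z r)
  intro x hx
  apply h
  rw [mem_closedBall, not_le, dist_eq_norm] at hx
  exact hx.le


theorem exists_mollify {n : ℕ} (φ : Euc n → ℝ) (hφ : ContDiff ℝ 1 φ) (hc : HasCompactSupport φ)
    (h0 : ∀ x, 0 ≤ φ x) : ∃ (F : ℕ → Euc n → ℝ) (R B : ℝ),
      (∀ k, ContDiff ℝ (⊤ : ℕ∞) (F k) ∧ HasCompactSupport (F k) ∧ (∀ x, 0 ≤ F k x) ∧
        (∀ x, R < ‖x‖ → F k x = 0) ∧ (∀ x, |F k x| ≤ B) ∧ (∀ x, ‖fderiv ℝ (F k) x‖ ≤ B)) ∧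
      (∀ x, Tendsto (fun k => F k x) atTop (nhds (φ x))) ∧
      (∀ x, Tendsto (fun k => fderiv ℝ (F k) x) atTop (nhds (fderiv ℝ φ x))) := by
  let β : ℕ → ContDiffBump (0 : Euc n) := fun k =>
    ⟨1 / (2 * ((k : ℝ) + 1)), 1 / ((k : ℝ) + 1), by positivity, by
      apply one_div_lt_one_div_of_lt <;> [positivity; skip]
      have : (0 : ℝ) ≤ k := by positivity
      linarith⟩
  have hβout : ∀ k, (β k).rOut = 1 / ((k : ℝ) + 1) := fun k => rfl
  have hβ1 : ∀ k, (β k).rOut ≤ 1 := fun k => by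
    rw [hβout, div_le_one (by positivity)]
    have : (0 : ℝ) ≤ k := by positivity
    linarith
  have hβ : Tendsto (fun k => (β k).rOut) atTop (nhds 0) := by
    simp only [hβout]; exact tendsto_one_div_add_atTop_nhds_zero_nat
  let F : ℕ → Euc n → ℝ := fun k =>
    convolution ((β k).normed volume) φ (ContinuousLinearMap.lsmul ℝ ℝ) volume
  have hφc := hφ.continuous
  have hφ'c : Continuous (fderiv ℝ φ) := hφ.continuous_fderiv one_ne_zero
  obtain ⟨B1, hB1⟩ := hφc.bounded_above_of_compact_support hc
  obtain ⟨B2, hB2⟩ := hφ'c.bounded_above_of_compact_support (hc.fderiv ℝ)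
  obtain ⟨R, hR⟩ := hc.isCompact.isBounded.subset_closedBall (0 : Euc n)
  have hloc : ∀ k, LocallyIntegrable ((β k).normed (volume : Measure (Euc n))) volume := fun k =>
    ((β k).contDiff_normed (n := 0)).continuous.locallyIntegrable
  have hF' : ∀ k x, fderiv ℝ (F k) x =
      convolution ((β k).normed volume) (fderiv ℝ φ) (ContinuousLinearMap.lsmul ℝ ℝ) volume x := by
    intro k x
    rw [(HasCompactSupport.hasFDerivAt_convolution_right (ContinuousLinearMap.lsmul ℝ ℝ) hc (hloc k) hφ x).fderiv]
    unfold convolution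
    congr 1
  have gen : ∀ {V : Type} [NormedAddCommGroup V] [NormedSpace ℝ V] [CompleteSpace V] (f : Euc n → V) (C : ℝ),
      Continuous f → (∀ x, ‖f x‖ ≤ C) → ∀ k x,
      ‖convolution ((β k).normed volume) f (ContinuousLinearMap.lsmul ℝ ℝ) volume x‖ ≤ 3 * C := by
    intro V _ _ _ f C hf hC k x
    have h1 : dist (convolution ((β k).normed volume) f (ContinuousLinearMap.lsmul ℝ ℝ) volume x) (f x) ≤ 2 * C := by
      apply (β k).dist_normed_convolution_le hf.aestronglyMeasurable
      intro y _
      calc dist (f y) (f x) ≤ ‖f y‖ + ‖f x‖ := dist_le_norm_add_norm _ _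
        _ ≤ _ := by linarith [hC x, hC y]
    have h2 : ‖convolution ((β k).normed volume) f (ContinuousLinearMap.lsmul ℝ ℝ) volume x‖ ≤
      dist (convolution ((β k).normed volume) f (ContinuousLinearMap.lsmul ℝ ℝ) volume x) (f x) + ‖f x‖ := by
      rw [dist_eq_norm]
      exact norm_le_norm_sub_add _ _
    linarith [hC x]
  refine ⟨F, R + 1, max (3 * B1) (3 * B2), fun k => ⟨?_, ?_, ?_, ?_, ?_, ?_⟩, ?_, ?_⟩
  · exact (β k).hasCompactSupport_normed.contDiff_convolution_left _ (β k).contDiff_normed hφc.locallyIntegrable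
  · exact (β k).hasCompactSupport_normed.convolution _ hc
  · intro x
    apply integral_nonneg
    intro y
    simp only [ContinuousLinearMap.lsmul_apply, smul_eq_mul]
    exact mul_nonneg ((β k).nonneg_normed _) (h0 _)
  · intro x hx
    by_contra hne
    have : x ∈ Function.support (F k) := hne
    have := support_convolution_subset _ this
    obtain ⟨y, hy, w, hw, rfl⟩ := this
    rw [(β k).support_normed_eq, mem_ball, dist_zero_right] at hy
    have h2 := hR (subset_tsupport _ hw)
    rw [mem_closedBall, dist_zero_right] at h2
    have h3 := norm_add_le y w
    simp only [] at hx
    linarith [hβ1 k]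
  · intro x
    exact (gen φ B1 hφc hB1 k x).trans (le_max_left _ _)
  · intro x
    rw [hF']
    exact (gen (fderiv ℝ φ) B2 hφ'c hB2 k x).trans (le_max_right _ _)
  · intro x
    exact ContDiffBump.convolution_tendsto_right_of_continuous hβ hφc x
  · intro x
    simp only [hF']
    exact ContDiffBump.convolution_tendsto_right_of_continuous hβ hφ'c x

/-- integrability of bounded, compactly supported products -/
theorem integrable_of_bdd_supp {n : ℕ} (f : Euc n → ℝ) (hf : AEStronglyMeasurable f volume) (R C : ℝ)
    (h1 : ∀ x, R < ‖x‖ → f x = 0) (h2 : ∀ x, ‖x‖ ≤ R → |f x| ≤ C) : Integrable f := by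
  have : Integrable ((closedBall (0 : Euc n) R).indicator fun _ => C) := by
    rw [integrable_indicator_iff measurableSet_closedBall]
    exact integrableOn_const measure_closedBall_lt_top.ne
  refine this.mono' hf (Eventually.of_forall fun x => ?_)
  by_cases hx : ‖x‖ ≤ R
  · rw [indicator_of_mem (by simpa using hx)]; exact h2 x hx
  · rw [h1 x (not_le.1 hx)]
    simp only [norm_zero]
    rw [indicator_of_notMem (by simpa using hx)]

theorem extend_test {n : ℕ} (H : Euc n → ℝ) (V : Euc n → Euc n) (hH : Measurable H) (hV : Measurable V)
    (hb : ∀ R : ℝ, ∃ C, ∀ x, ‖x‖ ≤ R → |H x| ≤ C ∧ ‖V x‖ ≤ C)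
    (hw : ∀ φ : Euc n → ℝ, ContDiff ℝ (⊤ : ℕ∞) φ → HasCompactSupport φ → (∀ x, 0 ≤ φ x) →
      (∫ x, H x * φ x) + ∫ x, fderiv ℝ φ x (V x) ≤ 0)
    (φ : Euc n → ℝ) (hφ : ContDiff ℝ 1 φ) (hc : HasCompactSupport φ) (h0 : ∀ x, 0 ≤ φ x) :
    Integrable (fun x => H x * φ x) ∧ Integrable (fun x => fderiv ℝ φ x (V x)) ∧
    (∫ x, H x * φ x) + ∫ x, fderiv ℝ φ x (V x) ≤ 0 := by
  obtain ⟨F, R, B, hF, hF1, hF2⟩ := exists_mollify φ hφ hc h0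
  obtain ⟨C, hC⟩ := hb R
  have fd0 : ∀ k x, R < ‖x‖ → fderiv ℝ (F k) x = 0 := by
    intro k x hx
    apply IsLocalMin.fderiv_eq_zero
    apply Eventually.of_forall
    intro y
    simp only [(hF k).2.2.2.1 x hx]
    exact (hF k).2.2.1 y
  have hint : Integrable ((closedBall (0 : Euc n) R).indicator fun _ => C * B) := by
    rw [integrable_indicator_iff measurableSet_closedBall]
    exact integrableOn_const measure_closedBall_lt_top.ne
  have m1 : ∀ ψ : Euc n → ℝ, ContDiff ℝ 1 ψ → AEStronglyMeasurable (fun x => H x * ψ x) volume :=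
    fun ψ hψ => (hH.mul hψ.continuous.measurable).aestronglyMeasurable
  have m2 : ∀ ψ : Euc n → ℝ, ContDiff ℝ 1 ψ → AEStronglyMeasurable (fun x => fderiv ℝ ψ x (V x)) volume :=
    fun ψ hψ => by
      have h1 : AEStronglyMeasurable (fderiv ℝ ψ) volume := (hψ.continuous_fderiv one_ne_zero).aestronglyMeasurable
      exact (ContinuousLinearMap.id ℝ (Euc n →L[ℝ] ℝ)).aestronglyMeasurable_comp₂ h1 hV.aestronglyMeasurable
  have hFc : ∀ k, ContDiff ℝ 1 (F k) := fun k => (hF k).1.of_le (by exact_mod_cast le_top)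
  have b1 : ∀ k, ∀ᵐ x ∂(volume : Measure (Euc n)), ‖H x * F k x‖ ≤ (closedBall (0 : Euc n) R).indicator (fun _ => C * B) x := by
    intro k
    refine Eventually.of_forall fun x => ?_
    by_cases hx : ‖x‖ ≤ R
    · rw [indicator_of_mem (by simpa using hx), norm_mul]
      have := (hC x hx).1
      exact mul_le_mul this ((hF k).2.2.2.2.1 x) (norm_nonneg _) ((abs_nonneg _).trans this)
    · rw [(hF k).2.2.2.1 x (not_le.1 hx), indicator_of_notMem (by simpa using hx)]; simp
  have b2 : ∀ k, ∀ᵐ x ∂(volume : Measure (Euc n)), ‖fderiv ℝ (F k) x (V x)‖ ≤ (closedBall (0 : Euc n) R).indicator (fun _ => C * B) x := by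
    intro k
    refine Eventually.of_forall fun x => ?_
    by_cases hx : ‖x‖ ≤ R
    · rw [indicator_of_mem (by simpa using hx), mul_comm]
      refine (ContinuousLinearMap.le_opNorm _ _).trans ?_
      have := (hF k).2.2.2.2.2 x
      exact mul_le_mul this (hC x hx).2 (norm_nonneg _) ((norm_nonneg _).trans this)
    · rw [fd0 k x (not_le.1 hx), indicator_of_notMem (by simpa using hx)]; simp
  have t1 : ∀ x, Tendsto (fun k => H x * F k x) atTop (nhds (H x * φ x)) := fun x =>
    (hF1 x).const_mul _
  have t2 : ∀ x, Tendsto (fun k => fderiv ℝ (F k) x (V x)) atTop (nhds (fderiv ℝ φ x (V x))) := fun x =>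
    ((ContinuousLinearMap.apply ℝ ℝ (V x)).continuous.tendsto _).comp (hF2 x)
  have c1 := tendsto_integral_of_dominated_convergence _ (fun k => m1 _ (hFc k)) hint b1 (Eventually.of_forall t1)
  have c2 := tendsto_integral_of_dominated_convergence _ (fun k => m2 _ (hFc k)) hint b2 (Eventually.of_forall t2)
  refine ⟨?_, ?_, ?_⟩
  · refine hint.mono' (m1 _ hφ) ?_
    filter_upwards [ae_all_iff.2 b1] with x hx
    exact le_of_tendsto (t1 x).norm (Eventually.of_forall hx)
  · refine hint.mono' (m2 _ hφ) ?_
    filter_upwards [ae_all_iff.2 b2] with x hx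
    exact le_of_tendsto (t2 x).norm (Eventually.of_forall hx)
  · exact le_of_tendsto (c1.add c2) (Eventually.of_forall fun k => hw _ (hF k).1 (hF k).2.1 (hF k).2.2.1)


/-- All standing assumptions on the data and the solution. -/
structure Sol {n : ℕ} (p C₁ C₂ α : ℝ) (A : Euc n → Euc n → Euc n) (b q : Euc n → ℝ) (g : ℝ → ℝ)
    (u : Euc n → ℝ) : Prop where
  hn : 2 ≤ n
  hp : 1 < p
  hC₁ : 0 < C₁
  hC₂ : 0 < C₂
  hα₁ : p - 1 ≤ α
  hα₂ : α ≤ p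
  hA : StructCond A p C₁ C₂
  bm : Measurable b
  b0 : ∀ x, 0 ≤ b x
  bl : LocBdd b
  qm : Measurable q
  q0 : ∀ x, 0 ≤ q x
  ql : LocBdd q
  gc : ContinuousOn g (Set.Ici 0)
  g0 : ∀ t ∈ Set.Ici (0 : ℝ), 0 ≤ g t
  gp : ∀ t : ℝ, 0 < t → 0 < g t
  uc : ContDiff ℝ 1 u
  u0 : ∀ x, 0 ≤ u x
  uw : IsWeakSol A b α (fun x => q x * g (u x)) Set.univ u

namespace Sol
variable {n : ℕ} {p C₁ C₂ α : ℝ} {A : Euc n → Euc n → Euc n} {b q : Euc n → ℝ} {g : ℝ → ℝ}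
    {u : Euc n → ℝ}

theorem norm_grad (u : Euc n → ℝ) (x : Euc n) : ‖gradient u x‖ = ‖fderiv ℝ u x‖ := by
  unfold gradient; simp

theorem grad_cont (h : Sol p C₁ C₂ α A b q g u) : Continuous (gradient u) := by
  unfold gradient
  exact (InnerProductSpace.toDual ℝ (Euc n)).symm.continuous.comp (h.uc.continuous_fderiv one_ne_zero)

theorem gu_cont (h : Sol p C₁ C₂ α A b q g u) : Continuous fun x => g (u x) :=
  h.gc.comp_continuous h.uc.continuous h.u0

theorem α_pos (h : Sol p C₁ C₂ α A b q g u) : 0 < α := by have := h.hp; have := h.hα₁; linarith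

theorem fd_cont (h : Sol p C₁ C₂ α A b q g u) : Continuous fun x => ‖fderiv ℝ u x‖ :=
  (h.uc.continuous_fderiv one_ne_zero).norm

theorem test (h : Sol p C₁ C₂ α A b q g u)
    (φ : Euc n → ℝ) (hφ : ContDiff ℝ 1 φ) (hc : HasCompactSupport φ) (h0 : ∀ x, 0 ≤ φ x) :
    Integrable (fun x => (q x * g (u x) - b x * ‖fderiv ℝ u x‖ ^ α) * φ x) ∧
    Integrable (fun x => fderiv ℝ φ x (A x (gradient u x))) ∧
    (∫ x, (q x * g (u x) - b x * ‖fderiv ℝ u x‖ ^ α) * φ x) +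
      ∫ x, fderiv ℝ φ x (A x (gradient u x)) ≤ 0 := by
  have hαp := h.α_pos
  have hp := h.hp
  have cX : Continuous fun x => ‖fderiv ℝ u x‖ ^ α := h.fd_cont.rpow_const (fun x => Or.inr hαp.le)
  have mV : Measurable fun x => A x (gradient u x) := by
    have := h.hA.1.comp (measurable_id.prodMk h.grad_cont.measurable)
    exact this
  have bd : ∀ R : ℝ, ∃ C, 0 ≤ C ∧ ∀ x : Euc n, ‖x‖ ≤ R → b x ≤ C ∧ q x ≤ C ∧ g (u x) ≤ C ∧
      ‖fderiv ℝ u x‖ ^ α ≤ C ∧ ‖A x (gradient u x)‖ ≤ C := by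
    intro R
    have hK : IsCompact (closedBall (0 : Euc n) R) := isCompact_closedBall _ _
    obtain ⟨c1, h1⟩ := h.bl _ hK
    obtain ⟨c2, h2⟩ := h.ql _ hK
    obtain ⟨c3, h3⟩ := hK.exists_bound_of_continuousOn h.gu_cont.continuousOn
    obtain ⟨c4, h4⟩ := hK.exists_bound_of_continuousOn cX.continuousOn
    have cV : Continuous fun x => C₂ * ‖fderiv ℝ u x‖ ^ (p - 1) :=
      continuous_const.mul (h.fd_cont.rpow_const (fun x => Or.inr (by linarith)))
    obtain ⟨c5, h5⟩ := hK.exists_bound_of_continuousOn cV.continuousOn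
    refine ⟨|c1| + |c2| + |c3| + |c4| + |c5|, by positivity, fun x hx => ?_⟩
    have hx' : x ∈ closedBall (0 : Euc n) R := by simpa using hx
    have a1 := h1 x hx'; have a2 := h2 x hx'
    have a3 := (le_abs_self _).trans (h3 x hx')
    have a4 := (le_abs_self _).trans (h4 x hx')
    have a5 := (le_abs_self _).trans (h5 x hx')
    have a6 := (h.hA.2 x (gradient u x)).2
    rw [norm_grad] at a6
    have := le_abs_self c1; have := le_abs_self c2; have := le_abs_self c3
    have := le_abs_self c4; have := le_abs_self c5
    have := abs_nonneg c1; have := abs_nonneg c2; have := abs_nonneg c3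
    have := abs_nonneg c4; have := abs_nonneg c5
    refine ⟨?_, ?_, ?_, ?_, ?_⟩ <;> linarith
  have m1 : Measurable fun x => q x * g (u x) := h.qm.mul h.gu_cont.measurable
  have m2 : Measurable fun x => b x * ‖fderiv ℝ u x‖ ^ α := h.bm.mul cX.measurable
  refine extend_test (fun x => q x * g (u x) - b x * ‖fderiv ℝ u x‖ ^ α)
    (fun x => A x (gradient u x)) (m1.sub m2) mV ?_ ?_ φ hφ hc h0
  · intro R
    obtain ⟨C, hC0, hC⟩ := bd R
    refine ⟨C * C + C * C + C, fun x hx => ?_⟩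
    obtain ⟨a1, a2, a3, a4, a5⟩ := hC x hx
    have e1 : q x * g (u x) ≤ C * C := mul_le_mul a2 a3 (h.g0 _ (h.u0 x)) hC0
    have e2 : b x * ‖fderiv ℝ u x‖ ^ α ≤ C * C := mul_le_mul a1 a4 (by positivity) hC0
    have e3 : 0 ≤ q x * g (u x) := mul_nonneg (h.q0 x) (h.g0 _ (h.u0 x))
    have e4 : 0 ≤ b x * ‖fderiv ℝ u x‖ ^ α := mul_nonneg (h.b0 x) (by positivity)
    refine ⟨abs_le.2 ⟨by linarith, by linarith⟩, by nlinarith⟩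
  · intro φ hφ hc h0
    have key := h.uw φ hφ hc (subset_univ _) h0
    simp only [setIntegral_univ] at key
    obtain ⟨R, hR⟩ := hc.isCompact.isBounded.subset_closedBall (0 : Euc n)
    obtain ⟨C, hC0, hC⟩ := bd R
    obtain ⟨B1, hB1⟩ := hφ.continuous.bounded_above_of_compact_support hc
    have z0 : ∀ x, R < ‖x‖ → φ x = 0 := by
      intro x hx
      by_contra hne
      have := hR (subset_tsupport _ hne)
      rw [mem_closedBall, dist_zero_right] at this
      linarith
    have i1 : Integrable fun x => q x * g (u x) * φ x := by
      refine integrable_of_bdd_supp _ (m1.mul hφ.continuous.measurable).aestronglyMeasurable R (C * C * B1) ?_ ?_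
      · intro x hx; rw [z0 x hx, mul_zero]
      · intro x hx
        obtain ⟨a1, a2, a3, a4, a5⟩ := hC x hx
        rw [abs_mul, abs_mul, abs_of_nonneg (h.q0 x), abs_of_nonneg (h.g0 _ (h.u0 x))]
        have := h.q0 x; have := h.g0 _ (h.u0 x)
        exact mul_le_mul (mul_le_mul a2 a3 (h.g0 _ (h.u0 x)) hC0) (hB1 x) (abs_nonneg _) (by positivity)
    have i2 : Integrable fun x => b x * ‖fderiv ℝ u x‖ ^ α * φ x := by
      refine integrable_of_bdd_supp _ (m2.mul hφ.continuous.measurable).aestronglyMeasurable R (C * C * B1) ?_ ?_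
      · intro x hx; rw [z0 x hx, mul_zero]
      · intro x hx
        obtain ⟨a1, a2, a3, a4, a5⟩ := hC x hx
        have e4 : 0 ≤ ‖fderiv ℝ u x‖ ^ α := by positivity
        rw [abs_mul, abs_mul, abs_of_nonneg (h.b0 x), abs_of_nonneg e4]
        exact mul_le_mul (mul_le_mul a1 a4 e4 hC0) (hB1 x) (abs_nonneg _) (by positivity)
    have e1 : ∫ x, (q x * g (u x) - b x * ‖fderiv ℝ u x‖ ^ α) * φ x =
        (∫ x, q x * g (u x) * φ x) - ∫ x, b x * ‖fderiv ℝ u x‖ ^ α * φ x := by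
      rw [← integral_sub i1 i2]
      congr 1; ext x; ring
    have e2 : ∫ x, fderiv ℝ φ x (A x (gradient u x)) = ∫ x, ⟪A x (gradient u x), gradient φ x⟫ := by
      congr 1; ext x
      rw [real_inner_comm, inner_gradient_left]
    rw [e1, e2]
    simp only [norm_grad] at key
    linarith

/-- derivative of the basic test function -/
theorem fderiv_test (hp : 1 < p) (hu : ContDiff ℝ 1 u) {ψ : Euc n → ℝ} (hψ : ContDiff ℝ 1 ψ) (k : ℝ) (x : Euc n) :
    HasFDerivAt (fun x => ψ x ^ p * (max (u x - k) 0) ^ 2)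
      ((ψ x ^ p * (2 * max (u x - k) 0)) • fderiv ℝ u x +
        ((max (u x - k) 0) ^ 2 * (p * ψ x ^ (p - 1))) • fderiv ℝ ψ x) x := by
  have d1 : HasFDerivAt u (fderiv ℝ u x) x := (hu.differentiable one_ne_zero x).hasFDerivAt
  have d2 : HasFDerivAt ψ (fderiv ℝ ψ x) x := (hψ.differentiable one_ne_zero x).hasFDerivAt
  have d3 : HasFDerivAt (fun x => (max (u x - k) 0) ^ 2) ((2 * max (u x - k) 0) • fderiv ℝ u x) x := by
    have := (hasDerivAt_psq (u x - k)).comp_hasFDerivAt (f := fun x => u x - k) x (d1.sub_const k)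
    exact this
  have d4 : HasFDerivAt (fun x => ψ x ^ p) ((p * ψ x ^ (p - 1)) • fderiv ℝ ψ x) x :=
    d2.rpow_const (Or.inr hp.le)
  have := d4.mul d3
  rw [smul_smul, smul_smul] at this
  exact this

theorem contDiff_test (hp : 1 < p) (hu : ContDiff ℝ 1 u) {ψ : Euc n → ℝ} (hψ : ContDiff ℝ 1 ψ) (k : ℝ) :
    ContDiff ℝ 1 (fun x => ψ x ^ p * (max (u x - k) 0) ^ 2) := by
  refine ContDiff.mul ?_ ?_
  · exact ContDiff.rpow_const_of_le (m := 1) (by exact_mod_cast hψ) (by exact_mod_cast hp.le)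
  · exact contDiff_psq.comp (hu.sub contDiff_const)

theorem compact_test (hp : 1 < p) {ψ : Euc n → ℝ} (hc : HasCompactSupport ψ) (w : Euc n → ℝ) :
    HasCompactSupport (fun x => ψ x ^ p * w x) := by
  refine HasCompactSupport.mul_right (f := fun x => ψ x ^ p) ?_
  exact hc.comp_left (g := fun t : ℝ => t ^ p) (Real.zero_rpow (by linarith))

theorem cacc0 (h : Sol p C₁ C₂ α A b q g u) (ψ : Euc n → ℝ) (hψ : ContDiff ℝ 1 ψ)
    (hc : HasCompactSupport ψ) (h0 : ∀ x, 0 ≤ ψ x) (k : ℝ) (L : Euc n → ℝ) (hL : Integrable L)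
    (hle : ∀ᵐ x, L x ≤ (q x * g (u x) - b x * ‖fderiv ℝ u x‖ ^ α) * (ψ x ^ p * (max (u x - k) 0) ^ 2)
      + 2 * C₁ * (ψ x ^ p * max (u x - k) 0 * ‖fderiv ℝ u x‖ ^ p)
      - p * C₂ * (ψ x ^ (p - 1) * (max (u x - k) 0) ^ 2 * ‖fderiv ℝ ψ x‖ * ‖fderiv ℝ u x‖ ^ (p - 1))) :
    ∫ x, L x ≤ 0 := by
  have hp := h.hp
  obtain ⟨i1, i2, i3⟩ := h.test _ (contDiff_test hp h.uc hψ k) (compact_test hp hc _)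
    (fun x => mul_nonneg (Real.rpow_nonneg (h0 x) _) (sq_nonneg _))
  refine le_trans ?_ i3
  rw [← integral_add i1 i2]
  refine integral_mono_ae hL (i1.add i2) ?_
  filter_upwards [hle] with x hx
  refine hx.trans ?_
  rw [add_sub_assoc]
  gcongr
  rw [(fderiv_test hp h.uc hψ k x).fderiv]
  simp only [ContinuousLinearMap.add_apply, ContinuousLinearMap.smul_apply, smul_eq_mul]
  obtain ⟨a1, a2⟩ := h.hA.2 x (gradient u x)
  rw [norm_grad] at a1 a2
  rw [inner_gradient_left] at a1
  have hw : 0 ≤ max (u x - k) 0 := le_max_right _ _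
  have hψp : 0 ≤ ψ x ^ p := Real.rpow_nonneg (h0 x) _
  have hψp1 : 0 ≤ ψ x ^ (p - 1) := Real.rpow_nonneg (h0 x) _
  set V := A x (gradient u x)
  set w := max (u x - k) 0
  have c1 : -(‖fderiv ℝ ψ x‖ * (C₂ * ‖fderiv ℝ u x‖ ^ (p - 1))) ≤ fderiv ℝ ψ x V := by
    have := (ContinuousLinearMap.le_opNorm (fderiv ℝ ψ x) V)
    have h2 := neg_abs_le (fderiv ℝ ψ x V)
    rw [Real.norm_eq_abs] at this
    have h3 : ‖fderiv ℝ ψ x‖ * ‖V‖ ≤ ‖fderiv ℝ ψ x‖ * (C₂ * ‖fderiv ℝ u x‖ ^ (p - 1)) := by gcongr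
    linarith
  have k1 := mul_le_mul_of_nonneg_left a1 (by positivity : 0 ≤ ψ x ^ p * (2 * w))
  have k2 := mul_le_mul_of_nonneg_left c1 (by positivity : 0 ≤ w ^ 2 * (p * ψ x ^ (p - 1)))
  nlinarith [k1, k2]

end Sol


theorem young_ineq {p X Y ε : ℝ} (hp : 1 < p) (hX : 0 ≤ X) (hY : 0 ≤ Y) (hε : 0 < ε) :
    X ^ (p - 1) * Y ≤ ε * X ^ p + ε ^ (1 - p) * Y ^ p := by
  have e : ∀ t : ℝ, 0 ≤ t → t ^ p = t ^ (p - 1) * t := by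
    intro t ht
    rcases ht.eq_or_lt with h | h
    · rw [← h, Real.zero_rpow (by linarith)]; simp
    · rw [← Real.rpow_add_one h.ne']; ring_nf
  rcases le_or_gt Y (ε * X) with h | h
  · have h1 : X ^ (p - 1) * Y ≤ X ^ (p - 1) * (ε * X) := by gcongr
    have h2 : 0 ≤ ε ^ (1 - p) * Y ^ p := by positivity
    rw [e X hX]; linarith
  · have h1 : X ≤ Y / ε := by rw [le_div_iff₀ hε]; linarith
    have h2 : X ^ (p - 1) ≤ (Y / ε) ^ (p - 1) := Real.rpow_le_rpow hX h1 (by linarith)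
    rw [Real.div_rpow hY hε.le] at h2
    have h3 : X ^ (p - 1) * Y ≤ Y ^ (p - 1) / ε ^ (p - 1) * Y := by gcongr
    have h4 : ε ^ (1 - p) * Y ^ p = Y ^ (p - 1) / ε ^ (p - 1) * Y := by
      rw [e Y hY, show 1 - p = -(p - 1) by ring, Real.rpow_neg hε.le]
      field_simp
    have h5 : 0 ≤ ε * X ^ p := by positivity
    linarith

theorem integrable_cc {n : ℕ} {f ψ : Euc n → ℝ} (hf : Continuous f) (hc : HasCompactSupport ψ)
    (h : ∀ x, ψ x = 0 → f x = 0) : Integrable f := by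
  refine hf.integrable_of_hasCompactSupport ?_
  refine hc.mono (fun x hx hh => hx (h x hh))

theorem fderiv_zero_of_zero {n : ℕ} {ψ : Euc n → ℝ} (h0 : ∀ x, 0 ≤ ψ x) {x : Euc n} (hx : ψ x = 0) :
    fderiv ℝ ψ x = 0 := by
  refine IsLocalMin.fderiv_eq_zero ?_
  exact Filter.Eventually.of_forall (fun y => by rw [hx]; exact h0 y)

theorem integral_lin3 {n : ℕ} {f g h : Euc n → ℝ} (a c d : ℝ) (hf : Integrable f) (hg : Integrable g)
    (hh : Integrable h) : ∫ x, a * f x + c * g x - d * h x =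
      a * (∫ x, f x) + c * (∫ x, g x) - d * ∫ x, h x := by
  have h1 : Integrable fun x => a * f x + c * g x := (hf.const_mul a).add (hg.const_mul c)
  rw [integral_sub h1 (hh.const_mul d), integral_add (hf.const_mul a) (hg.const_mul c),
    integral_const_mul, integral_const_mul, integral_const_mul]

/-- Local hypotheses for the growth lemma. -/
structure Loc {n : ℕ} (C₁ α p : ℝ) (b q : Euc n → ℝ) (g : ℝ → ℝ) (u : Euc n → ℝ)
    (z : Euc n) (ρ S η a b' : ℝ) : Prop where
  ρ0 : 0 < ρ
  S0 : 0 < S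
  a0 : 0 < a
  b'0 : 0 ≤ b'
  bS : b' * S ≤ C₁ / 4
  up : ∀ x, ‖x - z‖ < ρ → u x ≤ η + 2 * S
  le : ∀ᵐ x, ‖x - z‖ < ρ → η < u x →
    b x * ‖fderiv ℝ u x‖ ^ α + a ≤ q x * g (u x) + b' * ‖fderiv ℝ u x‖ ^ p

/-- Constant in the Caccioppoli inequality. -/
def cac (p C₁ C₂ : ℝ) : ℝ := p * C₂ * (C₁ / (2 * p * C₂)) ^ (1 - p)

namespace Sol
variable {n : ℕ} {p C₁ C₂ α : ℝ} {A : Euc n → Euc n → Euc n} {b q : Euc n → ℝ} {g : ℝ → ℝ}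
    {u : Euc n → ℝ} {z : Euc n} {ρ S η a b' : ℝ}

theorem cacc (h : Sol p C₁ C₂ α A b q g u) (l : Loc C₁ α p b q g u z ρ S η a b')
    (ψ : Euc n → ℝ) (hψ : ContDiff ℝ 1 ψ) (h0 : ∀ x, 0 ≤ ψ x)
    (hs : ∀ x, ρ ≤ ‖x - z‖ → ψ x = 0) (k : ℝ) (hk : η ≤ k) :
    Integrable (fun x => ψ x ^ p * (max (u x - k) 0) ^ 2) ∧
    Integrable (fun x => ψ x ^ p * max (u x - k) 0 * ‖fderiv ℝ u x‖ ^ p) ∧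
    Integrable (fun x => max (u x - k) 0 * (max (u x - k) 0 * ‖fderiv ℝ ψ x‖) ^ p) ∧
    a * (∫ x, ψ x ^ p * (max (u x - k) 0) ^ 2) +
      C₁ * ∫ x, ψ x ^ p * max (u x - k) 0 * ‖fderiv ℝ u x‖ ^ p ≤
      cac p C₁ C₂ * ∫ x, max (u x - k) 0 * (max (u x - k) 0 * ‖fderiv ℝ ψ x‖) ^ p := by
  have hp := h.hp
  have hC₁ := h.hC₁
  have hC₂ := h.hC₂
  have hc : HasCompactSupport ψ := cutoff_compact hs
  have cψ : Continuous fun x => ψ x ^ p := hψ.continuous.rpow_const (fun x => Or.inr (by linarith))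
  have cX : Continuous fun x => ‖fderiv ℝ u x‖ ^ p := h.fd_cont.rpow_const (fun x => Or.inr (by linarith))
  have cw : Continuous fun x => max (u x - k) 0 := (h.uc.continuous.sub continuous_const).max continuous_const
  have cY : Continuous fun x => ‖fderiv ℝ ψ x‖ := (hψ.continuous_fderiv one_ne_zero).norm
  have cZ : Continuous fun x => (max (u x - k) 0 * ‖fderiv ℝ ψ x‖) ^ p :=
    (cw.mul cY).rpow_const (fun x => Or.inr (by linarith))
  have zp : (0 : ℝ) ^ p = 0 := Real.zero_rpow (by linarith)
  have zp1 : (0 : ℝ) ^ (p - 1) = 0 := Real.zero_rpow (by linarith)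
  have i1 : Integrable (fun x => ψ x ^ p * (max (u x - k) 0) ^ 2) :=
    integrable_cc (cψ.mul (cw.pow 2)) hc (fun x hx => by simp [hx, zp])
  have i2 : Integrable (fun x => ψ x ^ p * max (u x - k) 0 * ‖fderiv ℝ u x‖ ^ p) :=
    integrable_cc ((cψ.mul cw).mul cX) hc (fun x hx => by simp [hx, zp])
  have i3 : Integrable (fun x => max (u x - k) 0 * (max (u x - k) 0 * ‖fderiv ℝ ψ x‖) ^ p) :=
    integrable_cc (cw.mul cZ) hc (fun x hx => by simp [fderiv_zero_of_zero h0 hx, zp])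
  refine ⟨i1, i2, i3, ?_⟩
  have key := h.cacc0 ψ hψ hc h0 k
    (fun x => a * (ψ x ^ p * (max (u x - k) 0) ^ 2) +
      C₁ * (ψ x ^ p * max (u x - k) 0 * ‖fderiv ℝ u x‖ ^ p) -
      cac p C₁ C₂ * (max (u x - k) 0 * (max (u x - k) 0 * ‖fderiv ℝ ψ x‖) ^ p))
    (((i1.const_mul _).add (i2.const_mul _)).sub (i3.const_mul _)) ?_
  · rw [integral_lin3 _ _ _ i1 i2 i3] at key
    linarith
  filter_upwards [l.le] with x hx
  by_cases hψx : ψ x = 0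
  · simp [fderiv_zero_of_zero h0 hψx, hψx, zp, zp1]
  by_cases hw : u x ≤ k
  · have : max (u x - k) 0 = 0 := max_eq_right (by linarith)
    simp [this]
  push Not at hw
  have hb : ‖x - z‖ < ρ := by
    by_contra hh; push Not at hh; exact hψx (hs x hh)
  have hx1 := hx hb (by linarith)
  have hx2 := l.up x hb
  have ew : max (u x - k) 0 = u x - k := max_eq_left (by linarith)
  rw [ew]
  set w := u x - k with hwd
  have hw0 : 0 < w := by linarith
  set X := ‖fderiv ℝ u x‖
  set Y := ‖fderiv ℝ ψ x‖
  have hX : 0 ≤ X := norm_nonneg _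
  have hY : 0 ≤ Y := norm_nonneg _
  have hP := h0 x
  have hε : 0 < C₁ / (2 * p * C₂) := by positivity
  have yg := young_ineq hp (mul_nonneg hP hX) (mul_nonneg hw0.le hY) hε
  rw [Real.mul_rpow hP hX, Real.mul_rpow hP hX] at yg
  have yg2 := mul_le_mul_of_nonneg_left yg (by positivity : 0 ≤ p * C₂ * w)
  have hPp : 0 ≤ ψ x ^ p := by positivity
  have hXp : 0 ≤ X ^ p := by positivity
  have t1 := mul_le_mul_of_nonneg_left hx1 (by positivity : 0 ≤ ψ x ^ p * w ^ 2)
  have t2 : b' * w ≤ C₁ / 2 := by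
    have : b' * w ≤ b' * (2 * S) := mul_le_mul_of_nonneg_left (by linarith) l.b'0
    have := l.bS
    linarith
  have t3 := mul_le_mul_of_nonneg_left t2 (by positivity : 0 ≤ ψ x ^ p * w * X ^ p)
  have e1 : p * C₂ * w * (C₁ / (2 * p * C₂) * (ψ x ^ p * X ^ p)) = C₁ / 2 * (ψ x ^ p * w * X ^ p) := by
    field_simp
  have e2 : p * C₂ * w * ((C₁ / (2 * p * C₂)) ^ (1 - p) * (w * Y) ^ p) =
    cac p C₁ C₂ * (w * (w * Y) ^ p) := by unfold cac; ring
  rw [mul_add, e1, e2] at yg2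
  nlinarith [yg2, t1, t3]

end Sol


theorem int_le_cball {n : ℕ} {F G : Euc n → ℝ} (hF : Integrable F) (hG : Continuous G) {z : Euc n} {r c : ℝ}
    (h0 : ∀ x, r < ‖x - z‖ → F x = 0) (hle : ∀ x, ‖x - z‖ ≤ r → F x ≤ c * G x) :
    ∫ x, F x ≤ c * ∫ x in closedBall z r, G x := by
  have e : ∫ x, F x = ∫ x in closedBall z r, F x := by
    rw [setIntegral_eq_integral_of_forall_compl_eq_zero]
    intro x hx
    apply h0
    rw [mem_closedBall, dist_eq_norm] at hx
    linarith
  rw [e, ← integral_const_mul]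
  refine setIntegral_mono_on hF.integrableOn ?_ measurableSet_closedBall ?_
  · exact ((continuous_const.mul hG).continuousOn).integrableOn_compact (isCompact_closedBall _ _)
  · intro x hx
    apply hle
    rwa [mem_closedBall, dist_eq_norm] at hx

theorem cball_le_int {n : ℕ} {F G : Euc n → ℝ} (hF : Integrable F) (hG : Continuous G) {z : Euc n} {r c : ℝ}
    (h0 : ∀ x, 0 ≤ F x) (hle : ∀ x, ‖x - z‖ ≤ r → c * G x ≤ F x) :
    c * ∫ x in closedBall z r, G x ≤ ∫ x, F x := by
  have e : ∫ x in closedBall z r, F x ≤ ∫ x, F x :=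
    setIntegral_le_integral hF (Eventually.of_forall h0)
  refine le_trans ?_ e
  rw [← integral_const_mul]
  refine setIntegral_mono_on ?_ hF.integrableOn measurableSet_closedBall ?_
  · exact ((continuous_const.mul hG).continuousOn).integrableOn_compact (isCompact_closedBall _ _)
  · intro x hx
    apply hle
    rwa [mem_closedBall, dist_eq_norm] at hx

theorem scale_pt {p X s : ℝ} (hp : 1 < p) (hX : 0 ≤ X) (hs : 0 < s) :
    X ≤ s + s ^ (1 - p) * X ^ p := by
  rcases le_or_gt X s with h | h
  · have : 0 ≤ s ^ (1 - p) * X ^ p := by positivity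
    linarith
  · have hX0 : 0 < X := hs.trans h
    have h1 : X ^ (1 - p) ≤ s ^ (1 - p) := Real.rpow_le_rpow_of_nonpos hs h.le (by linarith)
    have h2 : X = X ^ (1 - p) * X ^ p := by
      rw [← Real.rpow_add hX0]; simp
    have h3 : X ^ (1 - p) * X ^ p ≤ s ^ (1 - p) * X ^ p := by gcongr
    linarith

theorem dg_grad (n : ℕ) (p C₁ C₂ : ℝ) (hp : 1 < p) (hC₁ : 0 < C₁) (hC₂ : 0 < C₂) :
    ∃ D > 0, ∀ {α : ℝ} {A : Euc n → Euc n → Euc n} {b q : Euc n → ℝ} {g : ℝ → ℝ} {u : Euc n → ℝ},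
      Sol p C₁ C₂ α A b q g u → ∀ {z : Euc n} {ρ S η a b' : ℝ}, Loc C₁ α p b q g u z ρ S η a b' →
      ∀ r' r k : ℝ, 0 < r' → r' < r → r ≤ ρ → η ≤ k →
      ∃ ψ : Euc n → ℝ, ContDiff ℝ 1 ψ ∧ HasCompactSupport ψ ∧ (∀ x, 0 ≤ ψ x) ∧ (∀ x, ‖x - z‖ ≤ r' → ψ x = 1) ∧
      ∫ x, ‖fderiv ℝ (fun x => ψ x ^ p * (max (u x - k) 0) ^ 2) x‖ ≤
        D * (S / ρ) * (ρ / (r - r')) ^ p * ∫ x in closedBall z r, max (u x - k) 0 := by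
  obtain ⟨K, hK, hcut⟩ := exists_cutoff n
  have hcac : 0 < cac p C₁ C₂ := by unfold cac; positivity
  refine ⟨2 + 2 * (cac p C₁ C₂ / C₁) * (2 * K) ^ p + 2 * p * K, by positivity, ?_⟩
  intro α A b q g u h z ρ S η a b' l r' r k hr' hr hrρ hk
  obtain ⟨ψ, hψ, h0, h1, hone, hz, hD⟩ := hcut z r' r hr' hr
  have hc : HasCompactSupport ψ := cutoff_compact hz
  refine ⟨ψ, hψ, hc, h0, hone, ?_⟩
  have hρ := l.ρ0
  have hS := l.S0
  set N := ρ / (r - r') with hN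
  have hd : 0 < r - r' := by linarith
  have hN1 : 1 ≤ N := by rw [hN, le_div_iff₀ hd]; linarith
  have eKN : K / (r - r') = K * N / ρ := by rw [hN]; field_simp
  obtain ⟨i1, i2, i3, hcc⟩ := h.cacc l ψ hψ h0 (fun x hx => hz x (hrρ.trans hx)) k hk
  have cw : Continuous fun x => max (u x - k) 0 := (h.uc.continuous.sub continuous_const).max continuous_const
  set T := ∫ x in closedBall z r, max (u x - k) 0 with hT
  have hT0 : 0 ≤ T := by
    rw [hT]; exact setIntegral_nonneg measurableSet_closedBall (fun x _ => le_max_right _ _)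
  have zp : (0 : ℝ) ^ p = 0 := Real.zero_rpow (by linarith)
  have zp1 : (0 : ℝ) ^ (p - 1) = 0 := Real.zero_rpow (by linarith)
  have cψ : Continuous fun x => ψ x ^ p := hψ.continuous.rpow_const (fun x => Or.inr (by linarith))
  have cψ1 : Continuous fun x => ψ x ^ (p - 1) := hψ.continuous.rpow_const (fun x => Or.inr (by linarith))
  have cY : Continuous fun x => ‖fderiv ℝ ψ x‖ := (hψ.continuous_fderiv one_ne_zero).norm
  have wle : ∀ x, ‖x - z‖ ≤ r → ψ x = 0 ∨ max (u x - k) 0 ≤ 2 * S := by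
    intro x hx
    rcases hx.eq_or_lt with hx | hx
    · exact Or.inl (hz x hx.ge)
    · right
      have := l.up x (hx.trans_le hrρ)
      exact max_le (by linarith) (by positivity)
  -- first: energy
  have E1 : ∫ x, max (u x - k) 0 * (max (u x - k) 0 * ‖fderiv ℝ ψ x‖) ^ p ≤ (2 * S * (K * N / ρ)) ^ p * T := by
    refine int_le_cball i3 cw ?_ ?_
    · intro x hx; simp [fderiv_zero_of_zero h0 (hz x hx.le), zp]
    · intro x hx
      rcases wle x hx with h' | h'
      · simp only [fderiv_zero_of_zero h0 h', norm_zero, mul_zero, zp]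
        have : 0 ≤ max (u x - k) 0 := le_max_right _ _
        positivity
      · have h2 := hD x
        rw [eKN] at h2
        have : 0 ≤ max (u x - k) 0 := le_max_right _ _
        rw [mul_comm]
        gcongr
  have E2 : C₁ * ∫ x, ψ x ^ p * max (u x - k) 0 * ‖fderiv ℝ u x‖ ^ p ≤ cac p C₁ C₂ * ((2 * S * (K * N / ρ)) ^ p * T) := by
    have : 0 ≤ a * (∫ x, ψ x ^ p * (max (u x - k) 0) ^ 2) :=
      mul_nonneg l.a0.le (integral_nonneg (fun x => mul_nonneg (Real.rpow_nonneg (h0 x) _) (sq_nonneg _)))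
    have := mul_le_mul_of_nonneg_left E1 hcac.le
    linarith
  have i4 : Integrable fun x => ψ x ^ p * max (u x - k) 0 :=
    integrable_cc (cψ.mul cw) hc (fun x hx => by simp [hx, zp])
  have i5 : Integrable fun x => max (u x - k) 0 ^ 2 * ψ x ^ (p - 1) * ‖fderiv ℝ ψ x‖ :=
    integrable_cc (((cw.pow 2).mul cψ1).mul cY) hc (fun x hx => by simp [hx, zp1])
  have E3 : ∫ x, ψ x ^ p * max (u x - k) 0 ≤ 1 * T := by
    refine int_le_cball i4 cw ?_ ?_
    · intro x hx; simp [hz x hx.le, zp]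
    · intro x hx
      have : 0 ≤ max (u x - k) 0 := le_max_right _ _
      have h2 : ψ x ^ p ≤ 1 := Real.rpow_le_one (h0 x) (h1 x) (by linarith)
      gcongr
  have E4 : ∫ x, max (u x - k) 0 ^ 2 * ψ x ^ (p - 1) * ‖fderiv ℝ ψ x‖ ≤ (2 * S * (K * N / ρ)) * T := by
    refine int_le_cball i5 cw ?_ ?_
    · intro x hx; simp [hz x hx.le, zp1]
    · intro x hx
      have h3 : 0 ≤ max (u x - k) 0 := le_max_right _ _
      rcases wle x hx with h' | h'
      · simp only [h', zp1, mul_zero, zero_mul]; positivity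
      · have h2 := hD x
        rw [eKN] at h2
        have h4 : ψ x ^ (p - 1) ≤ 1 := Real.rpow_le_one (h0 x) (h1 x) (by linarith)
        have h5 := h0 x
        calc max (u x - k) 0 ^ 2 * ψ x ^ (p - 1) * ‖fderiv ℝ ψ x‖
            ≤ (max (u x - k) 0 * (2 * S)) * 1 * (K * N / ρ) := by
              rw [pow_two]; gcongr
          _ = _ := by ring
  have s0 : 0 < S / ρ := by positivity
  have E5 : ∫ x, ‖fderiv ℝ (fun x => ψ x ^ p * (max (u x - k) 0) ^ 2) x‖ ≤
      ∫ x, (2 * (S / ρ)) * (ψ x ^ p * max (u x - k) 0) +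
        (2 * (S / ρ) ^ (1 - p)) * (ψ x ^ p * max (u x - k) 0 * ‖fderiv ℝ u x‖ ^ p) -
        (-p) * (max (u x - k) 0 ^ 2 * ψ x ^ (p - 1) * ‖fderiv ℝ ψ x‖) := by
    have cd := Sol.contDiff_test hp h.uc hψ k
    have hcs : HasCompactSupport (fun x => ψ x ^ p * (max (u x - k) 0) ^ 2) := Sol.compact_test hp hc _
    refine integral_mono ?_ (((i4.const_mul _).add (i2.const_mul _)).sub (i5.const_mul _)) ?_
    · exact ((cd.continuous_fderiv one_ne_zero).norm).integrable_of_hasCompactSupport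
        (hcs.fderiv (𝕜 := ℝ)).norm
    · intro x
      simp only
      rw [(Sol.fderiv_test hp h.uc hψ k x).fderiv]
      have h3 : 0 ≤ max (u x - k) 0 := le_max_right _ _
      have h5 := h0 x
      have h6 : 0 ≤ ψ x ^ p := by positivity
      have h7 : 0 ≤ ψ x ^ (p - 1) := by positivity
      refine (norm_add_le _ _).trans ?_
      rw [norm_smul, norm_smul, Real.norm_of_nonneg (by positivity), Real.norm_of_nonneg (by positivity)]
      have := mul_le_mul_of_nonneg_left (scale_pt hp (norm_nonneg (fderiv ℝ u x)) s0)
        (by positivity : 0 ≤ 2 * (ψ x ^ p * max (u x - k) 0))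
      nlinarith [this]
  refine E5.trans ?_
  rw [integral_lin3 _ _ _ i4 i2 i5]
  have hNp : 1 ≤ N ^ p := Real.one_le_rpow hN1 (by linarith)
  have hNp' : N ≤ N ^ p := by
    conv_lhs => rw [← Real.rpow_one N]
    exact Real.rpow_le_rpow_of_exponent_le hN1 hp.le
  have E6 : ∫ x, ψ x ^ p * max (u x - k) 0 * ‖fderiv ℝ u x‖ ^ p ≤
      (cac p C₁ C₂ / C₁) * (2 * K) ^ p * N ^ p * (S / ρ) ^ p * T := by
    have : (2 * S * (K * N / ρ)) ^ p = (2 * K) ^ p * N ^ p * (S / ρ) ^ p := by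
      rw [← Real.mul_rpow (by positivity) (by positivity), ← Real.mul_rpow (by positivity) (by positivity)]
      congr 1; ring
    rw [this] at E2
    rw [show (cac p C₁ C₂ / C₁) * (2 * K) ^ p * N ^ p * (S / ρ) ^ p * T =
      (cac p C₁ C₂ * ((2 * K) ^ p * N ^ p * (S / ρ) ^ p * T)) / C₁ by ring, le_div_iff₀ hC₁]
    linarith
  have es : (S / ρ) ^ (1 - p) * (S / ρ) ^ p = S / ρ := by
    rw [← Real.rpow_add s0]; simp
  have F1 : (2 * (S / ρ)) * ∫ x, ψ x ^ p * max (u x - k) 0 ≤ (2 * (S / ρ)) * (N ^ p * T) := by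
    have : T ≤ N ^ p * T := by nlinarith
    gcongr; linarith
  have F2 : 2 * (S / ρ) ^ (1 - p) * ∫ x, ψ x ^ p * max (u x - k) 0 * ‖fderiv ℝ u x‖ ^ p ≤
      2 * (cac p C₁ C₂ / C₁) * (2 * K) ^ p * N ^ p * T * (S / ρ) := by
    calc _ ≤ 2 * (S / ρ) ^ (1 - p) * ((cac p C₁ C₂ / C₁) * (2 * K) ^ p * N ^ p * (S / ρ) ^ p * T) := by gcongr
      _ = 2 * (cac p C₁ C₂ / C₁) * (2 * K) ^ p * N ^ p * T * ((S / ρ) ^ (1 - p) * (S / ρ) ^ p) := by ring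
      _ = _ := by rw [es]
  have F3 : p * ∫ x, max (u x - k) 0 ^ 2 * ψ x ^ (p - 1) * ‖fderiv ℝ ψ x‖ ≤ p * ((2 * S * (K * N ^ p / ρ)) * T) := by
    have : (2 * S * (K * N / ρ)) * T ≤ (2 * S * (K * N ^ p / ρ)) * T := by gcongr
    gcongr; linarith
  have e3 : p * ((2 * S * (K * N ^ p / ρ)) * T) = 2 * p * K * (S / ρ) * N ^ p * T := by ring
  rw [e3] at F3
  linarith


theorem dg_iter {X : ℕ → ℝ} {D B β x0 : ℝ} (hD : 0 < D) (hB : 1 < B) (hβ : 0 < β) (hX : ∀ j, 0 ≤ X j)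
    (h : ∀ j, X (j + 1) ≤ D * B ^ j * X j ^ (1 + β)) (hx : 0 < x0) (hX0 : X 0 ≤ x0)
    (hx0 : D * x0 ^ β ≤ B ^ (-(1 / β))) : ∀ j, X j ≤ x0 * (B ^ (-(1 / β))) ^ j := by
  set μ := B ^ (-(1 / β)) with hμ
  have hB0 : 0 < B := by linarith
  have hμ0 : 0 < μ := by positivity
  have e : μ ^ β = B⁻¹ := by
    rw [hμ, ← Real.rpow_mul hB0.le]
    rw [show -(1 / β) * β = -1 by field_simp, Real.rpow_neg_one]
  intro j
  induction j with
  | zero => simpa using hX0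
  | succ j ih =>
    have h1 : X j ^ (1 + β) ≤ (x0 * μ ^ j) ^ (1 + β) := Real.rpow_le_rpow (hX j) ih (by positivity)
    have h2 : (x0 * μ ^ j) ^ (1 + β) = x0 * μ ^ j * (x0 ^ β * (B⁻¹) ^ j) := by
      rw [Real.rpow_add (by positivity), Real.rpow_one, Real.mul_rpow hx.le (by positivity), ← e]
      rw [← Real.rpow_natCast, ← Real.rpow_mul hμ0.le, ← Real.rpow_natCast, ← Real.rpow_mul hμ0.le]
      ring_nf
    calc X (j + 1) ≤ D * B ^ j * X j ^ (1 + β) := h j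
      _ ≤ D * B ^ j * (x0 * μ ^ j * (x0 ^ β * (B⁻¹) ^ j)) := by rw [← h2]; gcongr
      _ = (D * x0 ^ β) * (x0 * μ ^ j) * (B * B⁻¹) ^ j := by rw [mul_pow]; ring
      _ = (D * x0 ^ β) * (x0 * μ ^ j) := by rw [mul_inv_cancel₀ hB0.ne']; simp
      _ ≤ μ * (x0 * μ ^ j) := by gcongr
      _ = _ := by ring

theorem dg_step (n : ℕ) (hn : 2 ≤ n) (p C₁ C₂ : ℝ) (hp : 1 < p) (hC₁ : 0 < C₁) (hC₂ : 0 < C₂) :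
    ∃ D > 0, ∀ {α : ℝ} {A : Euc n → Euc n → Euc n} {b q : Euc n → ℝ} {g : ℝ → ℝ} {u : Euc n → ℝ},
      Sol p C₁ C₂ α A b q g u → ∀ {z : Euc n} {ρ S η a b' : ℝ}, Loc C₁ α p b q g u z ρ S η a b' →
      ∀ r' r k k' N : ℝ, 0 < r' → r' < r → r ≤ ρ → η ≤ k → N = ρ / (r - r') → k' - k = S / N →
      (∫ x in closedBall z r', max (u x - k') 0) / (S * ρ ^ (n : ℝ)) ≤
        D * N ^ (p * ((n : ℝ) / (n - 1)) + (2 * ((n : ℝ) / (n - 1)) - 1)) *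
        ((∫ x in closedBall z r, max (u x - k) 0) / (S * ρ ^ (n : ℝ))) ^ ((n : ℝ) / (n - 1)) := by
  obtain ⟨Cs, hCs, hsob⟩ := sobolev_real n hn
  obtain ⟨D, hD, hgrad⟩ := dg_grad n p C₁ C₂ hp hC₁ hC₂
  have hn1 : (0 : ℝ) < n - 1 := by
    have : (2 : ℝ) ≤ n := by exact_mod_cast hn
    linarith
  set κ := (n : ℝ) / (n - 1) with hκ
  have hκ1 : 1 < κ := by rw [hκ, lt_div_iff₀ hn1]; linarith
  refine ⟨Cs * D ^ κ, by positivity, ?_⟩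
  intro α A b q g u h z ρ S η a b' l r' r k k' N hr' hr hrρ hk hN hkk
  obtain ⟨ψ, hψ, hc, h0, hone, hg⟩ := hgrad h l r' r k hr' hr hrρ hk
  rw [← hN] at hg
  have hρ := l.ρ0
  have hS := l.S0
  have hd : 0 < r - r' := by linarith
  have hN0 : 0 < N := by rw [hN]; positivity
  have hd0 : 0 < S / N := by positivity
  have cd := Sol.contDiff_test hp h.uc hψ k
  have hcs : HasCompactSupport (fun x => ψ x ^ p * (max (u x - k) 0) ^ 2) := Sol.compact_test hp hc _
  have hs := hsob _ cd hcs
  have cw : ∀ k, Continuous fun x => max (u x - k) 0 := fun k => (h.uc.continuous.sub continuous_const).max continuous_const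
  set T := ∫ x in closedBall z r, max (u x - k) 0 with hT
  have hT0 : 0 ≤ T := by
    rw [hT]; exact setIntegral_nonneg measurableSet_closedBall (fun x _ => le_max_right _ _)
  have lower : (S / N) ^ (2 * κ - 1) * ∫ x in closedBall z r', max (u x - k') 0 ≤
      ∫ x, |ψ x ^ p * (max (u x - k) 0) ^ 2| ^ κ := by
    refine cball_le_int ?_ (cw k') (fun x => by positivity) ?_
    · refine integrable_cc (cd.continuous.abs.rpow_const (fun x => Or.inr (by linarith))) hcs ?_
      intro x hx
      rw [hx, abs_zero, Real.zero_rpow (by linarith)]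
    · intro x hx
      rw [hone x hx, Real.one_rpow, one_mul, abs_of_nonneg (sq_nonneg _)]
      rcases le_or_gt (u x) k' with h' | h'
      · rw [max_eq_right (by linarith), mul_zero]; positivity
      · rw [max_eq_left (by linarith), max_eq_left (by linarith)]
        have hv : S / N ≤ u x - k := by linarith
        have hv0 : 0 < u x - k := by linarith
        have e : ((u x - k) ^ 2) ^ κ = (u x - k) ^ (2 * κ - 1) * (u x - k) := by
          rw [← Real.rpow_natCast, ← Real.rpow_mul hv0.le, ← Real.rpow_add_one hv0.ne']
          congr 1; push_cast; ring
        rw [e]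
        have : (S / N) ^ (2 * κ - 1) ≤ (u x - k) ^ (2 * κ - 1) :=
          Real.rpow_le_rpow hd0.le hv (by linarith)
        have h3 : u x - k' ≤ u x - k := by linarith
        have h4 : 0 ≤ u x - k' := by linarith
        gcongr
  have up : (∫ x, ‖fderiv ℝ (fun x => ψ x ^ p * (max (u x - k) 0) ^ 2) x‖) ^ κ ≤
      (D * (S / ρ) * N ^ p * T) ^ κ :=
    Real.rpow_le_rpow (integral_nonneg (fun x => norm_nonneg _)) hg (by linarith)
  have tot := (lower.trans hs).trans (mul_le_mul_of_nonneg_left up hCs.le)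
  set T' := ∫ x in closedBall z r', max (u x - k') 0
  have hP : 0 < ρ ^ (n : ℝ) := by positivity
  obtain ⟨X, hX⟩ : ∃ X, X = T / (S * ρ ^ (n : ℝ)) := ⟨_, rfl⟩
  obtain ⟨X', hX'⟩ : ∃ X, X = T' / (S * ρ ^ (n : ℝ)) := ⟨_, rfl⟩
  have hX0 : 0 ≤ X := by rw [hX]; positivity
  rw [← hX, ← hX']
  have eT : T = X * (S * ρ ^ (n : ℝ)) := by rw [hX]; field_simp
  have eT' : T' = X' * (S * ρ ^ (n : ℝ)) := by rw [hX']; field_simp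
  rw [eT, eT'] at tot
  have e1 : (D * (S / ρ) * N ^ p * (X * (S * ρ ^ (n : ℝ)))) ^ κ =
      D ^ κ * (N ^ (p * κ) * X ^ κ) * (S ^ (2 * κ) * ρ ^ (n : ℝ)) := by
    have : D * (S / ρ) * N ^ p * (X * (S * ρ ^ (n : ℝ))) =
      D * (N ^ p * X) * (S ^ (2 : ℝ) * ρ ^ ((n : ℝ) - 1)) := by
      rw [Real.rpow_sub_one hρ.ne', Real.rpow_two]; field_simp
    rw [this, Real.mul_rpow (by positivity) (by positivity), Real.mul_rpow (by positivity) (by positivity),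
      Real.mul_rpow (by positivity) (by positivity), Real.mul_rpow (by positivity) (by positivity),
      ← Real.rpow_mul hN0.le, ← Real.rpow_mul hS.le, ← Real.rpow_mul hρ.le]
    rw [show ((n : ℝ) - 1) * κ = n by rw [hκ]; field_simp]
  have e2 : (S / N) ^ (2 * κ - 1) * (X' * (S * ρ ^ (n : ℝ))) =
      X' / N ^ (2 * κ - 1) * (S ^ (2 * κ) * ρ ^ (n : ℝ)) := by
    rw [Real.div_rpow hS.le hN0.le, Real.rpow_sub_one hS.ne']
    field_simp
  rw [e1, e2, ← mul_assoc Cs] at tot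
  have tot2 := le_of_mul_le_mul_right tot (by positivity)
  rw [div_le_iff₀ (by positivity)] at tot2
  rw [Real.rpow_add hN0]
  linarith


theorem dg_start (n : ℕ) (hn : 2 ≤ n) (p C₁ C₂ : ℝ) (hp : 1 < p) (hC₁ : 0 < C₁) (hC₂ : 0 < C₂) :
    ∃ D > 0, ∀ {α : ℝ} {A : Euc n → Euc n → Euc n} {b q : Euc n → ℝ} {g : ℝ → ℝ} {u : Euc n → ℝ},
      Sol p C₁ C₂ α A b q g u → ∀ {z : Euc n} {ρ S η a b' : ℝ}, Loc C₁ α p b q g u z ρ S η a b' →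
      (∫ x in closedBall z (ρ / 2), max (u x - (η + S / 2)) 0) / (S * ρ ^ (n : ℝ)) ≤
        D * (S ^ (p - 1) / (a * ρ ^ p)) := by
  obtain ⟨K, hK, hcut⟩ := exists_cutoff n
  have hcac : 0 < cac p C₁ C₂ := by unfold cac; positivity
  have : Nonempty (Fin n) := ⟨⟨0, by omega⟩⟩
  set V := (volume (ball (0 : Euc n) 1)).toReal with hV
  have hV0 : 0 < V := ENNReal.toReal_pos (measure_ball_pos _ _ one_pos).ne' measure_ball_lt_top.ne
  refine ⟨2 * (cac p C₁ C₂ * 2 ^ (p + 1) * (4 * K) ^ p * V), by positivity, ?_⟩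
  intro α A b q g u h z ρ S η a b' l
  have hρ := l.ρ0
  have hS := l.S0
  have ha := l.a0
  obtain ⟨ψ, hψ, h0, h1, hone, hz, hD⟩ := hcut z (ρ / 2) (3 * ρ / 4) (by positivity) (by linarith)
  obtain ⟨i1, i2, i3, hcc⟩ := h.cacc l ψ hψ h0 (fun x hx => hz x (by linarith)) η le_rfl
  have cw : ∀ k, Continuous fun x => max (u x - k) 0 := fun k => (h.uc.continuous.sub continuous_const).max continuous_const
  have zp : (0 : ℝ) ^ p = 0 := Real.zero_rpow (by linarith)
  have A1 : (S / 2) * ∫ x in closedBall z (ρ / 2), max (u x - (η + S / 2)) 0 ≤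
      ∫ x, ψ x ^ p * (max (u x - η) 0) ^ 2 := by
    refine cball_le_int i1 (cw _) (fun x => mul_nonneg (Real.rpow_nonneg (h0 x) _) (sq_nonneg _)) ?_
    intro x hx
    rw [hone x hx, Real.one_rpow, one_mul]
    rcases le_or_gt (u x) (η + S / 2) with h' | h'
    · rw [max_eq_right (by linarith), mul_zero]; positivity
    · rw [max_eq_left (by linarith), max_eq_left (by linarith)]
      nlinarith
  have A2 : 0 ≤ C₁ * ∫ x, ψ x ^ p * max (u x - η) 0 * ‖fderiv ℝ u x‖ ^ p := by
    refine mul_nonneg hC₁.le (integral_nonneg (fun x => ?_))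
    have := h0 x
    have : 0 ≤ max (u x - η) 0 := le_max_right _ _
    positivity
  have A3 : ∫ x, max (u x - η) 0 * (max (u x - η) 0 * ‖fderiv ℝ ψ x‖) ^ p ≤
      (2 * S * (2 * S * (4 * K / ρ)) ^ p) * ∫ x in closedBall z (3 * ρ / 4), (1 : ℝ) := by
    refine int_le_cball i3 continuous_const ?_ ?_
    · intro x hx; simp [fderiv_zero_of_zero h0 (hz x hx.le), zp]
    · intro x hx
      have hw : max (u x - η) 0 ≤ 2 * S := by
        have := l.up x (by linarith)
        exact max_le (by linarith) (by positivity)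
      have h2 := hD x
      rw [show K / (3 * ρ / 4 - ρ / 2) = 4 * K / ρ by field_simp; ring] at h2
      have : 0 ≤ max (u x - η) 0 := le_max_right _ _
      rw [mul_one]
      gcongr
  have A4 : ∫ x in closedBall z (3 * ρ / 4), (1 : ℝ) ≤ ρ ^ (n : ℝ) * V := by
    rw [setIntegral_const, smul_eq_mul, mul_one, Measure.real]
    have : volume (closedBall z (3 * ρ / 4)) ≤ volume (ball z ρ) :=
      measure_mono (closedBall_subset_ball (by linarith))
    refine (ENNReal.toReal_mono measure_ball_lt_top.ne this).trans ?_
    rw [Measure.addHaar_ball volume z hρ.le, ENNReal.toReal_mul, ENNReal.toReal_ofReal (by positivity),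
      Real.rpow_natCast]
    simp [hV]
  set T := ∫ x in closedBall z (ρ / 2), max (u x - (η + S / 2)) 0
  have hP : 0 < ρ ^ (n : ℝ) := by positivity
  have A5 : a * ((S / 2) * T) ≤ cac p C₁ C₂ * ((2 * S * (2 * S * (4 * K / ρ)) ^ p) * (ρ ^ (n : ℝ) * V)) := by
    have := mul_le_mul_of_nonneg_left A1 ha.le
    have h3 : (2 * S * (2 * S * (4 * K / ρ)) ^ p) * ∫ x in closedBall z (3 * ρ / 4), (1 : ℝ) ≤
      (2 * S * (2 * S * (4 * K / ρ)) ^ p) * (ρ ^ (n : ℝ) * V) := by gcongr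
    have h4 := mul_le_mul_of_nonneg_left (A3.trans h3) hcac.le
    linarith
  rw [div_le_iff₀ (by positivity)]
  have e1 : (2 * S * (4 * K / ρ)) ^ p = 2 ^ p * S ^ p * ((4 * K) ^ p / ρ ^ p) := by
    rw [Real.mul_rpow (by positivity) (by positivity), Real.mul_rpow (by positivity) (by positivity),
      Real.div_rpow (by positivity) (by positivity)]
  rw [e1] at A5
  have e2 : (2 : ℝ) ^ (p + 1) = 2 ^ p * 2 := Real.rpow_add_one two_ne_zero p
  have e3 : S ^ (p - 1) = S ^ p / S := Real.rpow_sub_one hS.ne' p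
  have : T = a * ((S / 2) * T) * (2 / (a * S)) := by field_simp
  rw [this]
  refine (mul_le_mul_of_nonneg_right A5 (by positivity)).trans (le_of_eq ?_)
  rw [e2, e3]
  field_simp

theorem growth (n : ℕ) (hn : 2 ≤ n) (p C₁ C₂ : ℝ) (hp : 1 < p) (hC₁ : 0 < C₁) (hC₂ : 0 < C₂) :
    ∃ c > 0, ∀ {α : ℝ} {A : Euc n → Euc n → Euc n} {b q : Euc n → ℝ} {g : ℝ → ℝ} {u : Euc n → ℝ},
      Sol p C₁ C₂ α A b q g u → ∀ {z : Euc n} {ρ S η a b' : ℝ}, Loc C₁ α p b q g u z ρ S η a b' →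
      η + S ≤ u z → c * (a * ρ ^ p) ≤ S ^ (p - 1) := by
  obtain ⟨D, hD, hstep⟩ := dg_step n hn p C₁ C₂ hp hC₁ hC₂
  obtain ⟨D0, hD0, hstart⟩ := dg_start n hn p C₁ C₂ hp hC₁ hC₂
  have hn1 : (0 : ℝ) < n - 1 := by
    have : (2 : ℝ) ≤ n := by exact_mod_cast hn
    linarith
  set κ := (n : ℝ) / (n - 1) with hκ
  have hκ1 : 1 < κ := by rw [hκ, lt_div_iff₀ hn1]; linarith
  set s := p * κ + (2 * κ - 1) with hs
  have hs0 : 0 < s := by have : 0 < p * κ := by positivity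
                         linarith
  set B := (2 : ℝ) ^ s with hB
  have hB1 : 1 < B := Real.one_lt_rpow one_lt_two hs0
  set β := κ - 1 with hβd
  have hβ : 0 < β := by linarith
  set D' := D * 8 ^ s with hD'
  have hD'0 : 0 < D' := by positivity
  set x0 := (B ^ (-(1 / β)) / D') ^ (1 / β) with hx0
  have hx00 : 0 < x0 := by positivity
  have hx0e : D' * x0 ^ β ≤ B ^ (-(1 / β)) := by
    rw [hx0, ← Real.rpow_mul (by positivity), show 1 / β * β = 1 by field_simp, Real.rpow_one]
    apply le_of_eq; field_simp
  refine ⟨x0 / D0, by positivity, ?_⟩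
  intro α A b q g u h z ρ S η a b' l hz
  have hρ := l.ρ0
  have hS := l.S0
  have ha := l.a0
  by_contra hcon
  push Not at hcon
  let X : ℕ → ℝ := fun j => (∫ x in closedBall z (ρ / 4 * (1 + (1 / 2) ^ j)),
    max (u x - (η + S * (3 / 4 - (1 / 2) ^ j / 4))) 0) / (S * ρ ^ (n : ℝ))
  have hX : ∀ j, 0 ≤ X j := fun j =>
    div_nonneg (setIntegral_nonneg measurableSet_closedBall (fun x _ => le_max_right _ _)) (by positivity)
  have hX0 : X 0 ≤ x0 := by
    have := hstart h l
    have e1 : ρ / 4 * (1 + (1 / 2) ^ 0) = ρ / 2 := by norm_num; ring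
    have e2 : η + S * (3 / 4 - (1 / 2) ^ 0 / 4) = η + S / 2 := by norm_num; ring
    simp only [X, e1, e2]
    refine this.trans ?_
    rw [show D0 * (S ^ (p - 1) / (a * ρ ^ p)) = D0 * S ^ (p - 1) / (a * ρ ^ p) by ring, div_le_iff₀ (by positivity)]
    rw [div_mul_eq_mul_div, lt_div_iff₀ hD0] at hcon
    linarith
  have hXs : ∀ j, X (j + 1) ≤ D' * B ^ j * X j ^ (1 + β) := by
    intro j
    have hh : (0 : ℝ) < (1 / 2) ^ j := by positivity
    have hh1 : ((1 : ℝ) / 2) ^ j ≤ 1 := pow_le_one₀ (by norm_num) (by norm_num)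
    have := hstep h l (ρ / 4 * (1 + (1 / 2) ^ (j + 1))) (ρ / 4 * (1 + (1 / 2) ^ j))
      (η + S * (3 / 4 - (1 / 2) ^ j / 4)) (η + S * (3 / 4 - (1 / 2) ^ (j + 1) / 4)) (8 * 2 ^ j)
      (by positivity) (by rw [pow_succ]; nlinarith) (by nlinarith) (by nlinarith) ?_ ?_
    · have e : D * (8 * 2 ^ j) ^ s = D' * B ^ j := by
        rw [hD', hB, Real.mul_rpow (by norm_num) (by positivity), ← Real.rpow_natCast, ← Real.rpow_natCast,
          ← Real.rpow_mul (by norm_num), ← Real.rpow_mul (by norm_num), mul_comm (j : ℝ) s]; ring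
      rw [e] at this
      rw [show 1 + β = κ by rw [hβd]; ring]
      exact this
    · have e : ((1 : ℝ) / 2) ^ j = 1 / 2 ^ j := by rw [div_pow, one_pow]
      rw [pow_succ, e]
      field_simp; ring
    · have e : ((1 : ℝ) / 2) ^ j = 1 / 2 ^ j := by rw [div_pow, one_pow]
      rw [pow_succ, e]
      field_simp; ring
  have hlim := dg_iter hD'0 hB1 hβ hX hXs hx00 hX0 hx0e
  set μ := B ^ (-(1 / β)) with hμ
  have hμ0 : 0 < μ := by positivity
  have hμ1 : μ < 1 := Real.rpow_lt_one_of_one_lt_of_neg hB1 (neg_neg_of_pos (by positivity))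
  have cw : ∀ k, Continuous fun x => max (u x - k) 0 := fun k => (h.uc.continuous.sub continuous_const).max continuous_const
  have ion : ∀ k r, IntegrableOn (fun x => max (u x - k) 0) (closedBall z r) := fun k r =>
    (cw k).continuousOn.integrableOn_compact (isCompact_closedBall _ _)
  set Y := (∫ x in closedBall z (ρ / 4), max (u x - (η + S * (3 / 4))) 0) / (S * ρ ^ (n : ℝ)) with hY
  have hYX : ∀ j, Y ≤ X j := by
    intro j
    have hh : (0 : ℝ) < (1 / 2) ^ j := by positivity
    simp only [hY, X]
    gcongr
    refine (setIntegral_mono_on (ion _ _) (ion _ _) measurableSet_closedBall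
      (g := fun x => max (u x - (η + S * (3 / 4 - (1 / 2) ^ j / 4))) 0) ?_).trans ?_
    · intro x _
      apply max_le_max _ le_rfl
      nlinarith
    · refine setIntegral_mono_set (ion _ _) (Eventually.of_forall (fun x => le_max_right _ _)) ?_
      refine (closedBall_subset_closedBall ?_).eventuallyLE
      nlinarith
  have hY0 : Y ≤ 0 := by
    have t : Tendsto (fun j : ℕ => x0 * μ ^ j) atTop (nhds (x0 * 0)) :=
      (tendsto_pow_atTop_nhds_zero_of_lt_one hμ0.le hμ1).const_mul x0
    rw [mul_zero] at t
    exact ge_of_tendsto' t (fun j => (hYX j).trans (hlim j))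
  have hpos : 0 < ∫ x in closedBall z (ρ / 4), max (u x - (η + S * (3 / 4))) 0 := by
    rw [setIntegral_pos_iff_support_of_nonneg_ae (f := fun x => max (u x - (η + S * (3 / 4))) 0) (Eventually.of_forall (fun x => le_max_right _ _)) (ion _ _)]
    have ho : IsOpen ({x | η + S * (3 / 4) < u x} ∩ ball z (ρ / 4)) :=
      (isOpen_lt continuous_const h.uc.continuous).inter isOpen_ball
    have hne : ({x | η + S * (3 / 4) < u x} ∩ ball z (ρ / 4)).Nonempty :=
      ⟨z, by show _ < u z; linarith, mem_ball_self (by positivity)⟩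
    refine (ho.measure_pos volume hne).trans_le (measure_mono ?_)
    rintro x ⟨hx1, hx2⟩
    refine ⟨?_, ball_subset_closedBall hx2⟩
    have : 0 < u x - (η + S * (3 / 4)) := by have : _ < u x := hx1
                                             linarith
    exact (lt_max_of_lt_left this).ne'
  have : 0 < Y := div_pos hpos (by positivity)
  linarith


theorem exists_inner_radius {n : ℕ} {u : Euc n → ℝ} (hu : Continuous u) {r k : ℝ} (hr : 0 < r)
    (hk : ∀ x : Euc n, ‖x‖ = r → u x < k) :
    ∃ r', 0 < r' ∧ r' < r ∧ ∀ x : Euc n, r' < ‖x‖ → ‖x‖ ≤ r → u x < k := by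
  have hK : IsCompact ({x | k ≤ u x} ∩ closedBall (0 : Euc n) r) :=
    (isCompact_closedBall _ _).inter_left (isClosed_le continuous_const hu)
  rcases ({x | k ≤ u x} ∩ closedBall (0 : Euc n) r).eq_empty_or_nonempty with he | hne
  · refine ⟨r / 2, by linarith, by linarith, fun x _ hx => ?_⟩
    by_contra hcon
    push Not at hcon
    have : x ∈ ({x | k ≤ u x} ∩ closedBall (0 : Euc n) r) := ⟨hcon, by simpa using hx⟩
    rw [he] at this
    exact this
  · obtain ⟨y, hy, hmax⟩ := hK.exists_isMaxOn hne continuous_norm.continuousOn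
    have hy1 : ‖y‖ ≤ r := by simpa using hy.2
    have hy2 : ‖y‖ < r := by
      refine lt_of_le_of_ne hy1 (fun he => ?_)
      have := hk y he
      have h2 : k ≤ u y := hy.1
      linarith
    refine ⟨max (r / 2) ‖y‖, lt_max_of_lt_left (by linarith), max_lt (by linarith) hy2, fun x h1 hx => ?_⟩
    by_contra hcon
    push Not at hcon
    have : ‖x‖ ≤ ‖y‖ := hmax (show x ∈ _ from ⟨hcon, by simpa using hx⟩)
    have := lt_of_le_of_lt (le_max_right _ _) h1
    linarith

theorem Sol.mp_step {n : ℕ} {p C₁ C₂ α : ℝ} {A : Euc n → Euc n → Euc n} {b q : Euc n → ℝ} {g : ℝ → ℝ}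
    {u : Euc n → ℝ} (h : Sol p C₁ C₂ α A b q g u) {r B Cs k : ℝ} (hr : 0 < r) (hB0 : 0 ≤ B)
    (hB : ∀ x, ‖x‖ ≤ r → b x * ‖fderiv ℝ u x‖ ^ α ≤ B * ‖fderiv ℝ u x‖ ^ (p - 1)) (hCs : 0 < Cs)
    (hsob : ∀ w : Euc n → ℝ, ContDiff ℝ 1 w → HasCompactSupport w →
      ∫ x, |w x| ^ ((n : ℝ) / (n - 1)) ≤ Cs * (∫ x, ‖fderiv ℝ w x‖) ^ ((n : ℝ) / (n - 1)))
    (hk : ∀ x : Euc n, ‖x‖ = r → u x < k) {x₀ : Euc n} (hx₀ : ‖x₀‖ < r) (hx₀' : k < u x₀) :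
    1 / 2 ≤ (2 * (volume {x : Euc n | k < u x ∧ ‖x‖ < r ∧ fderiv ℝ u x ≠ 0}).toReal) ^ ((n : ℝ) / (n - 1) - 1) *
      (Cs * ((p + 1) * (C₁ ^ (1 - p) * B ^ p / C₁ + 1)) ^ ((n : ℝ) / (n - 1))) := by
  have hp := h.hp
  have hC₁ := h.hC₁
  have hn1 : (0 : ℝ) < n - 1 := by
    have : (2 : ℝ) ≤ n := by exact_mod_cast h.hn
    linarith
  set κ := (n : ℝ) / (n - 1) with hκ
  have hκ1 : 1 < κ := by rw [hκ, lt_div_iff₀ hn1]; linarith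
  obtain ⟨r', hr', hr'r, hin⟩ := exists_inner_radius h.uc.continuous hr hk
  obtain ⟨K, hK, hcut⟩ := exists_cutoff n
  obtain ⟨ψ, hψ, h0, h1, hone, hz, hD⟩ := hcut 0 r' r hr' hr'r
  simp only [sub_zero] at hone hz
  have hc : HasCompactSupport ψ := cutoff_compact (z := 0) (r := r) (by simpa using hz)
  have tri : ∀ x, ψ x = 0 ∨ (‖x‖ < r ∧ max (u x - k) 0 = 0) ∨ (‖x‖ < r ∧ ψ x = 1 ∧ k < u x) := by
    intro x
    rcases le_or_gt r ‖x‖ with h' | h'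
    · exact Or.inl (hz x h')
    rcases le_or_gt (u x) k with h2 | h2
    · exact Or.inr (Or.inl ⟨h', max_eq_right (by linarith)⟩)
    · refine Or.inr (Or.inr ⟨h', hone x ?_, h2⟩)
      by_contra hcon
      push Not at hcon
      have := hin x hcon h'.le
      linarith
  set E := {x : Euc n | k < u x ∧ ‖x‖ < r ∧ fderiv ℝ u x ≠ 0} with hE
  have cDu := h.uc.continuous_fderiv one_ne_zero
  have hEm : MeasurableSet E := by
    refine MeasurableSet.inter ?_ (MeasurableSet.inter ?_ ?_)
    · exact (isOpen_lt continuous_const h.uc.continuous).measurableSet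
    · exact (isOpen_lt continuous_norm continuous_const).measurableSet
    · exact (isOpen_ne_fun cDu continuous_const).measurableSet
  have hEfin : volume E ≠ ⊤ := by
    refine ne_top_of_le_ne_top (measure_ball_lt_top (x := (0 : Euc n)) (r := r)).ne (measure_mono ?_)
    intro x hx
    simpa using hx.2.1
  have zp : (0 : ℝ) ^ p = 0 := Real.zero_rpow (by linarith)
  have zp1 : (0 : ℝ) ^ (p - 1) = 0 := Real.zero_rpow (by linarith)
  have cψ : Continuous fun x => ψ x ^ p := hψ.continuous.rpow_const (fun x => Or.inr (by linarith))
  have cX : Continuous fun x => ‖fderiv ℝ u x‖ ^ p := h.fd_cont.rpow_const (fun x => Or.inr (by linarith))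
  have cw : Continuous fun x => max (u x - k) 0 := (h.uc.continuous.sub continuous_const).max continuous_const
  set W : Euc n → ℝ := fun x => ψ x ^ p * (max (u x - k) 0) ^ 2 with hW
  have cdW : ContDiff ℝ 1 W := Sol.contDiff_test hp h.uc hψ k
  have csW : HasCompactSupport W := Sol.compact_test hp hc _
  have s1 : 1 < (p + 1) / 2 := by linarith
  set Y : Euc n → ℝ := fun x => W x ^ ((p + 1) / 2) with hY
  have cdY : ContDiff ℝ 1 Y := ContDiff.rpow_const_of_le (m := 1) (by exact_mod_cast cdW) (by exact_mod_cast s1.le)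
  have csY : HasCompactSupport Y := csW.comp_left (g := fun t : ℝ => t ^ ((p + 1) / 2)) (Real.zero_rpow (by linarith))
  have Y0 : ∀ x, 0 ≤ Y x := fun x => Real.rpow_nonneg (mul_nonneg (Real.rpow_nonneg (h0 x) _) (sq_nonneg _)) _
  have iY : Integrable Y := cdY.continuous.integrable_of_hasCompactSupport csY
  have sqr : ∀ t : ℝ, 0 ≤ t → ∀ s : ℝ, (t ^ 2) ^ s = t ^ (2 * s) := by
    intro t ht s
    rw [← Real.rpow_natCast, ← Real.rpow_mul ht]; norm_cast
  -- energy
  set Z : Euc n → ℝ := E.indicator Y with hZ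
  have iZ : Integrable Z := iY.indicator hEm
  have i2 : Integrable (fun x => ψ x ^ p * max (u x - k) 0 * ‖fderiv ℝ u x‖ ^ p) :=
    integrable_cc ((cψ.mul cw).mul cX) hc (fun x hx => by simp [hx, zp])
  have Y1 : ∀ x, ψ x = 1 → k < u x → Y x = (u x - k) * (u x - k) ^ p := by
    intro x hx hx2
    simp only [hY, hW, hx, Real.one_rpow, one_mul]
    rw [max_eq_left (by linarith), sqr _ (by linarith), ← Real.rpow_one_add' (by linarith) (by linarith)]
    congr 1; ring
  have Y2 : ∀ x, ψ x = 0 ∨ max (u x - k) 0 = 0 → W x = 0 := by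
    rintro x (hx | hx) <;> simp [hW, hx, zp]
  have Z2 : ∀ x, ψ x = 0 ∨ max (u x - k) 0 = 0 → Z x = 0 := by
    intro x hx
    have : Y x = 0 := by simp only [hY, Y2 x hx]; exact Real.zero_rpow (by linarith)
    simp [hZ, indicator, this]
  set c2 := C₁ ^ (1 - p) * B ^ p with hc2
  have hc20 : 0 ≤ c2 := by positivity
  have en := h.cacc0 ψ hψ hc h0 k
    (fun x => C₁ * (ψ x ^ p * max (u x - k) 0 * ‖fderiv ℝ u x‖ ^ p) - c2 * Z x)
    ((i2.const_mul _).sub (iZ.const_mul _)) ?_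
  swap
  · refine Eventually.of_forall (fun x => ?_)
    rcases tri x with hx | ⟨hx, hx2⟩ | ⟨hx, hx1, hx2⟩
    · simp only [Z2 x (Or.inl hx), hx, zp, zp1]; simp
    · simp only [Z2 x (Or.inr hx2), hx2]; simp
    · have d0 : fderiv ℝ ψ x = 0 := by
        refine IsLocalMax.fderiv_eq_zero ?_
        exact Eventually.of_forall (fun y => by rw [hx1]; exact h1 y)
      simp only [hx1, d0, Real.one_rpow, one_mul, norm_zero, mul_zero, zero_mul, sub_zero]
      rw [max_eq_left (by linarith)]
      have hw : 0 < u x - k := by linarith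
      have hB' := hB x hx.le
      have hqg : 0 ≤ q x * g (u x) := mul_nonneg (h.q0 x) (h.g0 _ (h.u0 x))
      have step : B * ‖fderiv ℝ u x‖ ^ (p - 1) * (u x - k) ^ 2 ≤
          C₁ * ((u x - k) * ‖fderiv ℝ u x‖ ^ p) + c2 * Z x := by
        by_cases hX : fderiv ℝ u x = 0
        · have : Z x = 0 := by
            simp only [hZ]
            exact indicator_of_notMem (fun hh => hh.2.2 hX) _
          rw [this, hX, norm_zero, zp, zp1]; simp
        · have : Z x = (u x - k) * (u x - k) ^ p := by
            simp only [hZ]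
            rw [indicator_of_mem (show x ∈ E from ⟨hx2, hx, hX⟩), Y1 x hx1 hx2]
          rw [this]
          have yg := young_ineq hp (norm_nonneg (fderiv ℝ u x)) (mul_nonneg hB0 hw.le) hC₁
          rw [Real.mul_rpow hB0 hw.le] at yg
          have := mul_le_mul_of_nonneg_left yg hw.le
          rw [hc2]
          nlinarith [this]
      have t := mul_le_mul_of_nonneg_right hB' (sq_nonneg (u x - k))
      have t2 := mul_nonneg hqg (sq_nonneg (u x - k))
      linarith
  rw [integral_sub (i2.const_mul _) (iZ.const_mul _), integral_const_mul, integral_const_mul] at en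
  set I := ∫ x, Z x with hI
  have en2 : ∫ x, ψ x ^ p * max (u x - k) 0 * ‖fderiv ℝ u x‖ ^ p ≤ c2 / C₁ * I := by
    rw [div_mul_eq_mul_div, le_div_iff₀ hC₁]; linarith
  set C' := (p + 1) * (c2 / C₁ + 1) with hC'
  have hC'0 : 0 < C' := by positivity
  have gradY : ∫ x, ‖fderiv ℝ Y x‖ ≤ C' * I := by
    have : ∫ x, ‖fderiv ℝ Y x‖ ≤ ∫ x, (p + 1) * (ψ x ^ p * max (u x - k) 0 * ‖fderiv ℝ u x‖ ^ p) + (p + 1) * Z x := by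
      refine integral_mono ?_ ((i2.const_mul _).add (iZ.const_mul _)) ?_
      · exact ((cdY.continuous_fderiv one_ne_zero).norm).integrable_of_hasCompactSupport
          (csY.fderiv (𝕜 := ℝ)).norm
      · intro x
        simp only
        have hd : HasFDerivAt Y (((p + 1) / 2 * W x ^ ((p + 1) / 2 - 1)) • fderiv ℝ W x) x :=
          (cdW.differentiable one_ne_zero x).hasFDerivAt.rpow_const (Or.inr s1.le)
        rw [hd.fderiv, norm_smul]
        have deg : ψ x = 0 ∨ max (u x - k) 0 = 0 →
            ‖(p + 1) / 2 * W x ^ ((p + 1) / 2 - 1)‖ * ‖fderiv ℝ W x‖ ≤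
            (p + 1) * (ψ x ^ p * max (u x - k) 0 * ‖fderiv ℝ u x‖ ^ p) + (p + 1) * Z x := by
          intro hx
          rw [Y2 x hx, Real.zero_rpow (by linarith), Z2 x hx]
          rcases hx with hx | hx <;> simp [hx, zp]
        rcases tri x with hx | ⟨hx, hx2⟩ | ⟨hx, hx1, hx2⟩
        · exact deg (Or.inl hx)
        · exact deg (Or.inr hx2)
        · have d0 : fderiv ℝ ψ x = 0 := by
            refine IsLocalMax.fderiv_eq_zero ?_
            exact Eventually.of_forall (fun y => by rw [hx1]; exact h1 y)
          have hw : 0 < u x - k := by linarith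
          rw [(Sol.fderiv_test hp h.uc hψ k x).fderiv, d0, smul_zero, add_zero, norm_smul]
          simp only [hW, hx1, Real.one_rpow, one_mul]
          rw [max_eq_left hw.le, sqr _ hw.le, Real.norm_of_nonneg (by positivity), Real.norm_of_nonneg (by positivity)]
          rw [show 2 * ((p + 1) / 2 - 1) = p - 1 by ring]
          by_cases hX : fderiv ℝ u x = 0
          · have : Z x = 0 := by
              simp only [hZ]
              exact indicator_of_notMem (fun hh => hh.2.2 hX) _
            rw [this, hX, norm_zero, zp]; simp
          · have : Z x = (u x - k) * (u x - k) ^ p := by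
              simp only [hZ]
              rw [indicator_of_mem (show x ∈ E from ⟨hx2, hx, hX⟩), Y1 x hx1 hx2]
            rw [this]
            have yg := young_ineq hp hw.le (norm_nonneg (fderiv ℝ u x)) one_pos
            rw [Real.one_rpow] at yg
            have := mul_le_mul_of_nonneg_left yg (by positivity : 0 ≤ (p + 1) * (u x - k))
            nlinarith [this]
    refine this.trans ?_
    rw [integral_add (i2.const_mul _) (iZ.const_mul _), integral_const_mul, integral_const_mul]
    have := mul_le_mul_of_nonneg_left en2 (by linarith : 0 ≤ p + 1)
    rw [hC']
    linarith
  have sob := hsob Y cdY csY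
  have Ipos : 0 < I := by
    by_contra hcon
    push Not at hcon
    have g0 : ∫ x, ‖fderiv ℝ Y x‖ = 0 :=
      le_antisymm (gradY.trans (mul_nonpos_of_nonneg_of_nonpos hC'0.le hcon)) (integral_nonneg (fun x => norm_nonneg _))
    rw [g0, Real.zero_rpow (by linarith), mul_zero] at sob
    have : 0 < ∫ x, |Y x| ^ κ := by
      refine Continuous.integral_pos_of_hasCompactSupport_nonneg_nonzero (x := x₀)
        (cdY.continuous.abs.rpow_const (fun x => Or.inr (by linarith))) ?_ (fun x => by simp only [Pi.zero_apply]; positivity) ?_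
      · exact csY.comp_left (g := fun t : ℝ => |t| ^ κ) (by simp only [abs_zero]; exact Real.zero_rpow (by linarith))
      · rcases tri x₀ with hx | ⟨hx, hx2⟩ | ⟨hx, hx1, hx2⟩
        · exfalso
          have h3 : ‖x₀‖ ≤ r' := by
            by_contra hcon
            push Not at hcon
            have := hin x₀ hcon hx₀.le
            linarith
          rw [hone x₀ h3] at hx
          norm_num at hx
        · exfalso
          have := le_max_left (u x₀ - k) 0
          linarith
        · rw [Y1 x₀ hx1 hx2]
          have hw : 0 < u x₀ - k := by linarith
          positivity
    linarith
  set v := (volume E).toReal with hv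
  have key : ∀ lam : ℝ, 0 < lam → I ≤ lam * v + lam ^ (1 - κ) * ∫ x, |Y x| ^ κ := by
    intro lam hl
    have iYk : Integrable fun x => |Y x| ^ κ := by
      refine integrable_cc (cdY.continuous.abs.rpow_const (fun x => Or.inr (by linarith))) csY ?_
      intro x hx
      rw [hx, abs_zero, Real.zero_rpow (by linarith)]
    have i1 : Integrable (E.indicator (fun _ => (1 : ℝ))) :=
      (integrable_indicator_iff hEm).2 (integrableOn_const hEfin)
    have : I ≤ ∫ x, lam * E.indicator (fun _ => (1 : ℝ)) x + lam ^ (1 - κ) * |Y x| ^ κ := by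
      refine integral_mono iZ ((i1.const_mul _).add (iYk.const_mul _)) (fun x => ?_)
      simp only [hZ]
      by_cases hx : x ∈ E
      · rw [indicator_of_mem hx, indicator_of_mem hx, mul_one]
        have := scale_pt hκ1 (abs_nonneg (Y x)) hl
        rw [abs_of_nonneg (Y0 x)] at *
        exact this
      · rw [indicator_of_notMem hx, indicator_of_notMem hx, mul_zero, zero_add]; positivity
    refine this.trans ?_
    rw [integral_add (i1.const_mul _) (iYk.const_mul _), integral_const_mul, integral_const_mul,
      integral_indicator hEm, setIntegral_const]
    simp [Measure.real, hv]
  have sob2 : ∫ x, |Y x| ^ κ ≤ Cs * (C' * I) ^ κ := by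
    refine sob.trans ?_
    have : (∫ x, ‖fderiv ℝ Y x‖) ^ κ ≤ (C' * I) ^ κ :=
      Real.rpow_le_rpow (integral_nonneg (fun x => norm_nonneg _)) gradY (by linarith)
    gcongr
  have vpos : 0 < v := by
    by_contra hcon
    have hv0 : v = 0 := le_antisymm (not_lt.1 hcon) ENNReal.toReal_nonneg
    have : volume E = 0 := by
      rcases (ENNReal.toReal_eq_zero_iff _).1 hv0 with h' | h'
      · exact h'
      · exact absurd h' hEfin
    have : I = 0 := by
      rw [hI, hZ, integral_indicator hEm]
      exact setIntegral_measure_zero _ this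
    linarith
  have fin := key (I / (2 * v)) (by positivity)
  have e1 : I / (2 * v) * v = I / 2 := by field_simp
  have e2 : (I / (2 * v)) ^ (1 - κ) * (Cs * (C' * I) ^ κ) = (2 * v) ^ (κ - 1) * (Cs * C' ^ κ) * I := by
    rw [Real.div_rpow Ipos.le (by positivity), Real.mul_rpow hC'0.le Ipos.le,
      show κ - 1 = -(1 - κ) by ring, Real.rpow_neg (by positivity)]
    have : I ^ (1 - κ) * I ^ κ = I := by rw [← Real.rpow_add Ipos]; simp
    field_simp
    linear_combination this
  have := mul_le_mul_of_nonneg_left sob2 (by positivity : 0 ≤ (I / (2 * v)) ^ (1 - κ))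
  rw [e2] at this
  rw [e1] at fin
  have f2 : 1 / 2 * I ≤ (2 * v) ^ (κ - 1) * (Cs * C' ^ κ) * I := by linarith
  exact le_of_mul_le_mul_right f2 Ipos


namespace Sol
variable {n : ℕ} {p C₁ C₂ α : ℝ} {A : Euc n → Euc n → Euc n} {b q : Euc n → ℝ} {g : ℝ → ℝ}
    {u : Euc n → ℝ}

theorem max_principle (h : Sol p C₁ C₂ α A b q g u) {r k0 : ℝ} (hr : 0 < r)
    (hk0 : ∀ x : Euc n, ‖x‖ = r → u x ≤ k0) : ∀ x : Euc n, ‖x‖ ≤ r → u x ≤ k0 := by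
  have hp := h.hp
  have hK : IsCompact (closedBall (0 : Euc n) r) := isCompact_closedBall _ _
  obtain ⟨y, hy, hmax⟩ := hK.exists_isMaxOn ⟨0, by simp [hr.le]⟩ h.uc.continuous.continuousOn
  have hmax' : ∀ x : Euc n, ‖x‖ ≤ r → u x ≤ u y := fun x hx => hmax (by simpa using hx)
  by_contra hcon
  push Not at hcon
  obtain ⟨x1, hx1, hx1'⟩ := hcon
  have hm : k0 < u y := hx1'.trans_le (hmax' x1 hx1)
  have hy1 : ‖y‖ < r := by
    refine lt_of_le_of_ne (by simpa using hy) (fun he => ?_)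
    have := hk0 y he
    linarith
  obtain ⟨B1, hB1⟩ := h.bl _ hK
  obtain ⟨X0, hX0⟩ := hK.exists_bound_of_continuousOn h.fd_cont.continuousOn
  have B10 : 0 ≤ B1 := (h.b0 0).trans (hB1 0 (by simp [hr.le]))
  have X00 : 0 ≤ X0 := (norm_nonneg _).trans (hX0 0 (by simp [hr.le]))
  have hB : ∀ x, ‖x‖ ≤ r → b x * ‖fderiv ℝ u x‖ ^ α ≤ (B1 * X0 ^ (α - (p - 1))) * ‖fderiv ℝ u x‖ ^ (p - 1) := by
    intro x hx
    have hx' : x ∈ closedBall (0 : Euc n) r := by simpa using hx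
    have h1 := hB1 x hx'
    have h2 := (le_abs_self _).trans (hX0 x hx')
    have e : ‖fderiv ℝ u x‖ ^ α = ‖fderiv ℝ u x‖ ^ (α - (p - 1)) * ‖fderiv ℝ u x‖ ^ (p - 1) := by
      rw [← Real.rpow_add_of_nonneg (norm_nonneg _) (by have := h.hα₁; linarith) (by linarith)]
      congr 1; ring
    rw [e, ← mul_assoc]
    have h3 : ‖fderiv ℝ u x‖ ^ (α - (p - 1)) ≤ X0 ^ (α - (p - 1)) :=
      Real.rpow_le_rpow (norm_nonneg _) h2 (by have := h.hα₁; linarith)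
    have := h.b0 x
    gcongr
  obtain ⟨Cs, hCs, hsob⟩ := sobolev_real n h.hn
  have hn1 : (0 : ℝ) < n - 1 := by
    have : (2 : ℝ) ≤ n := by exact_mod_cast h.hn
    linarith
  have hκ1 : 1 < (n : ℝ) / (n - 1) := by rw [lt_div_iff₀ hn1]; linarith
  let k : ℕ → ℝ := fun j => u y - (u y - k0) / (j + 2)
  have hkm : ∀ j, k j < u y := by
    intro j
    have : 0 < (u y - k0) / ((j : ℝ) + 2) := div_pos (by linarith) (by positivity)
    simp only [k]; linarith
  have hk0' : ∀ j, k0 < k j := by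
    intro j
    have hj : (0 : ℝ) ≤ j := Nat.cast_nonneg j
    have : (u y - k0) / ((j : ℝ) + 2) < (u y - k0) := by
      rw [div_lt_iff₀ (by positivity)]
      nlinarith
    simp only [k]; linarith
  have hmono : Monotone k := by
    intro i j hij
    simp only [k]
    have : (i : ℝ) ≤ j := by exact_mod_cast hij
    have : (u y - k0) / ((j : ℝ) + 2) ≤ (u y - k0) / ((i : ℝ) + 2) :=
      div_le_div_of_nonneg_left (by linarith) (by positivity) (by linarith)
    linarith
  have klim : Tendsto k atTop (nhds (u y)) := by
    have : Tendsto (fun j : ℕ => (u y - k0) / ((j : ℝ) + 2)) atTop (nhds 0) :=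
      tendsto_const_nhds.div_atTop (tendsto_atTop_add_const_right _ _ tendsto_natCast_atTop_atTop)
    have := (tendsto_const_nhds (x := u y)).sub this
    simpa [k] using this
  let E : ℕ → Set (Euc n) := fun j => {x | k j < u x ∧ ‖x‖ < r ∧ fderiv ℝ u x ≠ 0}
  have cDu := h.uc.continuous_fderiv one_ne_zero
  have hEm : ∀ j, MeasurableSet (E j) := by
    intro j
    refine MeasurableSet.inter ?_ (MeasurableSet.inter ?_ ?_)
    · exact (isOpen_lt continuous_const h.uc.continuous).measurableSet
    · exact (isOpen_lt continuous_norm continuous_const).measurableSet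
    · exact (isOpen_ne_fun cDu continuous_const).measurableSet
  have hEfin : volume (E 0) ≠ ⊤ := by
    refine ne_top_of_le_ne_top (measure_ball_lt_top (x := (0 : Euc n)) (r := r)).ne (measure_mono ?_)
    intro x hx
    simpa using hx.2.1
  have hEa : Antitone E := fun i j hij x hx => ⟨(hmono hij).trans_lt hx.1, hx.2⟩
  have hEi : ⋂ j, E j = ∅ := by
    rw [Set.eq_empty_iff_forall_notMem]
    intro x hx
    rw [mem_iInter] at hx
    have h2 := (hx 0).2
    have h1 : u y ≤ u x := le_of_tendsto' klim (fun j => (hx j).1.le)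
    refine h2.2 (IsLocalMax.fderiv_eq_zero ?_)
    have : ball (0 : Euc n) r ∈ nhds x := isOpen_ball.mem_nhds (by simpa using h2.1)
    filter_upwards [this] with z hz
    exact (hmax' z (by have : ‖z‖ < r := by simpa using hz
                       exact this.le)).trans h1
  have tv : Tendsto (fun j => volume (E j)) atTop (nhds 0) := by
    have := tendsto_measure_iInter_atTop (μ := volume) (fun j => (hEm j).nullMeasurableSet) hEa ⟨0, hEfin⟩
    rwa [hEi, measure_empty] at this
  have tv2 : Tendsto (fun j => (volume (E j)).toReal) atTop (nhds 0) := by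
    have := (ENNReal.tendsto_toReal ENNReal.zero_ne_top).comp tv
    rw [ENNReal.toReal_zero] at this; exact this
  set Q := (Cs * ((p + 1) * (C₁ ^ (1 - p) * (B1 * X0 ^ (α - (p - 1))) ^ p / C₁ + 1)) ^ ((n : ℝ) / (n - 1)))
  have tv3 : Tendsto (fun j => (2 * (volume (E j)).toReal) ^ ((n : ℝ) / (n - 1) - 1) * Q) atTop (nhds 0) := by
    have := (((tv2.const_mul 2).rpow_const (p := (n : ℝ) / (n - 1) - 1) (Or.inr (by linarith))).mul_const Q)
    rw [mul_zero, Real.zero_rpow (by linarith), zero_mul] at this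
    exact this
  have : (1 : ℝ) / 2 ≤ 0 := by
    refine ge_of_tendsto' tv3 (fun j => ?_)
    exact h.mp_step hr (by positivity) hB hCs hsob (fun x hx => (hk0 x hx).trans_lt (hk0' j)) hy1 (hkm j)
  norm_num at this

/-- the maximum is attained and dominates on the closed ball -/
theorem M_spec (h : Sol p C₁ C₂ α A b q g u) {r : ℝ} (hr : 0 < r) :
    (∃ z : Euc n, ‖z‖ = r ∧ u z = sphMax u r) ∧ ∀ x : Euc n, ‖x‖ ≤ r → u x ≤ sphMax u r := by
  have : Nonempty (Fin n) := ⟨⟨0, by have := h.hn; omega⟩⟩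
  have hK : IsCompact (sphere (0 : Euc n) r) := isCompact_sphere _ _
  have hne : (sphere (0 : Euc n) r).Nonempty := NormedSpace.sphere_nonempty.2 hr.le
  obtain ⟨z, hz, hz2⟩ := hK.exists_sSup_image_eq hne h.uc.continuous.continuousOn
  refine ⟨⟨z, by simpa using hz, hz2.symm⟩, h.max_principle hr ?_⟩
  intro x hx
  exact le_csSup (hK.bddAbove_image h.uc.continuous.continuousOn) ⟨x, by simpa using hx, rfl⟩

theorem M_mono (h : Sol p C₁ C₂ α A b q g u) {r s : ℝ} (hr : 0 < r) (hrs : r ≤ s) :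
    sphMax u r ≤ sphMax u s := by
  obtain ⟨⟨z, hz, hz2⟩, _⟩ := h.M_spec hr
  rw [← hz2]
  exact (h.M_spec (hr.trans_le hrs)).2 z (by rw [hz]; exact hrs)

theorem M_nonneg (h : Sol p C₁ C₂ α A b q g u) {r : ℝ} (hr : 0 < r) : 0 ≤ sphMax u r := by
  obtain ⟨⟨z, hz, hz2⟩, _⟩ := h.M_spec hr
  rw [← hz2]; exact h.u0 z

theorem M_cont (h : Sol p C₁ C₂ α A b q g u) : ContinuousOn (sphMax u) (Ioi 0) := by
  have hK : IsCompact (sphere (0 : Euc n) 1) := isCompact_sphere _ _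
  have hc : Continuous fun r : ℝ => sSup ((fun x : Euc n => u (r • x)) '' sphere (0 : Euc n) 1) := by
    refine hK.continuous_sSup ?_
    show Continuous fun y : ℝ × Euc n => u (y.1 • y.2)
    exact h.uc.continuous.comp (continuous_fst.smul continuous_snd)
  refine hc.continuousOn.congr ?_
  intro r hr
  have hr : 0 < r := hr
  unfold sphMax
  congr 1
  ext t
  constructor
  · rintro ⟨x, hx, rfl⟩
    have hx : ‖x‖ = r := by simpa using hx
    refine ⟨r⁻¹ • x, ?_, ?_⟩
    · rw [mem_sphere_zero_iff_norm, norm_smul, hx, norm_inv, Real.norm_of_nonneg hr.le]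
      field_simp
    · simp only [smul_smul, mul_inv_cancel₀ hr.ne', one_smul]
  · rintro ⟨x, hx, rfl⟩
    have hx : ‖x‖ = 1 := by simpa using hx
    refine ⟨r • x, ?_, rfl⟩
    rw [mem_sphere_zero_iff_norm, norm_smul, hx, Real.norm_of_nonneg hr.le, mul_one]

end Sol


/-- The constant from the growth lemma has the required property. -/
def GrowthConst (n : ℕ) (p C₁ C₂ c : ℝ) : Prop :=
  ∀ {α : ℝ} {A : Euc n → Euc n → Euc n} {b q : Euc n → ℝ} {g : ℝ → ℝ} {u : Euc n → ℝ},
      Sol p C₁ C₂ α A b q g u → ∀ {z : Euc n} {ρ S η a b' : ℝ}, Loc C₁ α p b q g u z ρ S η a b' →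
      η + S ≤ u z → c * (a * ρ ^ p) ≤ S ^ (p - 1)

namespace Sol
variable {n : ℕ} {p C₁ C₂ α : ℝ} {A : Euc n → Euc n → Euc n} {b q : Euc n → ℝ} {g : ℝ → ℝ}
    {u : Euc n → ℝ}

theorem substep (h : Sol p C₁ C₂ α A b q g u) {c : ℝ} (hc : GrowthConst n p C₁ C₂ c)
    {s1 s2 a b' lo : ℝ} (hs1 : 0 < s1) (hs : s1 < s2) (ha : 0 < a) (hb' : 0 ≤ b')
    (hq : ∀ᵐ x, s1 < ‖x‖ ∧ ‖x‖ < s2 → lo < u x →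
      b x * ‖fderiv ℝ u x‖ ^ α + a ≤ q x * g (u x) + b' * ‖fderiv ℝ u x‖ ^ p)
    (hlo : lo < 2 * sphMax u s1 - sphMax u s2) :
    C₁ / 4 ≤ b' * (sphMax u s2 - sphMax u s1) ∨
      c * (a * ((s2 - s1) / 2) ^ p) ≤ (sphMax u s2 - sphMax u s1) ^ (p - 1) := by
  have hp := h.hp
  set D := sphMax u s2 - sphMax u s1 with hD
  have hD0 : 0 ≤ D := sub_nonneg.2 (h.M_mono hs1 hs.le)
  rcases le_or_gt (C₁ / 4) (b' * D) with h1 | h1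
  · exact Or.inl h1
  right
  obtain ⟨⟨z, hz, hz2⟩, _⟩ := h.M_spec (r := (s1 + s2) / 2) (by linarith)
  have m1 : sphMax u s1 ≤ u z := by rw [hz2]; exact h.M_mono hs1 (by linarith)
  have hub := (h.M_spec (r := s2) (by linarith)).2
  have hin : ∀ x : Euc n, ‖x - z‖ < (s2 - s1) / 2 → s1 < ‖x‖ ∧ ‖x‖ < s2 := by
    intro x hx
    have e1 := norm_sub_norm_le x z
    have e2 := norm_sub_norm_le z x
    rw [norm_sub_rev] at e2
    constructor <;> linarith
  have key : ∀ ε : ℝ, 0 < ε → b' * (D + ε) ≤ C₁ / 4 → lo < 2 * sphMax u s1 - sphMax u s2 - ε →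
      c * (a * ((s2 - s1) / 2) ^ p) ≤ (D + ε) ^ (p - 1) := by
    intro ε hε hb hl
    refine hc h (z := z) (S := D + ε) (η := u z - (D + ε)) (b' := b') ⟨by linarith, by linarith, ha, hb', hb, ?_, ?_⟩ (by linarith)
    · intro x hx
      have := hub x (hin x hx).2.le
      linarith
    · filter_upwards [hq] with x hx h1 h2
      exact hx (hin x h1) (by linarith)
  have lim : Tendsto (fun ε : ℝ => (D + ε) ^ (p - 1)) (nhdsWithin 0 (Ioi 0)) (nhds (D ^ (p - 1))) := by
    have : Continuous fun ε : ℝ => (D + ε) ^ (p - 1) :=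
      (continuous_const.add continuous_id).rpow_const (fun x => Or.inr (by linarith))
    have := this.tendsto 0
    rw [add_zero] at this
    exact this.mono_left nhdsWithin_le_nhds
  refine ge_of_tendsto lim ?_
  have c1 : Continuous fun ε : ℝ => b' * (D + ε) := by fun_prop
  have e1 : ∀ᶠ ε in nhds (0 : ℝ), b' * (D + ε) < C₁ / 4 :=
    c1.continuousAt.eventually_lt continuousAt_const (by simpa using h1)
  have c2 : Continuous fun ε : ℝ => 2 * sphMax u s1 - sphMax u s2 - ε := by fun_prop
  have e2 : ∀ᶠ ε in nhds (0 : ℝ), lo < 2 * sphMax u s1 - sphMax u s2 - ε :=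
    continuousAt_const.eventually_lt c2.continuousAt (by simpa using hlo)
  filter_upwards [self_mem_nhdsWithin, nhdsWithin_le_nhds e1, nhdsWithin_le_nhds e2] with ε h1 h2 h3
  exact key ε h1 h2.le h3

theorem multistep (h : Sol p C₁ C₂ α A b q g u) {c : ℝ} (hc0 : 0 < c) (hc : GrowthConst n p C₁ C₂ c)
    {r1 r2 β s lo : ℝ} (hr1 : 0 < r1) (hr : r1 < r2) (hβ : 0 < β) (hs : 0 < s)
    (hq : ∀ᵐ x, r1 < ‖x‖ ∧ ‖x‖ < r2 → lo < u x →
      b x * ‖fderiv ℝ u x‖ ^ α + β * s ^ α ≤ q x * g (u x) + β * s ^ (α - p) * ‖fderiv ℝ u x‖ ^ p)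
    (hlo : lo < 2 * sphMax u r1 - sphMax u r2) :
    c * (β * s ^ α * ((r2 - r1) / 2) ^ p) ≤ (sphMax u r2 - sphMax u r1) ^ (p - 1) ∨
    C₁ / (16 * ((C₁ / 4) ^ (p - 1) / c) ^ (1 / p)) * s * (r2 - r1) ≤ sphMax u r2 - sphMax u r1 := by
  have hp := h.hp
  have hC₁ := h.hC₁
  set c3 := ((C₁ / 4) ^ (p - 1) / c) ^ (1 / p) with hc3
  have hc30 : 0 < c3 := by positivity
  have hc3p : c3 ^ p = (C₁ / 4) ^ (p - 1) / c := by
    rw [hc3, ← Real.rpow_mul (by positivity), show 1 / p * p = 1 by field_simp, Real.rpow_one]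
  set b' := β * s ^ (α - p) with hb'
  have hb'0 : 0 < b' := by positivity
  set ρ0 := 2 * c3 / (b' * s) with hρ0
  have hρ00 : 0 < ρ0 := by positivity
  have e0 : c * (β * s ^ α * (ρ0 / 2) ^ p) = (C₁ / (4 * b')) ^ (p - 1) := by
    have : ρ0 / 2 = c3 / (b' * s) := by rw [hρ0]; field_simp
    rw [this, Real.div_rpow hc30.le (by positivity), hc3p, Real.mul_rpow hb'0.le hs.le]
    have e1 : s ^ α * β = b' * s ^ p := by
      rw [hb', Real.rpow_sub hs]; field_simp
    have e2 : C₁ / (4 * b') = (C₁ / 4) / b' := by field_simp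
    rw [e2, Real.div_rpow (by positivity) hb'0.le, Real.rpow_sub_one hb'0.ne' p]
    field_simp
    linear_combination e1
  have finish : ∀ N : ℝ, r2 - r1 ≤ N * (2 * ρ0) → N * (C₁ / (4 * b')) ≤ sphMax u r2 - sphMax u r1 →
      C₁ / (16 * c3) * s * (r2 - r1) ≤ sphMax u r2 - sphMax u r1 := by
    intro N h1 h2
    refine le_trans ?_ h2
    calc C₁ / (16 * c3) * s * (r2 - r1) ≤ C₁ / (16 * c3) * s * (N * (2 * ρ0)) := by gcongr
      _ = N * (C₁ / (4 * b')) := by rw [hρ0]; field_simp; ring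
  rcases le_or_gt (r2 - r1) ρ0 with hle | hgt
  · rcases h.substep hc hr1 hr (by positivity) hb'0.le hq hlo with h1 | h1
    · right
      refine finish 1 (by linarith) ?_
      rw [one_mul, div_le_iff₀ (by positivity)]
      linarith
    · exact Or.inl h1
  right
  set N := ⌊(r2 - r1) / ρ0⌋₊ with hN
  have hx1 : 1 ≤ (r2 - r1) / ρ0 := by rw [le_div_iff₀ hρ00]; linarith
  have hN1 : 1 ≤ N := by rw [hN]; exact Nat.le_floor (by simpa using hx1)
  have hN1' : (1 : ℝ) ≤ N := by exact_mod_cast hN1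
  have hNle : (N : ℝ) ≤ (r2 - r1) / ρ0 := Nat.floor_le (by linarith)
  have hNgt : (r2 - r1) / ρ0 < N + 1 := Nat.lt_floor_add_one _
  rw [le_div_iff₀ hρ00] at hNle
  rw [div_lt_iff₀ hρ00] at hNgt
  set δ := (r2 - r1) / N with hδ
  have hδ0 : ρ0 ≤ δ := by rw [hδ, le_div_iff₀ (by linarith)]; linarith
  have hNδ : N * δ = r2 - r1 := by rw [hδ]; field_simp
  have main : ∀ i : ℕ, i ≤ N → i * (C₁ / (4 * b')) ≤ sphMax u (r1 + i * δ) - sphMax u r1 := by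
    intro i
    induction i with
    | zero => intro _; simp
    | succ i ih =>
      intro hi
      have ih := ih (by omega)
      have hi' : (i : ℝ) + 1 ≤ N := by exact_mod_cast hi
      have hi0 : (0 : ℝ) ≤ i := Nat.cast_nonneg i
      have hl : r1 ≤ r1 + i * δ := by nlinarith
      have hu : r1 + (i + 1) * δ ≤ r2 := by nlinarith
      have hmid : r1 + i * δ < r1 + (i + 1) * δ := by nlinarith
      have M1 := h.M_mono hr1 hl
      have M2 := h.M_mono (by linarith) hu
      have sb := h.substep hc (s1 := r1 + i * δ) (s2 := r1 + (i + 1) * δ) (lo := lo) (a := β * s ^ α)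
        (b' := b') (by linarith) hmid (by positivity) hb'0.le ?_ ?_
      · have : C₁ / (4 * b') ≤ sphMax u (r1 + (i + 1) * δ) - sphMax u (r1 + i * δ) := by
          rcases sb with h1 | h1
          · rw [div_le_iff₀ (by positivity)]; linarith
          · have hD0 := sub_nonneg.2 (h.M_mono (by linarith : 0 < r1 + i * δ) hmid.le)
            have : (C₁ / (4 * b')) ^ (p - 1) ≤ (sphMax u (r1 + (i + 1) * δ) - sphMax u (r1 + i * δ)) ^ (p - 1) := by
              refine le_trans ?_ h1
              rw [← e0]
              have : ρ0 / 2 ≤ (r1 + (i + 1) * δ - (r1 + i * δ)) / 2 := by linarith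
              gcongr
            exact (Real.rpow_le_rpow_iff (by positivity) hD0 (by linarith)).1 this
        push_cast
        linarith
      · filter_upwards [hq] with x hx h1 h2
        exact hx ⟨by linarith, by linarith⟩ h2
      · linarith
  have := main N le_rfl
  rw [hNδ, show r1 + (r2 - r1) = r2 by ring] at this
  exact finish N (by nlinarith) this

theorem drift_pt {b β s t α p : ℝ} (hb : b ≤ β) (hβ : 0 ≤ β) (hs : 0 < s) (ht : 0 ≤ t) (hα : 0 < α) (hαp : α ≤ p) :
    b * t ^ α ≤ β * s ^ α + β * s ^ (α - p) * t ^ p := by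
  have h1 : b * t ^ α ≤ β * t ^ α := by gcongr
  have h2 : t ^ α ≤ s ^ α + s ^ (α - p) * t ^ p := by
    rcases le_or_gt t s with h | h
    · have : t ^ α ≤ s ^ α := Real.rpow_le_rpow ht h hα.le
      have : 0 ≤ s ^ (α - p) * t ^ p := by positivity
      linarith
    · have ht0 : 0 < t := hs.trans h
      have e : t ^ α = t ^ (α - p) * t ^ p := by rw [← Real.rpow_add ht0]; ring_nf
      have : t ^ (α - p) ≤ s ^ (α - p) := Real.rpow_le_rpow_of_nonpos hs h.le (by linarith)
      have h3 : t ^ (α - p) * t ^ p ≤ s ^ (α - p) * t ^ p := by gcongr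
      have : 0 ≤ s ^ α := by positivity
      linarith
  have h3 := mul_le_mul_of_nonneg_left h2 hβ
  linarith

end Sol

theorem step_est (n : ℕ) (hn : 2 ≤ n) (p C₁ C₂ α : ℝ) (hp : 1 < p) (hC₁ : 0 < C₁) (hC₂ : 0 < C₂)
    (hα : 0 < α) :
    ∃ c > 0, ∀ {A : Euc n → Euc n → Euc n} {b q : Euc n → ℝ} {g : ℝ → ℝ} {u : Euc n → ℝ},
      Sol p C₁ C₂ α A b q g u → ∀ {r1 r2 Q β G lo : ℝ}, 0 < r1 → r1 < r2 → 0 < Q → 0 ≤ β → 0 < G →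
      (∀ᵐ x : Euc n, r1 < ‖x‖ ∧ ‖x‖ < r2 → Q ≤ q x ∧ b x ≤ β) →
      (∀ t, lo < t → t ≤ sphMax u r2 → G ≤ g t) → lo < 2 * sphMax u r1 - sphMax u r2 →
      c * (Q * G * (r2 - r1) ^ p) ≤ (sphMax u r2 - sphMax u r1) ^ (p - 1) ∨
      c * ((Q * G) ^ (1 / α) * (r2 - r1)) ≤ β ^ (1 / α) * (sphMax u r2 - sphMax u r1) := by
  obtain ⟨c, hc0, hc⟩ := growth n hn p C₁ C₂ hp hC₁ hC₂
  set k1 := c / (2 * 2 ^ p) with hk1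
  set k2 := C₁ / (16 * ((C₁ / 4) ^ (p - 1) / c) ^ (1 / p)) / 2 ^ (1 / α) with hk2
  have hk10 : 0 < k1 := by positivity
  have hk20 : 0 < k2 := by positivity
  refine ⟨min k1 k2, lt_min hk10 hk20, ?_⟩
  intro A b q g u h r1 r2 Q β G lo hr1 hr hQ hβ hG hae hg hlo
  have hd : 0 < r2 - r1 := by linarith
  have hD0 : 0 ≤ sphMax u r2 - sphMax u r1 := sub_nonneg.2 (h.M_mono hr1 hr.le)
  have hub := (h.M_spec (r := r2) (by linarith)).2
  have qg : ∀ᵐ x : Euc n, r1 < ‖x‖ ∧ ‖x‖ < r2 → lo < u x → Q * G ≤ q x * g (u x) ∧ b x ≤ β := by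
    filter_upwards [hae] with x hx h1 h2
    exact ⟨mul_le_mul (hx h1).1 (hg _ h2 (hub x h1.2.le)) hG.le (h.q0 x), (hx h1).2⟩
  have conv1 : c * (Q * G / 2 * ((r2 - r1) / 2) ^ p) = k1 * (Q * G * (r2 - r1) ^ p) := by
    rw [Real.div_rpow hd.le (by norm_num), hk1]; field_simp
  have weak1 : min k1 k2 * (Q * G * (r2 - r1) ^ p) ≤ k1 * (Q * G * (r2 - r1) ^ p) := by
    have := min_le_left k1 k2
    gcongr
  have weak2 : min k1 k2 * ((Q * G) ^ (1 / α) * (r2 - r1)) ≤ k2 * ((Q * G) ^ (1 / α) * (r2 - r1)) := by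
    have := min_le_right k1 k2
    gcongr
  rcases hβ.eq_or_lt with h0 | hβ0
  · left
    refine weak1.trans ?_
    rw [← conv1]
    have hae2 : ∀ᵐ x, r1 < ‖x‖ ∧ ‖x‖ < r2 → lo < u x →
        b x * ‖fderiv ℝ u x‖ ^ α + Q * G / 2 ≤ q x * g (u x) + 0 * ‖fderiv ℝ u x‖ ^ p := by
      filter_upwards [qg] with x hx h1 h2
      obtain ⟨e1, e2⟩ := hx h1 h2
      have : b x = 0 := le_antisymm (by rw [h0]; exact e2) (h.b0 x)
      rw [this]
      have : 0 < Q * G := by positivity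
      linarith
    rcases h.substep hc hr1 hr (a := Q * G / 2) (b' := 0) (by positivity) le_rfl hae2 hlo with h1 | h1
    · rw [zero_mul] at h1; linarith
    · exact h1
  · set s := (Q * G / (2 * β)) ^ (1 / α) with hs
    have hs0 : 0 < s := by positivity
    have es : β * s ^ α = Q * G / 2 := by
      rw [hs, ← Real.rpow_mul (by positivity), show 1 / α * α = 1 by field_simp, Real.rpow_one]
      field_simp
    have hae2 : ∀ᵐ x, r1 < ‖x‖ ∧ ‖x‖ < r2 → lo < u x →
        b x * ‖fderiv ℝ u x‖ ^ α + β * s ^ α ≤ q x * g (u x) + β * s ^ (α - p) * ‖fderiv ℝ u x‖ ^ p := by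
      filter_upwards [qg] with x hx h1 h2
      obtain ⟨e1, e2⟩ := hx h1 h2
      have := Sol.drift_pt e2 hβ hs0 (norm_nonneg (fderiv ℝ u x)) hα h.hα₂
      rw [es] at *
      linarith
    rcases h.multistep hc0 hc hr1 hr hβ0 hs0 hae2 hlo with h1 | h1
    · left
      rw [es, conv1] at h1
      exact weak1.trans h1
    · right
      refine weak2.trans ?_
      have e3 : s = (Q * G) ^ (1 / α) / (2 ^ (1 / α) * β ^ (1 / α)) := by
        rw [hs, Real.div_rpow (by positivity) (by positivity), Real.mul_rpow (by norm_num) hβ]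
      rw [e3] at h1
      have := mul_le_mul_of_nonneg_left h1 (by positivity : 0 ≤ β ^ (1 / α))
      refine le_trans (le_of_eq ?_) this
      rw [hk2]; field_simp


theorem ginf_le {g : ℝ → ℝ} {θ t m : ℝ} (hθ : 1 < θ) (ht : 0 < t) (g0 : ∀ t ∈ Set.Ici (0 : ℝ), 0 ≤ g t)
    {s : ℝ} (h1 : t / θ < s) (h2 : s < θ * t) (hm : g s ≤ m) : ginf g θ t ≤ m := by
  refine le_trans (csInf_le ⟨0, ?_⟩ ⟨s, ⟨h1, h2⟩, rfl⟩) hm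
  rintro _ ⟨x, hx, rfl⟩
  exact g0 x ((by positivity : 0 ≤ t / θ).trans hx.1.le)

theorem ginf_win {θ t : ℝ} (hθ : 1 < θ) (ht : 0 < t) : t / θ < t ∧ t < θ * t := by
  constructor
  · rw [div_lt_iff₀ (by linarith)]; nlinarith
  · nlinarith

theorem le_ginf {g : ℝ → ℝ} {θ t m : ℝ} (hθ : 1 < θ) (ht : 0 < t)
    (h : ∀ s, t / θ < s → s < θ * t → m ≤ g s) : m ≤ ginf g θ t := by
  refine le_csInf ⟨g t, ⟨t, ginf_win hθ ht, rfl⟩⟩ ?_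
  rintro _ ⟨x, hx, rfl⟩
  exact h x hx.1 hx.2

theorem g_lower {g : ℝ → ℝ} (gc : ContinuousOn g (Set.Ici 0)) (gp : ∀ t : ℝ, 0 < t → 0 < g t) {a b : ℝ} (ha : 0 < a) :
    ∃ m > 0, ∀ s ∈ Icc a b, m ≤ g s := by
  rcases (Icc a b).eq_empty_or_nonempty with h | h
  · exact ⟨1, one_pos, by simp [h]⟩
  obtain ⟨x, hx, hx2⟩ := isCompact_Icc.exists_isMinOn h
    (gc.mono (fun x hx => (ha.le.trans hx.1 : (0 : ℝ) ≤ x)))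
  exact ⟨g x, gp x (ha.trans_le hx.1), fun s hs => hx2 hs⟩

theorem ginf_lower {g : ℝ → ℝ} (gc : ContinuousOn g (Set.Ici 0)) (gp : ∀ t : ℝ, 0 < t → 0 < g t) {θ : ℝ}
    (hθ : 1 < θ) {a b : ℝ} (ha : 0 < a) :
    ∃ m > 0, ∀ t ∈ Icc a b, m ≤ ginf g θ t := by
  have h0 : 0 < θ := by linarith
  obtain ⟨m, hm, h⟩ := g_lower gc gp (a := a / θ) (b := θ * b) (by positivity)
  refine ⟨m, hm, fun t ht => le_ginf hθ (ha.trans_le ht.1) fun s h1 h2 => h s ⟨?_, ?_⟩⟩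
  · exact le_trans (by gcongr; exact ht.1) h1.le
  · exact h2.le.trans (by gcongr; exact ht.2)

theorem ginf_pos {g : ℝ → ℝ} (gc : ContinuousOn g (Set.Ici 0)) (gp : ∀ t : ℝ, 0 < t → 0 < g t) {θ : ℝ}
    (hθ : 1 < θ) {t : ℝ} (ht : 0 < t) : 0 < ginf g θ t := by
  obtain ⟨m, hm, h⟩ := ginf_lower gc gp hθ (b := t) ht
  exact hm.trans_le (h t ⟨le_rfl, le_rfl⟩)

theorem ginf_meas {g : ℝ → ℝ} (g0 : ∀ t ∈ Set.Ici (0 : ℝ), 0 ≤ g t) {θ : ℝ} (hθ : 1 < θ) {a b : ℝ} (ha : 0 < a) :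
    AEStronglyMeasurable (ginf g θ) (volume.restrict (Ioc a b)) := by
  have h0 : 0 < θ := by linarith
  have hm : Measurable (fun t => if 0 < t then ginf g θ t else 0) := by
    refine measurable_of_Iio fun c => ?_
    have : (fun t => if 0 < t then ginf g θ t else 0) ⁻¹' Iio c =
        (Ioi 0 ∩ ⋃ s ∈ {s | g s < c}, Ioo (s / θ) (θ * s)) ∪ (Iic 0 ∩ {t | (0 : ℝ) < c}) := by
      ext t
      simp only [mem_preimage, mem_Iio, mem_union, mem_inter_iff, mem_Ioi, mem_iUnion, mem_Ioo, mem_ofPred_eq, mem_Iic,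
        exists_prop]
      by_cases ht : 0 < t
      · have ht2 : ¬ t ≤ 0 := not_le.2 ht
        simp only [ht, ht2, if_true, true_and, false_and, or_false]
        constructor
        · intro h
          by_contra hcon
          push Not at hcon
          refine absurd (le_ginf (m := c) hθ ht fun s h1 h2 => ?_) (not_le.2 h)
          by_contra h3
          have := hcon s (not_le.1 h3) (by rw [div_lt_iff₀ h0]; linarith)
          rw [div_lt_iff₀ h0] at h1
          linarith
        · rintro ⟨s, h1, h2, h3⟩
          refine lt_of_le_of_lt (ginf_le hθ ht g0 (s := s) ?_ ?_ le_rfl) h1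
          · rw [div_lt_iff₀ h0]; linarith
          · rw [div_lt_iff₀ h0] at h2; linarith
      · have ht2 : t ≤ 0 := not_lt.1 ht
        simp [ht, ht2]
    rw [this]
    refine MeasurableSet.union (measurableSet_Ioi.inter (IsOpen.measurableSet ?_)) (measurableSet_Iic.inter (by simp))
    exact isOpen_biUnion fun s _ => isOpen_Ioo
  refine hm.aestronglyMeasurable.congr ?_
  filter_upwards [ae_restrict_mem measurableSet_Ioc] with t ht
  simp [ha.trans ht.1]

theorem ginf_int {g : ℝ → ℝ} (gc : ContinuousOn g (Set.Ici 0)) (g0 : ∀ t ∈ Set.Ici (0 : ℝ), 0 ≤ g t)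
    (gp : ∀ t : ℝ, 0 < t → 0 < g t) {θ : ℝ} (hθ : 1 < θ) {a b e : ℝ} (ha : 0 < a) (hab : a ≤ b) (he : 0 < e) :
    IntervalIntegrable (fun t => ginf g θ t ^ (-e)) volume a b ∧
    IntervalIntegrable (fun t => (ginf g θ t * t) ^ (-e)) volume a b := by
  obtain ⟨m, hm, h⟩ := ginf_lower gc gp hθ (b := b) ha
  rw [intervalIntegrable_iff_integrableOn_Ioc_of_le hab, intervalIntegrable_iff_integrableOn_Ioc_of_le hab]
  have hmeas := ginf_meas g0 hθ (b := b) ha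
  constructor
  · refine IntegrableOn.of_bound (C := m ^ (-e)) (by simp) ?_ ?_
    · exact (hmeas.aemeasurable.pow_const _).aestronglyMeasurable
    · filter_upwards [ae_restrict_mem measurableSet_Ioc] with t ht
      have h1 := h t ⟨ht.1.le, ht.2⟩
      rw [Real.norm_of_nonneg (Real.rpow_nonneg (hm.le.trans h1) _)]
      exact Real.rpow_le_rpow_of_nonpos hm h1 (by linarith)
  · refine IntegrableOn.of_bound (C := (m * a) ^ (-e)) (by simp) ?_ ?_
    · exact ((hmeas.aemeasurable.mul aemeasurable_id').pow_const _).aestronglyMeasurable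
    · filter_upwards [ae_restrict_mem measurableSet_Ioc] with t ht
      have h1 := h t ⟨ht.1.le, ht.2⟩
      have h2 : m * a ≤ ginf g θ t * t := mul_le_mul h1 ht.1.le ha.le (hm.le.trans h1)
      have h3 : 0 < m * a := by positivity
      rw [Real.norm_of_nonneg (Real.rpow_nonneg (h3.le.trans h2) _)]
      exact Real.rpow_le_rpow_of_nonpos h3 h2 (by linarith)

/-- Chaining along a geometric partition. -/
theorem geom_chain {P : ℝ → ℝ → Prop} {x0 l : ℝ} (hx0 : 0 < x0) (hl : 1 < l)
    (h1 : ∀ x y, x0 ≤ x → l * x ≤ y → y ≤ l ^ 2 * x → P x y)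
    (h2 : ∀ x y z, x0 ≤ x → x ≤ y → y ≤ z → P x y → P y z → P x z) :
    ∀ x y, x0 ≤ x → l * x ≤ y → P x y := by
  have key : ∀ N : ℕ, ∀ x y, x0 ≤ x → l * x ≤ y → y ≤ l ^ (N + 2) * x → P x y := by
    intro N
    induction N with
    | zero => intro x y hx hy hy2; exact h1 x y hx hy (by simpa using hy2)
    | succ N ih =>
      intro x y hx hy hy2
      rcases le_or_gt y (l ^ 2 * x) with h | h
      · exact h1 x y hx hy h
      · have hx' : 0 < x := hx0.trans_le hx
        have e1 : x ≤ l * x := by nlinarith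
        refine h2 x (l * x) y hx e1 hy (h1 x (l * x) hx le_rfl (by nlinarith [mul_pos (by linarith : 0 < l) hx'])) ?_
        refine ih (l * x) y (hx.trans e1) (by nlinarith) (hy2.trans (le_of_eq (by ring)))
  intro x y hx hy
  have hx' : 0 < x := hx0.trans_le hx
  obtain ⟨N, hN⟩ := pow_unbounded_of_one_lt (y / x) hl
  refine key N x y hx hy ?_
  rw [div_lt_iff₀ hx'] at hN
  refine hN.le.trans ?_
  gcongr
  · exact hl.le
  · omega


def W1 (g : ℝ → ℝ) (θ e x : ℝ) : ℝ := ∫ t in (1 : ℝ)..x, (ginf g θ t * t) ^ (-e)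
def W2 (g : ℝ → ℝ) (θ e x : ℝ) : ℝ := ∫ t in (1 : ℝ)..x, ginf g θ t ^ (-e)

structure GH (g : ℝ → ℝ) : Prop where
  gc : ContinuousOn g (Set.Ici 0)
  g0 : ∀ t ∈ Set.Ici (0 : ℝ), 0 ≤ g t
  gp : ∀ t : ℝ, 0 < t → 0 < g t

namespace GH
variable {g : ℝ → ℝ} {θ e x y : ℝ}

theorem ii1 (h : GH g) (hθ : 1 < θ) (he : 0 < e) (hx : 0 < x) (hy : 0 < y) :
    IntervalIntegrable (fun t => (ginf g θ t * t) ^ (-e)) volume x y := by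
  rcases le_total x y with h1 | h1
  · exact (ginf_int h.gc h.g0 h.gp hθ hx h1 he).2
  · exact (ginf_int h.gc h.g0 h.gp hθ hy h1 he).2.symm

theorem ii2 (h : GH g) (hθ : 1 < θ) (he : 0 < e) (hx : 0 < x) (hy : 0 < y) :
    IntervalIntegrable (fun t => ginf g θ t ^ (-e)) volume x y := by
  rcases le_total x y with h1 | h1
  · exact (ginf_int h.gc h.g0 h.gp hθ hx h1 he).1
  · exact (ginf_int h.gc h.g0 h.gp hθ hy h1 he).1.symm

theorem d1 (h : GH g) (hθ : 1 < θ) (he : 0 < e) (hx : 0 < x) (hy : 0 < y) :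
    W1 g θ e y - W1 g θ e x = ∫ t in x..y, (ginf g θ t * t) ^ (-e) :=
  intervalIntegral.integral_interval_sub_left (h.ii1 hθ he one_pos hy) (h.ii1 hθ he one_pos hx)

theorem d2 (h : GH g) (hθ : 1 < θ) (he : 0 < e) (hx : 0 < x) (hy : 0 < y) :
    W2 g θ e y - W2 g θ e x = ∫ t in x..y, ginf g θ t ^ (-e) :=
  intervalIntegral.integral_interval_sub_left (h.ii2 hθ he one_pos hy) (h.ii2 hθ he one_pos hx)

theorem lower1 (h : GH g) (hθ : 1 < θ) (he : 0 < e) (hx : 0 < x) (hxy : x ≤ y) {G : ℝ}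
    (hG : ∀ t ∈ Icc x y, ginf g θ t ≤ G) :
    (y - x) * (G * y) ^ (-e) ≤ W1 g θ e y - W1 g θ e x := by
  have hy : 0 < y := hx.trans_le hxy
  rw [h.d1 hθ he hx hy]
  have : (y - x) * (G * y) ^ (-e) = ∫ t in x..y, (G * y) ^ (-e) := by simp
  rw [this]
  refine intervalIntegral.integral_mono_on hxy (by simp) (h.ii1 hθ he hx hy) fun t ht => ?_
  have ht0 : 0 < t := hx.trans_le ht.1
  have h1 := ginf_pos h.gc h.gp hθ ht0
  exact Real.rpow_le_rpow_of_nonpos (by positivity)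
    (mul_le_mul (hG t ht) ht.2 ht0.le (h1.le.trans (hG t ht))) (by linarith)

theorem lower2 (h : GH g) (hθ : 1 < θ) (he : 0 < e) (hx : 0 < x) (hxy : x ≤ y) {G : ℝ}
    (hG : ∀ t ∈ Icc x y, ginf g θ t ≤ G) :
    (y - x) * G ^ (-e) ≤ W2 g θ e y - W2 g θ e x := by
  have hy : 0 < y := hx.trans_le hxy
  rw [h.d2 hθ he hx hy]
  have : (y - x) * G ^ (-e) = ∫ t in x..y, G ^ (-e) := by simp
  rw [this]
  refine intervalIntegral.integral_mono_on hxy (by simp) (h.ii2 hθ he hx hy) fun t ht => ?_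
  have ht0 : 0 < t := hx.trans_le ht.1
  have h1 := ginf_pos h.gc h.gp hθ ht0
  exact Real.rpow_le_rpow_of_nonpos (by positivity) (hG t ht) (by linarith)

theorem upper2 (h : GH g) (hθ : 1 < θ) (he : 0 < e) (hx : 0 < x) (hxy : x ≤ y) {G : ℝ} (hG0 : 0 < G)
    (hG : ∀ t ∈ Icc x y, G ≤ ginf g θ t) :
    W2 g θ e y - W2 g θ e x ≤ (y - x) * G ^ (-e) := by
  have hy : 0 < y := hx.trans_le hxy
  rw [h.d2 hθ he hx hy]
  have : (y - x) * G ^ (-e) = ∫ t in x..y, G ^ (-e) := by simp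
  rw [this]
  refine intervalIntegral.integral_mono_on hxy (h.ii2 hθ he hx hy) (by simp) fun t ht => ?_
  exact Real.rpow_le_rpow_of_nonpos hG0 (hG t ht) (by linarith)

theorem mono1 (h : GH g) (hθ : 1 < θ) (he : 0 < e) (hx : 0 < x) (hxy : x ≤ y) :
    W1 g θ e x ≤ W1 g θ e y := by
  have hy : 0 < y := hx.trans_le hxy
  rw [← sub_nonneg, h.d1 hθ he hx hy]
  refine intervalIntegral.integral_nonneg hxy fun t ht => ?_
  have ht0 : 0 < t := hx.trans_le ht.1
  have h1 := ginf_pos h.gc h.gp hθ ht0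
  positivity

theorem mono2 (h : GH g) (hθ : 1 < θ) (he : 0 < e) (hx : 0 < x) (hxy : x ≤ y) :
    W2 g θ e x ≤ W2 g θ e y := by
  have hy : 0 < y := hx.trans_le hxy
  rw [← sub_nonneg, h.d2 hθ he hx hy]
  refine intervalIntegral.integral_nonneg hxy fun t ht => ?_
  have ht0 : 0 < t := hx.trans_le ht.1
  have h1 := ginf_pos h.gc h.gp hθ ht0
  positivity

theorem compare_block (h : GH g) {p a l : ℝ} (hp : 1 < p) (ha : 1 < a) (hl : 1 < l) (hla : l ^ 2 ≤ a) (hx : 0 < x)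
    (h1 : l * x ≤ y) (h2 : y ≤ l ^ 2 * x) :
    W2 g a (1 / (p - 1)) y - W2 g a (1 / (p - 1)) x ≤
      (l / (l - 1)) ^ (1 / (p - 1)) *
        (W1 g (a ^ 2) (1 / p) y - W1 g (a ^ 2) (1 / p) x) ^ (p / (p - 1)) := by
  have hxy : x < y := by nlinarith
  have hy : 0 < y := hx.trans hxy
  have ha2 : 1 < a ^ 2 := by nlinarith
  have hp1 : 0 < p - 1 := by linarith
  have hl1 : 0 < l - 1 := by linarith
  set m := sInf (g '' Ioo (x / a) (a * y)) with hm
  have win : x / a < x ∧ y < a * y := ⟨(ginf_win ha hx).1, (ginf_win ha hy).2⟩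
  have hne : (g '' Ioo (x / a) (a * y)).Nonempty := ⟨g x, x, ⟨win.1, by linarith⟩, rfl⟩
  have hm0 : 0 < m := by
    obtain ⟨c, hc, hc2⟩ := g_lower h.gc h.gp (a := x / a) (b := a * y) (by positivity)
    refine hc.trans_le (le_csInf hne ?_)
    rintro _ ⟨s, hs, rfl⟩
    exact hc2 s ⟨hs.1.le, hs.2.le⟩
  have b1 : ∀ t ∈ Icc x y, m ≤ ginf g a t := by
    intro t ht
    refine le_ginf ha (hx.trans_le ht.1) fun s hs1 hs2 => csInf_le ⟨0, ?_⟩ ⟨s, ⟨?_, ?_⟩, rfl⟩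
    · rintro _ ⟨s, hs, rfl⟩
      exact h.g0 s ((by positivity : 0 ≤ x / a).trans hs.1.le)
    · exact lt_of_le_of_lt (by gcongr; exact ht.1) hs1
    · exact lt_of_lt_of_le hs2 (by gcongr; exact ht.2)
  have b2 : ∀ t ∈ Icc x y, ginf g (a ^ 2) t ≤ m := by
    intro t ht
    refine le_csInf hne ?_
    rintro _ ⟨s, hs, rfl⟩
    refine ginf_le ha2 (hx.trans_le ht.1) h.g0 (s := s) ?_ ?_ le_rfl
    · refine lt_of_le_of_lt ?_ hs.1
      rw [div_le_div_iff₀ (by positivity) (by positivity)]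
      have : t ≤ a * x := ht.2.trans (h2.trans (by gcongr))
      nlinarith
    · refine hs.2.trans_le ?_
      have : y ≤ a * x := h2.trans (by gcongr)
      have : x ≤ t := ht.1
      nlinarith [mul_le_mul_of_nonneg_left this (by positivity : 0 ≤ a ^ 2)]
  have u3 := h.upper2 ha (e := 1 / (p - 1)) (by positivity) hx hxy.le hm0 b1
  have l1 := h.lower1 ha2 (e := 1 / p) (by positivity) hx hxy.le b2
  have hd : 0 < y - x := by linarith
  have l1' := Real.rpow_le_rpow (by positivity) l1 (by positivity : 0 ≤ p / (p - 1))
  refine u3.trans (le_trans ?_ (mul_le_mul_of_nonneg_left l1' (by positivity)))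
  have e1 : ((y - x) * (m * y) ^ (-(1 / p))) ^ (p / (p - 1)) =
      (y - x) * (y - x) ^ (1 / (p - 1)) * (m ^ (-(1 / (p - 1))) * y ^ (-(1 / (p - 1)))) := by
    rw [Real.mul_rpow hd.le (by positivity), ← Real.rpow_mul (by positivity),
      show -(1 / p) * (p / (p - 1)) = -(1 / (p - 1)) by field_simp, Real.mul_rpow hm0.le hy.le,
      show p / (p - 1) = 1 + 1 / (p - 1) by field_simp; ring, Real.rpow_add hd, Real.rpow_one]
  rw [e1]
  have e2 : y ≤ l / (l - 1) * (y - x) := by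
    rw [div_mul_eq_mul_div, le_div_iff₀ hl1]; nlinarith
  have e3 : y ^ (1 / (p - 1)) ≤ (l / (l - 1)) ^ (1 / (p - 1)) * (y - x) ^ (1 / (p - 1)) := by
    rw [← Real.mul_rpow (by positivity) hd.le]
    exact Real.rpow_le_rpow hy.le e2 (by positivity)
  have e4 : y ^ (1 / (p - 1)) * y ^ (-(1 / (p - 1))) = 1 := by
    rw [← Real.rpow_add hy]; simp
  calc (y - x) * m ^ (-(1 / (p - 1))) = (y - x) * m ^ (-(1 / (p - 1))) * (y ^ (1 / (p - 1)) * y ^ (-(1 / (p - 1)))) := by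
        rw [e4, mul_one]
    _ ≤ (y - x) * m ^ (-(1 / (p - 1))) * (((l / (l - 1)) ^ (1 / (p - 1)) * (y - x) ^ (1 / (p - 1))) * y ^ (-(1 / (p - 1)))) := by
        gcongr
    _ = _ := by ring

theorem compare (h : GH g) {p a l : ℝ} (hp : 1 < p) (ha : 1 < a) (hl : 1 < l) (hla : l ^ 2 ≤ a) (hx : 0 < x)
    (h1 : l * x ≤ y) :
    W2 g a (1 / (p - 1)) y - W2 g a (1 / (p - 1)) x ≤
      (l / (l - 1)) ^ (1 / (p - 1)) *
        (W1 g (a ^ 2) (1 / p) y - W1 g (a ^ 2) (1 / p) x) ^ (p / (p - 1)) := by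
  have hp1 : 0 < p - 1 := by linarith
  have hl1 : 0 < l - 1 := by linarith
  have ha2 : 1 < a ^ 2 := by nlinarith
  refine geom_chain (P := fun x y => W2 g a (1 / (p - 1)) y - W2 g a (1 / (p - 1)) x ≤
      (l / (l - 1)) ^ (1 / (p - 1)) *
        (W1 g (a ^ 2) (1 / p) y - W1 g (a ^ 2) (1 / p) x) ^ (p / (p - 1))) hx hl ?_ ?_ x y le_rfl h1
  · intro z w hz h2 h3
    exact h.compare_block hp ha hl hla (hx.trans_le hz) h2 h3
  · intro z w v hz hzw hwv i1 i2
    have hz0 := hx.trans_le hz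
    have m1 := h.mono1 ha2 (e := 1 / p) (by positivity) hz0 hzw
    have m2 := h.mono1 ha2 (e := 1 / p) (by positivity) (hz0.trans_le hzw) hwv
    have := Real.add_rpow_le_rpow_add (sub_nonneg.2 m1) (sub_nonneg.2 m2)
      (show 1 ≤ p / (p - 1) by rw [le_div_iff₀ hp1]; linarith)
    rw [show W1 g (a ^ 2) (1 / p) w - W1 g (a ^ 2) (1 / p) z + (W1 g (a ^ 2) (1 / p) v - W1 g (a ^ 2) (1 / p) w) =
      W1 g (a ^ 2) (1 / p) v - W1 g (a ^ 2) (1 / p) z by ring] at this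
    have := mul_le_mul_of_nonneg_left this (by positivity : 0 ≤ (l / (l - 1)) ^ (1 / (p - 1)))
    linarith
end GH


theorem chain_abs {M Φ1 Φ2 Φ3 : ℝ → ℝ} {R R' p τ c1 c2 A D E C3 k : ℝ} (hp : 1 < p) (hτ : 1 < τ)
    (hRR : R ≤ R') (hM : MonotoneOn M (Icc R R')) (hMc : ContinuousOn M (Icc R R')) (hMR : 0 < M R)
    (m1 : MonotoneOn Φ1 (Ici (M R))) (m2 : MonotoneOn Φ2 (Ici (M R))) (m3 : MonotoneOn Φ3 (Ici (M R)))
    (hc1 : 0 < c1) (hc2 : 0 < c2) (hA : 0 < A) (hD : 0 < D) (hC3 : 0 < C3) (hk : 0 ≤ k)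
    (step : ∀ s1 s2, R ≤ s1 → s1 < s2 → s2 ≤ R' → M s2 ≤ τ * M s1 →
      c1 * A * (s2 - s1) ≤ (Φ3 (M s2) - Φ3 (M s1)) ^ ((p - 1) / p) ∨
      c2 * D * (s2 - s1) ≤ E * (Φ2 (M s2) - Φ2 (M s1)))
    (comp : ∀ x, M R ≤ x → Φ3 (τ * x) - Φ3 x ≤ C3 * (Φ1 (τ * x) - Φ1 x) ^ (p / (p - 1)))
    (hE : E * k ≤ D) :
    ∀ N : ℕ, ∀ s, R ≤ s → s ≤ R' → M R' ≤ τ ^ N * M s →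
      k * A * (R' - s) ≤ k / c1 * (C3 ^ ((p - 1) / p) * (Φ1 (M R') - Φ1 (M s)) +
        (Φ3 (M R') - Φ3 (M s)) ^ ((p - 1) / p)) + A / c2 * (Φ2 (M R') - Φ2 (M s)) := by
  have hp1 : 0 < p - 1 := by linarith
  have gM : ∀ s, R ≤ s → s ≤ R' → M R ≤ M s := fun s h1 h2 => hM ⟨le_rfl, hRR⟩ ⟨h1, h2⟩ h1
  have stepB : ∀ s1 s2, R ≤ s1 → s1 < s2 → s2 ≤ R' →
      c2 * D * (s2 - s1) ≤ E * (Φ2 (M s2) - Φ2 (M s1)) →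
      k * A * (s2 - s1) ≤ A / c2 * (Φ2 (M s2) - Φ2 (M s1)) := by
    intro s1 s2 h1 h2 h3 h4
    have hΔ : 0 ≤ Φ2 (M s2) - Φ2 (M s1) := sub_nonneg.2 (m2 (gM s1 h1 (by linarith)) (gM s2 (by linarith) h3)
      (hM ⟨h1, by linarith⟩ ⟨by linarith, h3⟩ h2.le))
    have h5 := mul_le_mul_of_nonneg_left h4 hk
    have h6 := mul_le_mul_of_nonneg_right hE hΔ
    have h7 : D * (c2 * k * (s2 - s1)) ≤ D * (Φ2 (M s2) - Φ2 (M s1)) := by linarith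
    have h8 := le_of_mul_le_mul_left h7 hD
    rw [div_mul_eq_mul_div, le_div_iff₀ hc2]
    have := mul_le_mul_of_nonneg_left h8 hA.le
    linarith
  have stepA : ∀ s1 s2, R ≤ s1 → s1 < s2 → s2 ≤ R' →
      c1 * A * (s2 - s1) ≤ (Φ3 (M s2) - Φ3 (M s1)) ^ ((p - 1) / p) →
      k * A * (s2 - s1) ≤ k / c1 * (Φ3 (M s2) - Φ3 (M s1)) ^ ((p - 1) / p) := by
    intro s1 s2 h1 h2 h3 h4
    rw [div_mul_eq_mul_div, le_div_iff₀ hc1]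
    have := mul_le_mul_of_nonneg_left h4 hk
    linarith
  have nn : ∀ s1 s2, R ≤ s1 → s1 ≤ s2 → s2 ≤ R' → 0 ≤ Φ1 (M s2) - Φ1 (M s1) ∧ 0 ≤ Φ2 (M s2) - Φ2 (M s1) ∧
      0 ≤ Φ3 (M s2) - Φ3 (M s1) := by
    intro s1 s2 h1 h2 h3
    have a1 := gM s1 h1 (by linarith)
    have a2 := gM s2 (by linarith) h3
    have a3 := hM ⟨h1, by linarith⟩ ⟨by linarith, h3⟩ h2
    exact ⟨sub_nonneg.2 (m1 a1 a2 a3), sub_nonneg.2 (m2 a1 a2 a3), sub_nonneg.2 (m3 a1 a2 a3)⟩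
  have short : ∀ s, R ≤ s → s ≤ R' → M R' ≤ τ * M s →
      k * A * (R' - s) ≤ k / c1 * (C3 ^ ((p - 1) / p) * (Φ1 (M R') - Φ1 (M s)) +
        (Φ3 (M R') - Φ3 (M s)) ^ ((p - 1) / p)) + A / c2 * (Φ2 (M R') - Φ2 (M s)) := by
    intro s h1 h2 h3
    obtain ⟨n1, n2, n3⟩ := nn s R' h1 h2 le_rfl
    have p1 : 0 ≤ k / c1 * (C3 ^ ((p - 1) / p) * (Φ1 (M R') - Φ1 (M s))) := by positivity
    have p2 : 0 ≤ A / c2 * (Φ2 (M R') - Φ2 (M s)) := by positivity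
    have p3 : 0 ≤ k / c1 * (Φ3 (M R') - Φ3 (M s)) ^ ((p - 1) / p) := by positivity
    rcases h2.eq_or_lt with h4 | h4
    · rw [mul_add]
      have : R' - s = 0 := by linarith
      rw [this, mul_zero]; linarith
    rw [mul_add]
    rcases step s R' h1 h4 le_rfl h3 with h5 | h5
    · have := stepA s R' h1 h4 le_rfl h5; linarith
    · have := stepB s R' h1 h4 le_rfl h5; linarith
  intro N
  induction N with
  | zero =>
    intro s h1 h2 h3
    refine short s h1 h2 ?_
    have := gM s h1 h2
    simp at h3
    nlinarith
  | succ N ih =>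
    intro s h1 h2 h3
    rcases le_or_gt (M R') (τ * M s) with h4 | h4
    · exact short s h1 h2 h4
    have hs0 : 0 < M s := hMR.trans_le (gM s h1 h2)
    have hsub : Icc s R' ⊆ Icc R R' := Icc_subset_Icc h1 le_rfl
    obtain ⟨s', hs', hs'2⟩ := intermediate_value_Icc h2 (hMc.mono hsub) (show τ * M s ∈ Icc (M s) (M R') from
      ⟨by nlinarith, h4.le⟩)
    have hlt : s < s' := by
      rcases hs'.1.eq_or_lt with h | h
      · exfalso; rw [← h] at hs'2; nlinarith
      · exact h
    have IH := ih s' (h1.trans hs'.1) hs'.2 (by rw [hs'2]; refine h3.trans (le_of_eq (by ring)))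
    obtain ⟨n1, n2, n3⟩ := nn s s' h1 hs'.1 hs'.2
    obtain ⟨n1', n2', n3'⟩ := nn s' R' (h1.trans hs'.1) hs'.2 le_rfl
    have cA : (Φ3 (M s') - Φ3 (M s)) ^ ((p - 1) / p) ≤ C3 ^ ((p - 1) / p) * (Φ1 (M s') - Φ1 (M s)) := by
      have := comp (M s) (gM s h1 h2)
      rw [← hs'2] at this
      have := Real.rpow_le_rpow n3 this (by positivity : 0 ≤ (p - 1) / p)
      rwa [Real.mul_rpow hC3.le (by positivity), ← Real.rpow_mul n1,
        show p / (p - 1) * ((p - 1) / p) = 1 by field_simp, Real.rpow_one] at this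
    have cS : (Φ3 (M R') - Φ3 (M s')) ^ ((p - 1) / p) ≤ (Φ3 (M R') - Φ3 (M s)) ^ ((p - 1) / p) :=
      Real.rpow_le_rpow n3' (by linarith) (by positivity)
    have kc : 0 ≤ k / c1 := by positivity
    have cS' := mul_le_mul_of_nonneg_left cS kc
    have key : k * A * (s' - s) ≤ k / c1 * (C3 ^ ((p - 1) / p) * (Φ1 (M s') - Φ1 (M s))) +
        A / c2 * (Φ2 (M s') - Φ2 (M s)) := by
      have p1 : 0 ≤ k / c1 * (C3 ^ ((p - 1) / p) * (Φ1 (M s') - Φ1 (M s))) := by positivity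
      have p2 : 0 ≤ A / c2 * (Φ2 (M s') - Φ2 (M s)) := by positivity
      rcases step s s' h1 hlt hs'.2 hs'2.le with h5 | h5
      · have := stepA s s' h1 hlt hs'.2 h5
        have := mul_le_mul_of_nonneg_left cA kc
        linarith
      · have := stepB s s' h1 hlt hs'.2 h5; linarith
    linarith

theorem block_abs {M Φ1 Φ2 Φ3 : ℝ → ℝ} {R R' p τ c1 c2 A D E C3 C' k : ℝ} (hp : 1 < p) (hτ : 1 < τ)
    (hRR : R < R') (hM : MonotoneOn M (Icc R R')) (hMc : ContinuousOn M (Icc R R')) (hMR : 0 < M R)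
    (m1 : MonotoneOn Φ1 (Ici (M R))) (m2 : MonotoneOn Φ2 (Ici (M R))) (m3 : MonotoneOn Φ3 (Ici (M R)))
    (hc1 : 0 < c1) (hc2 : 0 < c2) (hA : 0 < A) (hD : 0 < D) (hC3 : 0 < C3) (hC' : 0 < C') (hk : 0 ≤ k)
    (step : ∀ s1 s2, R ≤ s1 → s1 < s2 → s2 ≤ R' → M s2 ≤ τ * M s1 →
      c1 * A * (s2 - s1) ≤ (Φ3 (M s2) - Φ3 (M s1)) ^ ((p - 1) / p) ∨
      c2 * D * (s2 - s1) ≤ E * (Φ2 (M s2) - Φ2 (M s1)))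
    (comp : ∀ x, M R ≤ x → Φ3 (τ * x) - Φ3 x ≤ C3 * (Φ1 (τ * x) - Φ1 x) ^ (p / (p - 1)))
    (hE : E * k ≤ D) (hkA : k ^ (p - 1) ≤ C' * (R' - R) * A ^ p) :
    k * (R' - R) ≤ 2 / c2 * (Φ2 (M R') - Φ2 (M R)) + C' ^ (1 / (p - 1)) * (4 / c1) ^ (p / (p - 1)) *
      (C3 * (Φ1 (M R') - Φ1 (M R)) ^ (p / (p - 1)) + (Φ3 (M R') - Φ3 (M R))) := by
  have hp1 : 0 < p - 1 := by linarith
  have hMRR : M R ≤ M R' := hM ⟨le_rfl, hRR.le⟩ ⟨hRR.le, le_rfl⟩ hRR.le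
  have n1 := sub_nonneg.2 (m1 (mem_Ici.2 le_rfl) hMRR hMRR)
  have n2 := sub_nonneg.2 (m2 (mem_Ici.2 le_rfl) hMRR hMRR)
  have n3 := sub_nonneg.2 (m3 (mem_Ici.2 le_rfl) hMRR hMRR)
  obtain ⟨N, hN⟩ := pow_unbounded_of_one_lt (M R' / M R) hτ
  rw [div_lt_iff₀ hMR] at hN
  have main := chain_abs hp hτ hRR.le hM hMc hMR m1 m2 m3 hc1 hc2 hA hD hC3 hk step comp hE N R le_rfl hRR.le hN.le
  set d1 := Φ1 (M R') - Φ1 (M R)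
  set d2 := Φ2 (M R') - Φ2 (M R)
  set d3 := Φ3 (M R') - Φ3 (M R)
  set L := R' - R
  have hL : 0 < L := sub_pos.2 hRR
  set X1 := C3 ^ ((p - 1) / p) * d1
  set X3 := d3 ^ ((p - 1) / p)
  have hX1 : 0 ≤ X1 := by positivity
  have hX3 : 0 ≤ X3 := by positivity
  have t1 : 0 ≤ 2 / c2 * d2 := by positivity
  have t2 : 0 ≤ C' ^ (1 / (p - 1)) * (4 / c1) ^ (p / (p - 1)) * (C3 * d1 ^ (p / (p - 1)) + d3) := by positivity
  rcases hk.eq_or_lt with hk0 | hk0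
  · rw [← hk0, zero_mul]; linarith
  rcases le_total (k / c1 * (X1 + X3)) (A / c2 * d2) with h | h
  · have : A * (k * L) ≤ A * (2 / c2 * d2) := by
      have : A * (2 / c2 * d2) = 2 * (A / c2 * d2) := by ring
      linarith
    have := le_of_mul_le_mul_left this hA
    linarith
  · have h1 : k * (A * L) ≤ k * (2 / c1 * (X1 + X3)) := by
      have : k * (2 / c1 * (X1 + X3)) = 2 * (k / c1 * (X1 + X3)) := by ring
      linarith
    have h1 := le_of_mul_le_mul_left h1 hk0
    have h2 : A * L ≤ 4 / c1 * max X1 X3 := by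
      have e1 := le_max_left X1 X3
      have e2 := le_max_right X1 X3
      have : 2 / c1 * (X1 + X3) ≤ 2 / c1 * (2 * max X1 X3) := by gcongr; linarith
      have e3 : 2 / c1 * (2 * max X1 X3) = 4 / c1 * max X1 X3 := by ring
      linarith
    have hmx : 0 ≤ max X1 X3 := hX1.trans (le_max_left _ _)
    have h3 : (k * L) ^ (p - 1) ≤ C' * (4 / c1 * max X1 X3) ^ p := by
      calc (k * L) ^ (p - 1) = k ^ (p - 1) * L ^ (p - 1) := Real.mul_rpow hk hL.le
        _ ≤ C' * L * A ^ p * L ^ (p - 1) := by gcongr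
        _ = C' * (A * L) ^ p := by
            rw [Real.mul_rpow hA.le hL.le, show L ^ p = L * L ^ (p - 1) by
              rw [← Real.rpow_one_add' hL.le (by linarith)]; congr 1; ring]
            ring
        _ ≤ _ := by gcongr
    have h4 := Real.rpow_le_rpow (by positivity) h3 (by positivity : 0 ≤ 1 / (p - 1))
    rw [← Real.rpow_mul (by positivity), show (p - 1) * (1 / (p - 1)) = 1 by field_simp, Real.rpow_one,
      Real.mul_rpow hC'.le (by positivity), ← Real.rpow_mul (by positivity), show p * (1 / (p - 1)) = p / (p - 1) by ring,
      Real.mul_rpow (by positivity) hmx] at h4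
    have h5 : max X1 X3 ^ (p / (p - 1)) ≤ C3 * d1 ^ (p / (p - 1)) + d3 := by
      have e0 : (p - 1) / p * (p / (p - 1)) = 1 := by field_simp
      rcases max_choice X1 X3 with hm | hm
      · rw [hm, Real.mul_rpow (by positivity) n1, ← Real.rpow_mul hC3.le, e0, Real.rpow_one]; linarith
      · rw [hm, ← Real.rpow_mul n3, e0, Real.rpow_one]
        have : 0 ≤ C3 * d1 ^ (p / (p - 1)) := by positivity
        linarith
    have h6 : C' ^ (1 / (p - 1)) * ((4 / c1) ^ (p / (p - 1)) * max X1 X3 ^ (p / (p - 1))) ≤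
        C' ^ (1 / (p - 1)) * ((4 / c1) ^ (p / (p - 1)) * (C3 * d1 ^ (p / (p - 1)) + d3)) := by gcongr
    linarith


theorem step_W (n : ℕ) (hn : 2 ≤ n) (p C₁ C₂ α a l : ℝ) (hp : 1 < p) (hC₁ : 0 < C₁) (hC₂ : 0 < C₂)
    (hα : 0 < α) (ha : 1 < a) (hl : 1 < l) (hla : l ^ 2 * (a + 1) < 2 * a) :
    ∃ c1 > 0, ∃ c2 > 0, ∀ {A : Euc n → Euc n → Euc n} {b q : Euc n → ℝ} {g : ℝ → ℝ} {u : Euc n → ℝ},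
      Sol p C₁ C₂ α A b q g u → ∀ {r1 r2 Q β : ℝ}, 0 < r1 → r1 < r2 → 0 < Q → 0 ≤ β → 0 < sphMax u r1 →
      (∀ᵐ x : Euc n, r1 < ‖x‖ ∧ ‖x‖ < r2 → Q ≤ q x ∧ b x ≤ β) →
      sphMax u r2 ≤ l ^ 2 * sphMax u r1 →
      c1 * Q ^ (1 / p) * (r2 - r1) ≤
        (W2 g a (1 / (p - 1)) (sphMax u r2) - W2 g a (1 / (p - 1)) (sphMax u r1)) ^ ((p - 1) / p) ∨
      c2 * Q ^ (1 / α) * (r2 - r1) ≤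
        β ^ (1 / α) * (W2 g (a ^ 2) (1 / α) (sphMax u r2) - W2 g (a ^ 2) (1 / α) (sphMax u r1)) := by
  obtain ⟨c, hc, hstep⟩ := step_est n hn p C₁ C₂ α hp hC₁ hC₂ hα
  refine ⟨c ^ (1 / p), by positivity, c, hc, ?_⟩
  intro A b q g u h r1 r2 Q β hr1 hr hQ hβ hM1 hae hM2
  have hp1 : 0 < p - 1 := by linarith
  have hGH : GH g := ⟨h.gc, h.g0, h.gp⟩
  have hmono := h.M_mono hr1 hr.le
  set M1 := sphMax u r1
  set M2 := sphMax u r2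
  have ha0 : 0 < a := by linarith
  have hl2 : 1 < l ^ 2 := by nlinarith
  have hl2a : l ^ 2 < a := by nlinarith
  set lo := l ^ 2 * M1 / a with hlo
  have hlo0 : 0 < lo := by positivity
  have hlo1 : lo < 2 * M1 - M2 := by
    have : lo < (2 - l ^ 2) * M1 := by
      rw [hlo, div_lt_iff₀ ha0]
      nlinarith [mul_lt_mul_of_pos_right hla hM1]
    nlinarith
  have hloM : lo < M2 := by linarith
  set G := sInf (g '' Ioc lo M2) with hG
  have hne : (g '' Ioc lo M2).Nonempty := ⟨g M2, M2, ⟨hloM, le_rfl⟩, rfl⟩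
  have hG0 : 0 < G := by
    obtain ⟨m, hm, hm2⟩ := g_lower h.gc h.gp (a := lo) (b := M2) hlo0
    refine hm.trans_le (le_csInf hne ?_)
    rintro _ ⟨s, hs, rfl⟩
    exact hm2 s ⟨hs.1.le, hs.2⟩
  have hGg : ∀ t, lo < t → t ≤ M2 → G ≤ g t := by
    intro t h1 h2
    refine csInf_le ⟨0, ?_⟩ ⟨t, ⟨h1, h2⟩, rfl⟩
    rintro _ ⟨s, hs, rfl⟩
    exact h.g0 s (hlo0.le.trans hs.1.le)
  have bnd : ∀ a', a ≤ a' → ∀ t ∈ Icc M1 M2, ginf g a' t ≤ G := by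
    intro a' haa t ht
    have ht0 : 0 < t := hM1.trans_le ht.1
    refine le_csInf hne ?_
    rintro _ ⟨s, hs, rfl⟩
    refine ginf_le (ha.trans_le haa) ht0 h.g0 (s := s) ?_ ?_ le_rfl
    · refine lt_of_le_of_lt ?_ hs.1
      rw [hlo]
      have : t ≤ l ^ 2 * M1 := ht.2.trans hM2
      gcongr
    · refine hs.2.trans_lt (hM2.trans_lt ?_)
      have : M1 ≤ t := ht.1
      calc l ^ 2 * M1 < a * M1 := by gcongr
        _ ≤ a' * t := by have : 0 < a' := by linarith
                         gcongr
  have hd : 0 < r2 - r1 := by linarith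
  have hD : 0 ≤ M2 - M1 := by linarith
  rcases hstep h hr1 hr hQ hβ hG0 hae hGg hlo1 with h1 | h1
  · left
    have l3 := hGH.lower2 ha (e := 1 / (p - 1)) (by positivity) hM1 hmono (bnd a le_rfl)
    have l3' := Real.rpow_le_rpow (by positivity) l3 (by positivity : 0 ≤ (p - 1) / p)
    refine le_trans ?_ l3'
    have h2 : c * Q * (r2 - r1) ^ p ≤ (M2 - M1) ^ (p - 1) * G⁻¹ := by
      rw [← div_eq_mul_inv, le_div_iff₀ hG0]; linarith
    have h3 := Real.rpow_le_rpow (by positivity) h2 (by positivity : 0 ≤ 1 / p)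
    rw [Real.mul_rpow (by positivity) (by positivity), Real.mul_rpow (by positivity) (by positivity),
      Real.mul_rpow (by positivity) (by positivity), ← Real.rpow_mul hd.le, ← Real.rpow_mul hD,
      show p * (1 / p) = 1 by field_simp, Real.rpow_one] at h3
    refine h3.trans (le_of_eq ?_)
    rw [Real.mul_rpow hD (by positivity), ← Real.rpow_mul hG0.le, ← Real.rpow_neg_one, ← Real.rpow_mul hG0.le]
    congr 2
    · ring
    · field_simp
  · right
    have l2 := hGH.lower2 (by nlinarith : 1 < a ^ 2) (e := 1 / α) (by positivity) hM1 hmono (bnd (a ^ 2) (by nlinarith))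
    refine le_trans ?_ (mul_le_mul_of_nonneg_left l2 (by positivity))
    rw [Real.mul_rpow hQ.le hG0.le] at h1
    rw [Real.rpow_neg hG0.le, ← mul_assoc, ← div_eq_mul_inv, le_div_iff₀ (by positivity)]
    linarith

namespace Sol
variable {n : ℕ} {p C₁ C₂ α : ℝ} {A : Euc n → Euc n → Euc n} {b q : Euc n → ℝ} {g : ℝ → ℝ}
    {u : Euc n → ℝ}

theorem ann_bdd (r s : ℝ) : Ann n r s ⊆ closedBall 0 s := fun x hx => by simpa using hx.2.le

theorem qinf_le (h : Sol p C₁ C₂ α A b q g u) (r s : ℝ) :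
    ∀ᵐ x ∂(volume.restrict (Ann n r s)), essInf q (volume.restrict (Ann n r s)) ≤ q x :=
  ae_essInf_le (isBoundedUnder_of ⟨0, fun x => h.q0 x⟩)

theorem ann_meas (r s : ℝ) : MeasurableSet (Ann n r s) :=
  (measurableSet_lt measurable_const measurable_norm).inter (measurableSet_lt measurable_norm measurable_const)

theorem bsup_ge (h : Sol p C₁ C₂ α A b q g u) {e : ℝ} (he : 0 ≤ e) (r s : ℝ) :
    ∀ᵐ x ∂(volume.restrict (Ann n r s)), b x ^ e ≤ essSup (fun x => b x ^ e) (volume.restrict (Ann n r s)) := by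
  obtain ⟨C, hC⟩ := h.bl _ (isCompact_closedBall (0 : Euc n) s)
  refine ae_le_essSup (f := fun x => b x ^ e) ⟨C ^ e, ?_⟩
  simp only [eventually_map]
  filter_upwards [ae_restrict_mem (ann_meas r s)] with x hx
  exact Real.rpow_le_rpow (h.b0 x) (hC x (ann_bdd r s hx)) he

theorem ann_ne (h : Sol p C₁ C₂ α A b q g u) {r s : ℝ} (hr : 0 < r) (hrs : r < s) :
    volume (Ann n r s) ≠ 0 := by
  have : Nontrivial (Euc n) := by
    have : Nonempty (Fin n) := ⟨⟨0, by have := h.hn; omega⟩⟩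
    infer_instance
  have ho : IsOpen (Ann n r s) := (isOpen_lt continuous_const continuous_norm).inter (isOpen_lt continuous_norm continuous_const)
  obtain ⟨z, hz⟩ := (NormedSpace.sphere_nonempty (x := (0 : Euc n)) (r := (r + s) / 2)).2 (by linarith)
  have hz' : ‖z‖ = (r + s) / 2 := by simpa using hz
  exact (ho.measure_pos volume ⟨z, by constructor <;> rw [hz'] <;> linarith⟩).ne'

theorem ann_ex (h : Sol p C₁ C₂ α A b q g u) {r s : ℝ} (hr : 0 < r) (hrs : r < s) {P : Euc n → Prop}
    (hP : ∀ᵐ x ∂(volume.restrict (Ann n r s)), P x) : ∃ x ∈ Ann n r s, P x := by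
  have : NeBot (ae (volume.restrict (Ann n r s))) := by
    rw [ae_neBot, Ne, Measure.restrict_eq_zero]; exact h.ann_ne hr hrs
  obtain ⟨x, h1, h2⟩ := ((ae_restrict_mem (ann_meas r s)).and hP).exists
  exact ⟨x, h1, h2⟩

theorem qinf_nonneg (h : Sol p C₁ C₂ α A b q g u) {σ r : ℝ} (hσ : 1 < σ) (hr : 0 < r) : 0 ≤ qinf q σ r := by
  unfold qinf
  have w := ginf_win hσ hr
  have hw : r / σ < σ * r := w.1.trans w.2
  obtain ⟨C, hC⟩ := h.ql _ (isCompact_closedBall (0 : Euc n) (σ * r))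
  refine le_csSup ⟨C, ?_⟩ ?_
  · intro y hy
    obtain ⟨x, hx, hx2⟩ := h.ann_ex (by positivity) hw (P := fun x => y ≤ q x) (by simpa using hy)
    exact hx2.trans (hC x (ann_bdd _ _ hx))
  · simpa using Eventually.of_forall h.q0

theorem qinf_bdd (h : Sol p C₁ C₂ α A b q g u) {σ : ℝ} (hσ : 1 < σ) (R : ℝ) :
    ∃ C > 0, ∀ r, 0 < r → r ≤ R → qinf q σ r ≤ C := by
  obtain ⟨C, hC⟩ := h.ql _ (isCompact_closedBall (0 : Euc n) (σ * R))
  refine ⟨max C 1, by positivity, fun r hr hrR => ?_⟩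
  have w := ginf_win hσ hr
  obtain ⟨x, hx, hx2⟩ := h.ann_ex (by positivity) (w.1.trans w.2) (h.qinf_le (r / σ) (σ * r))
  refine le_trans hx2 (le_trans (hC x ?_) (le_max_left _ _))
  refine closedBall_subset_closedBall ?_ (ann_bdd _ _ hx)
  gcongr

theorem bsup_nonneg (h : Sol p C₁ C₂ α A b q g u) {σ r e : ℝ} (he : 0 ≤ e) (hσ : 1 < σ) (hr : 0 < r) :
    0 ≤ essSup (fun x => b x ^ e) (volume.restrict (Ann n (r / σ) (σ * r))) := by
  have w := ginf_win hσ hr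
  obtain ⟨x, hx, hx2⟩ := h.ann_ex (by positivity) (w.1.trans w.2) (h.bsup_ge he (r / σ) (σ * r))
  exact le_trans (Real.rpow_nonneg (h.b0 x) _) hx2

/-- Pointwise facts about `f_σ`. -/
theorem f_facts (h : Sol p C₁ C₂ α A b q g u) {σ r : ℝ} (hσ : 1 < σ) (hr : 0 < r) :
    0 ≤ (r * fdef q b p α σ r) ^ (1 / (p - 1)) ∧
    ((r * fdef q b p α σ r) ^ (1 / (p - 1))) ^ (p - 1) ≤ r * qinf q σ r ∧
    ∃ β, 0 ≤ β ∧ (∀ᵐ x : Euc n, r / σ < ‖x‖ ∧ ‖x‖ < σ * r → qinf q σ r ≤ q x ∧ b x ≤ β) ∧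
      β ^ (1 / α) * (r * fdef q b p α σ r) ^ (1 / (p - 1)) ≤ qinf q σ r ^ (1 / α) := by
  have hp := h.hp
  have hα := h.α_pos
  have hp1 : 0 < p - 1 := by linarith
  have he : 0 ≤ (p - 1) / α := by positivity
  have hQ := h.qinf_nonneg hσ hr
  have hE := h.bsup_nonneg he hσ hr
  have ae1 := (ae_restrict_iff' (ann_meas _ _)).1 (h.qinf_le (r / σ) (σ * r))
  have ae2 := (ae_restrict_iff' (ann_meas _ _)).1 (h.bsup_ge he (r / σ) (σ * r))
  unfold fdef
  have hqd : essInf q (volume.restrict (Ann n (r / σ) (σ * r))) = qinf q σ r := rfl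
  rw [hqd] at ae1
  set E := essSup (fun x => b x ^ ((p - 1) / α)) (volume.restrict (Ann n (r / σ) (σ * r)))
  set Q := qinf q σ r
  set z := r * Q ^ ((α - p + 1) / α) * E with hz
  have hz0 : 0 ≤ z := by positivity
  have hf0 : 0 ≤ r * (Q / (1 + z)) := by positivity
  refine ⟨by positivity, ?_, E ^ (α / (p - 1)), by positivity, ?_, ?_⟩
  · rw [← Real.rpow_mul hf0, show 1 / (p - 1) * (p - 1) = 1 by field_simp, Real.rpow_one]
    gcongr
    exact div_le_self hQ (by linarith)
  · filter_upwards [ae1, ae2] with x h1 h2 hx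
    refine ⟨h1 hx, ?_⟩
    have h3 := Real.rpow_le_rpow (by have := h.b0 x; positivity) (h2 hx) (by positivity : 0 ≤ α / (p - 1))
    rwa [← Real.rpow_mul (h.b0 x), show (p - 1) / α * (α / (p - 1)) = 1 by field_simp, Real.rpow_one] at h3
  · rw [← Real.rpow_mul hE, show α / (p - 1) * (1 / α) = 1 / (p - 1) by field_simp,
      ← Real.mul_rpow hE hf0]
    have key : E * (r * (Q / (1 + z))) ≤ Q ^ ((p - 1) / α) := by
      rcases hQ.eq_or_lt with h0 | h0
      · rw [← h0]; simp; positivity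
      have : Q = Q ^ ((p - 1) / α) * Q ^ ((α - p + 1) / α) := by
        rw [← Real.rpow_add h0, show (p - 1) / α + (α - p + 1) / α = 1 by field_simp; ring, Real.rpow_one]
      have e1 : E * (r * (Q / (1 + z))) = (E * r * Q) / (1 + z) := by ring
      rw [e1, div_le_iff₀ (by linarith)]
      have e2 : E * r * Q = Q ^ ((p - 1) / α) * z := by
        rw [hz]; nth_rewrite 1 [this]; ring
      rw [e2]
      have : 0 ≤ Q ^ ((p - 1) / α) := by positivity
      nlinarith
    have h4 := Real.rpow_le_rpow (by positivity) key (by positivity : 0 ≤ 1 / (p - 1))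
    rwa [← Real.rpow_mul hQ, show (p - 1) / α * (1 / (p - 1)) = 1 / α by field_simp] at h4

end Sol


/-- The total increment functional. -/
def SS (g : ℝ → ℝ) (a p α x y : ℝ) : ℝ :=
  (W1 g (a ^ 2) (1 / p) y - W1 g (a ^ 2) (1 / p) x) ^ (p / (p - 1)) +
    (W2 g (a ^ 2) (1 / α) y - W2 g (a ^ 2) (1 / α) x) +
    (W2 g a (1 / (p - 1)) y - W2 g a (1 / (p - 1)) x)

set_option maxHeartbeats 1000000 in
theorem block_sol (n : ℕ) (hn : 2 ≤ n) (p C₁ C₂ α a l k : ℝ) (hp : 1 < p) (hC₁ : 0 < C₁) (hC₂ : 0 < C₂)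
    (hα : 0 < α) (ha : 1 < a) (hl : 1 < l) (hla : l ^ 2 * (a + 1) < 2 * a) (hk : 1 < k) :
    ∃ C0 > 0, ∀ {A : Euc n → Euc n → Euc n} {b q : Euc n → ℝ} {g : ℝ → ℝ} {u : Euc n → ℝ},
      Sol p C₁ C₂ α A b q g u → ∀ {R R' : ℝ}, 0 < R → k * R ≤ R' → R' ≤ k ^ 2 * R → 0 < sphMax u R →
      ∀ ξ ∈ Ioc R R', (ξ * fdef q b p α (k ^ 2) ξ) ^ (1 / (p - 1)) * (R' - R) ≤
        C0 * SS g a p α (sphMax u R) (sphMax u R') := by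
  obtain ⟨c1, hc1, c2, hc2, hstep⟩ := step_W n hn p C₁ C₂ α a l hp hC₁ hC₂ hα ha hl hla
  have hp1 : 0 < p - 1 := by linarith
  have hl1 : 0 < l - 1 := by linarith
  have hk1 : 0 < k - 1 := by linarith
  have ha2 : 1 < a ^ 2 := by nlinarith
  have hla' : l ^ 2 ≤ a := by nlinarith
  set C' := k / (k - 1) with hC'd
  have hC' : 0 < C' := by positivity
  set C3 := (l / (l - 1)) ^ (1 / (p - 1)) with hC3d
  have hC3 : 0 < C3 := by positivity
  set B := C' ^ (1 / (p - 1)) * (4 / c1) ^ (p / (p - 1)) with hB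
  have hB0 : 0 < B := by positivity
  refine ⟨2 / c2 + B * C3 + B, by positivity, ?_⟩
  intro A b q g u h R R' hR h1 h2 hM ξ hξ
  have hRR : R < R' := by nlinarith
  have hk2 : 1 < k ^ 2 := by nlinarith
  have hξ0 : 0 < ξ := hR.trans hξ.1
  have hGH : GH g := ⟨h.gc, h.g0, h.gp⟩
  have m1 : MonotoneOn (W1 g (a ^ 2) (1 / p)) (Ici (sphMax u R)) :=
    fun x hx y hy hxy => hGH.mono1 ha2 (by positivity) (hM.trans_le hx) hxy
  have m2 : MonotoneOn (W2 g (a ^ 2) (1 / α)) (Ici (sphMax u R)) :=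
    fun x hx y hy hxy => hGH.mono2 ha2 (by positivity) (hM.trans_le hx) hxy
  have m3 : MonotoneOn (W2 g a (1 / (p - 1))) (Ici (sphMax u R)) :=
    fun x hx y hy hxy => hGH.mono2 ha (by positivity) (hM.trans_le hx) hxy
  have hMm := h.M_mono hR hRR.le
  have n1 := sub_nonneg.2 (m1 (mem_Ici.2 le_rfl) hMm hMm)
  have n2 := sub_nonneg.2 (m2 (mem_Ici.2 le_rfl) hMm hMm)
  have n3 := sub_nonneg.2 (m3 (mem_Ici.2 le_rfl) hMm hMm)
  obtain ⟨f0, f1, β, hβ, fae, f2⟩ := h.f_facts hk2 hξ0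
  have hQ := h.qinf_nonneg hk2 hξ0
  set ψ := (ξ * fdef q b p α (k ^ 2) ξ) ^ (1 / (p - 1))
  set Q := qinf q (k ^ 2) ξ
  have n1' := Real.rpow_nonneg n1 (p / (p - 1))
  unfold SS
  rcases hQ.eq_or_lt with h0 | h0
  · have : ψ = 0 := by
      by_contra hne
      have hpos : 0 < ψ := lt_of_le_of_ne f0 (Ne.symm hne)
      have := Real.rpow_pos_of_pos hpos (p - 1)
      rw [← h0, mul_zero] at f1
      linarith
    rw [this, zero_mul]
    positivity
  have hae : ∀ s1 s2, R ≤ s1 → s2 ≤ R' → ∀ᵐ x : Euc n, s1 < ‖x‖ ∧ ‖x‖ < s2 → Q ≤ q x ∧ b x ≤ β := by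
    intro s1 s2 e1 e2
    filter_upwards [fae] with x hx hxs
    refine hx ⟨?_, ?_⟩
    · refine lt_of_le_of_lt ?_ hxs.1
      rw [div_le_iff₀ (by positivity)]
      have := hξ.2
      nlinarith
    · refine hxs.2.trans_le (e2.trans (h2.trans ?_))
      have := hξ.1
      gcongr
  have main := block_abs (M := sphMax u) (Φ1 := W1 g (a ^ 2) (1 / p)) (Φ2 := W2 g (a ^ 2) (1 / α))
    (Φ3 := W2 g a (1 / (p - 1))) (R := R) (R' := R') (p := p) (τ := l ^ 2) (c1 := c1) (c2 := c2)
    (A := Q ^ (1 / p)) (D := Q ^ (1 / α)) (E := β ^ (1 / α)) (C3 := C3) (C' := C') (k := ψ) hp (by nlinarith) hRR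
    (fun x hx y hy hxy => h.M_mono (hR.trans_le hx.1) hxy)
    (h.M_cont.mono fun x hx => mem_Ioi.2 (hR.trans_le hx.1)) hM m1 m2 m3 hc1 hc2 (by positivity) (by positivity) hC3 hC' f0
    (fun s1 s2 e1 e2 e3 e4 => hstep h (hR.trans_le e1) e2 h0 hβ (hM.trans_le (h.M_mono hR e1)) (hae s1 s2 e1 e3) e4)
    (fun x hx => hGH.compare hp ha hl hla' (hM.trans_le hx) (by have := hM.trans_le hx; nlinarith [mul_pos hl1 this]))
    f2 ?_
  · have e1 : 0 ≤ B * C3 := by positivity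
    have e2 : 0 ≤ 2 / c2 := by positivity
    refine main.trans ?_
    have x1 := mul_nonneg e2 n1'
    have x2 := mul_nonneg e2 n3
    have x3 := mul_nonneg e1 n2
    have x4 := mul_nonneg e1 n3
    have x5 := mul_nonneg hB0.le n1'
    have x6 := mul_nonneg hB0.le n2
    linarith
  · rw [← Real.rpow_mul h0.le, show 1 / p * p = 1 by field_simp, Real.rpow_one]
    refine f1.trans ?_
    have : ξ ≤ C' * (R' - R) := by
      refine hξ.2.trans ?_
      rw [hC'd, div_mul_eq_mul_div, le_div_iff₀ hk1]
      nlinarith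
    exact mul_le_mul_of_nonneg_right this h0.le

theorem SS_super {g : ℝ → ℝ} (h : GH g) {a p α x y z : ℝ} (ha : 1 < a) (hp : 1 < p) (hα : 0 < α) (hx : 0 < x) (hxy : x ≤ y)
    (hyz : y ≤ z) : SS g a p α x y + SS g a p α y z ≤ SS g a p α x z := by
  have hp1 : 0 < p - 1 := by linarith
  have ha2 : 1 < a ^ 2 := by nlinarith
  have m1 := h.mono1 ha2 (e := 1 / p) (by positivity) hx hxy
  have m2 := h.mono1 ha2 (e := 1 / p) (by positivity) (hx.trans_le hxy) hyz
  have := Real.add_rpow_le_rpow_add (sub_nonneg.2 m1) (sub_nonneg.2 m2)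
    (show 1 ≤ p / (p - 1) by rw [le_div_iff₀ hp1]; linarith)
  rw [show W1 g (a ^ 2) (1 / p) y - W1 g (a ^ 2) (1 / p) x + (W1 g (a ^ 2) (1 / p) z - W1 g (a ^ 2) (1 / p) y) =
    W1 g (a ^ 2) (1 / p) z - W1 g (a ^ 2) (1 / p) x by ring] at this
  unfold SS
  linarith

theorem SS_nonneg {g : ℝ → ℝ} (h : GH g) {a p α x y : ℝ} (ha : 1 < a) (hp : 1 < p) (hα : 0 < α) (hx : 0 < x) (hxy : x ≤ y) :
    0 ≤ SS g a p α x y := by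
  have hp1 : 0 < p - 1 := by linarith
  have ha2 : 1 < a ^ 2 := by nlinarith
  have m1 := sub_nonneg.2 (h.mono1 ha2 (e := 1 / p) (by positivity) hx hxy)
  have m2 := sub_nonneg.2 (h.mono2 ha2 (e := 1 / α) (by positivity) hx hxy)
  have m3 := sub_nonneg.2 (h.mono2 ha (e := 1 / (p - 1)) (by positivity) hx hxy)
  unfold SS
  positivity

theorem total_sol (n : ℕ) (hn : 2 ≤ n) (p C₁ C₂ α a l k : ℝ) (hp : 1 < p) (hC₁ : 0 < C₁) (hC₂ : 0 < C₂)
    (hα : 0 < α) (ha : 1 < a) (hl : 1 < l) (hla : l ^ 2 * (a + 1) < 2 * a) (hk : 1 < k) :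
    ∃ C0 > 0, ∀ {A : Euc n → Euc n → Euc n} {b q : Euc n → ℝ} {g : ℝ → ℝ} {u : Euc n → ℝ},
      Sol p C₁ C₂ α A b q g u → ∀ {R R' : ℝ}, 0 < R → k * R ≤ R' → 0 < sphMax u R →
      ∫⁻ ξ in Ioc R R', ENNReal.ofReal ((ξ * fdef q b p α (k ^ 2) ξ) ^ (1 / (p - 1))) ≤
        ENNReal.ofReal (C0 * SS g a p α (sphMax u R) (sphMax u R')) := by
  obtain ⟨C0, hC0, hb⟩ := block_sol n hn p C₁ C₂ α a l k hp hC₁ hC₂ hα ha hl hla hk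
  refine ⟨C0, hC0, ?_⟩
  intro A b q g u h R R' hR hRR hM
  have hGH : GH g := ⟨h.gc, h.g0, h.gp⟩
  refine geom_chain (P := fun x y => ∫⁻ ξ in Ioc x y, ENNReal.ofReal ((ξ * fdef q b p α (k ^ 2) ξ) ^ (1 / (p - 1))) ≤
        ENNReal.ofReal (C0 * SS g a p α (sphMax u x) (sphMax u y))) hR hk ?_ ?_ R R' le_rfl hRR
  · intro x y hx h1 h2
    have hx0 := hR.trans_le hx
    have hxy : 0 < y - x := by nlinarith
    have blk := hb h hx0 h1 h2 (hM.trans_le (h.M_mono hR hx))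
    set V := C0 * SS g a p α (sphMax u x) (sphMax u y)
    calc ∫⁻ ξ in Ioc x y, ENNReal.ofReal ((ξ * fdef q b p α (k ^ 2) ξ) ^ (1 / (p - 1)))
        ≤ ∫⁻ ξ in Ioc x y, ENNReal.ofReal (V / (y - x)) := by
          refine setLIntegral_mono' measurableSet_Ioc fun ξ hξ => ENNReal.ofReal_le_ofReal ?_
          rw [le_div_iff₀ hxy]
          exact blk ξ hξ
      _ = ENNReal.ofReal V := by
          rw [setLIntegral_const, Real.volume_Ioc, ← ENNReal.ofReal_mul' hxy.le, div_mul_cancel₀ _ hxy.ne']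
  · intro x y z hx hxy hyz i1 i2
    have hx0 := hR.trans_le hx
    have hMx := hM.trans_le (h.M_mono hR hx)
    have hMxy := h.M_mono hx0 hxy
    have hMyz := h.M_mono (hx0.trans_le hxy) hyz
    rw [← Ioc_union_Ioc_eq_Ioc hxy hyz, lintegral_union measurableSet_Ioc (Ioc_disjoint_Ioc_of_le le_rfl)]
    refine (add_le_add i1 i2).trans ?_
    rw [← ENNReal.ofReal_add (mul_nonneg hC0.le (SS_nonneg hGH ha hp hα hMx hMxy))
      (mul_nonneg hC0.le (SS_nonneg hGH ha hp hα (hMx.trans_le hMxy) hMyz))]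
    refine ENNReal.ofReal_le_ofReal ?_
    rw [← mul_add]
    exact mul_le_mul_of_nonneg_left (SS_super hGH ha hp hα hMx hMxy hMyz) hC0.le


theorem lint_tail {F : ℝ → ℝ≥0∞} {r0 R1 : ℝ} (h01 : r0 ≤ R1) (htop : ∫⁻ r in Ioi r0, F r = ⊤)
    (hfin : ∫⁻ r in Ioc r0 R1, F r ≠ ⊤) (V : ℝ) : ∃ R', ∀ r, R' ≤ r → ENNReal.ofReal V < ∫⁻ r in Ioc R1 r, F r := by
  have h1 : ∫⁻ r in Ioi R1, F r = ⊤ := by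
    rw [← Ioc_union_Ioi_eq_Ioi h01, lintegral_union measurableSet_Ioi
      (Set.disjoint_left.2 fun x hx hx2 => absurd hx.2 (not_le.2 hx2))] at htop
    exact (ENNReal.add_eq_top.1 htop).resolve_left hfin
  have h2 : Ioi R1 = ⋃ N : ℕ, Ioc R1 (N : ℝ) := by
    ext x
    simp only [mem_Ioi, mem_iUnion, mem_Ioc]
    refine ⟨fun hx => ?_, fun ⟨N, hN⟩ => hN.1⟩
    obtain ⟨N, hN⟩ := exists_nat_ge x
    exact ⟨N, hx, hN⟩
  have hd : Directed (· ⊆ ·) fun N : ℕ => Ioc R1 (N : ℝ) := by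
    refine Monotone.directed_le (f := fun N : ℕ => Ioc R1 (N : ℝ)) fun i j hij => ?_
    exact Ioc_subset_Ioc le_rfl (by exact_mod_cast hij)
  rw [h2, setLIntegral_iUnion_of_directed _ hd] at h1
  have h3 : ENNReal.ofReal V < ⨆ N : ℕ, ∫⁻ r in Ioc R1 (N : ℝ), F r := by rw [h1]; exact ENNReal.ofReal_lt_top
  obtain ⟨N, hN⟩ := lt_iSup_iff.1 h3
  exact ⟨N, fun r hr => hN.trans_le (lintegral_mono_set (Ioc_subset_Ioc le_rfl hr))⟩

theorem main_aux (n : ℕ) (hn : 2 ≤ n) (p C₁ C₂ α a l k : ℝ) (hp : 1 < p) (hC₁ : 0 < C₁) (hC₂ : 0 < C₂)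
    (hα : 0 < α) (ha : 1 < a) (hl : 1 < l) (hla : l ^ 2 * (a + 1) < 2 * a) (hk : 1 < k) :
    ∃ C > 0, ∀ (r₀ : ℝ), 0 < r₀ → ∀ {A : Euc n → Euc n → Euc n} {b q : Euc n → ℝ} {g : ℝ → ℝ} {u : Euc n → ℝ},
      Sol p C₁ C₂ α A b q g u →
      (∫⁻ r in Set.Ioi r₀, ENNReal.ofReal ((r * fdef q b p α (k ^ 2) r) ^ (1 / (p - 1)))) = ⊤ →
      (∃ x, u x ≠ 0) →
        ∃ R : ℝ, r₀ < R ∧ ∀ r : ℝ, R ≤ r →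
          1 ≤ sphMax u r ∧
            C * ∫ ξ in Set.Ioc r₀ r, (ξ * fdef q b p α (k ^ 2) ξ) ^ (1 / (p - 1)) ≤
              Finfty g (a ^ 2) p α (sphMax u r) := by
  obtain ⟨C0, hC0, hb⟩ := total_sol n hn p C₁ C₂ α a l k hp hC₁ hC₂ hα ha hl hla hk
  have hp1 : 0 < p - 1 := by linarith
  have hl1 : 0 < l - 1 := by linarith
  have ha2 : 1 < a ^ 2 := by nlinarith
  have hk2 : 1 < k ^ 2 := by nlinarith
  have hla' : l ^ 2 ≤ a := by nlinarith
  set C3 := (l / (l - 1)) ^ (1 / (p - 1)) with hC3d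
  have hC3 : 0 < C3 := by positivity
  refine ⟨1 / (2 * C0 * (1 + C3)), by positivity, ?_⟩
  intro r₀ hr₀ A b q g u h htop hu
  have hGH : GH g := ⟨h.gc, h.g0, h.gp⟩
  set ψ : ℝ → ℝ := fun r => (r * fdef q b p α (k ^ 2) r) ^ (1 / (p - 1)) with hψ
  have hψ0 : ∀ r, 0 < r → 0 ≤ ψ r := fun r hr => (h.f_facts hk2 hr).1
  have hfin : ∀ R1, r₀ ≤ R1 → ∫⁻ r in Ioc r₀ R1, ENNReal.ofReal (ψ r) ≠ ⊤ := by
    intro R1 hR1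
    obtain ⟨Cq, hCq, hq⟩ := h.qinf_bdd hk2 R1
    have hR10 : 0 < R1 := by linarith
    have hle : ∫⁻ r in Ioc r₀ R1, ENNReal.ofReal (ψ r) ≤
        ∫⁻ r in Ioc r₀ R1, ENNReal.ofReal ((R1 * Cq) ^ (1 / (p - 1))) := by
      refine setLIntegral_mono' measurableSet_Ioc fun r hr => ENNReal.ofReal_le_ofReal ?_
      have hr0 : 0 < r := hr₀.trans hr.1
      obtain ⟨f0, f1, _⟩ := h.f_facts hk2 hr0
      have f2 : ψ r ^ (p - 1) ≤ R1 * Cq := f1.trans (mul_le_mul hr.2 (hq r hr0 hr.2) (h.qinf_nonneg hk2 hr0) hR10.le)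
      have f3 := Real.rpow_le_rpow (Real.rpow_nonneg f0 _) f2 (by positivity : 0 ≤ 1 / (p - 1))
      rwa [← Real.rpow_mul f0, show (p - 1) * (1 / (p - 1)) = 1 by field_simp, Real.rpow_one] at f3
    refine ne_top_of_le_ne_top ?_ hle
    rw [setLIntegral_const, Real.volume_Ioc]
    exact ENNReal.mul_ne_top ENNReal.ofReal_ne_top ENNReal.ofReal_ne_top
  have unb : ∀ B : ℝ, ∃ R, r₀ < R ∧ B ≤ sphMax u R := by
    by_contra hcon
    push Not at hcon
    obtain ⟨B, hB⟩ := hcon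
    obtain ⟨x, hx⟩ := hu
    have hux : 0 < u x := lt_of_le_of_ne (h.u0 x) (Ne.symm hx)
    set R1 := max (r₀ + 1) (‖x‖ + 1)
    have hR1a : r₀ + 1 ≤ R1 := le_max_left _ _
    have hR1b : ‖x‖ + 1 ≤ R1 := le_max_right _ _
    have hR10 : 0 < R1 := by linarith
    have hM1 : 0 < sphMax u R1 := hux.trans_le ((h.M_spec hR10).2 x (by linarith))
    obtain ⟨R', hR'⟩ := lint_tail (F := fun r => ENNReal.ofReal (ψ r)) (by linarith : r₀ ≤ R1) htop (hfin R1 (by linarith))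
      (C0 * SS g a p α (sphMax u R1) B)
    set r := max R' (k * R1)
    have hkr : k * R1 ≤ r := le_max_right _ _
    have hR1r : R1 ≤ r := by nlinarith
    have e1 := hR' r (le_max_left _ _)
    have e2 := hb h hR10 hkr hM1
    have e3 := h.M_mono hR10 hR1r
    have e4 := (hB r (by linarith)).le
    have e5 := SS_super hGH ha hp hα hM1 e3 e4
    have e6 := SS_nonneg hGH ha hp hα (hM1.trans_le e3) e4
    have e7 : C0 * SS g a p α (sphMax u R1) (sphMax u r) ≤ C0 * SS g a p α (sphMax u R1) B := by
      apply mul_le_mul_of_nonneg_left _ hC0.le; linarith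
    exact absurd (e1.trans_le (e2.trans (ENNReal.ofReal_le_ofReal e7))) (lt_irrefl _)
  obtain ⟨R1, hR1, hM1⟩ := unb 1
  obtain ⟨R2, hR2, hM2⟩ := unb (l * sphMax u R1)
  have hR10 : 0 < R1 := by linarith
  have hM10 : 0 < sphMax u R1 := by linarith
  set I0 := ∫⁻ r in Ioc r₀ R1, ENNReal.ofReal (ψ r) with hI0
  have hI0f := hfin R1 hR1.le
  obtain ⟨R3, hR3⟩ := lint_tail (F := fun r => ENNReal.ofReal (ψ r)) hR1.le htop hI0f I0.toReal
  refine ⟨max (max R2 R3) (k * R1), ?_, ?_⟩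
  · exact lt_of_lt_of_le hR2 ((le_max_left _ _).trans (le_max_left _ _))
  intro r hr
  have hr2 : R2 ≤ r := ((le_max_left _ _).trans (le_max_left _ _)).trans hr
  have hr3 : R3 ≤ r := ((le_max_right _ _).trans (le_max_left _ _)).trans hr
  have hkr : k * R1 ≤ r := (le_max_right _ _).trans hr
  have hR1r : R1 ≤ r := by nlinarith
  have hMr := h.M_mono hR10 hR1r
  have hMr1 : 1 ≤ sphMax u r := hM1.trans hMr
  have hMl : l * sphMax u R1 ≤ sphMax u r := hM2.trans (h.M_mono (by linarith) hr2)
  refine ⟨hMr1, ?_⟩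
  have e1 := (hR3 r hr3).le
  rw [ENNReal.ofReal_toReal hI0f] at e1
  have e2 := hb h hR10 hkr hM10
  have e3 : ∫⁻ x in Ioc r₀ r, ENNReal.ofReal (ψ x) ≤ ENNReal.ofReal (2 * (C0 * SS g a p α (sphMax u R1) (sphMax u r))) := by
    rw [← Ioc_union_Ioc_eq_Ioc hR1.le hR1r, lintegral_union measurableSet_Ioc (Ioc_disjoint_Ioc_of_le le_rfl)]
    have nn := mul_nonneg hC0.le (SS_nonneg hGH ha hp hα hM10 hMr)
    rw [two_mul, ENNReal.ofReal_add nn nn]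
    exact add_le_add (e1.trans e2) e2
  have nn := mul_nonneg hC0.le (SS_nonneg hGH ha hp hα hM10 hMr)
  have e4 : ∫ ξ in Ioc r₀ r, ψ ξ ≤ 2 * (C0 * SS g a p α (sphMax u R1) (sphMax u r)) := by
    refine (Real.le_norm_self _).trans ((norm_integral_le_lintegral_norm _).trans ?_)
    refine ENNReal.toReal_le_of_le_ofReal (by linarith) (le_trans (le_of_eq ?_) e3)
    refine setLIntegral_congr_fun measurableSet_Ioc fun x hx => ?_
    rw [Real.norm_of_nonneg (hψ0 x (hr₀.trans hx.1))]
  have cmp := hGH.compare hp ha hl hla' hM10 hMl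
  have w1 := hGH.mono1 ha2 (e := 1 / p) (by positivity) one_pos hM1
  have w1' := hGH.mono1 ha2 (e := 1 / p) (by positivity) hM10 hMr
  have w2 := hGH.mono2 ha2 (e := 1 / α) (by positivity) one_pos hM1
  have w2' := hGH.mono2 ha2 (e := 1 / α) (by positivity) hM10 hMr
  have z1 : W1 g (a ^ 2) (1 / p) 1 = 0 := by simp [W1]
  have z2 : W2 g (a ^ 2) (1 / α) 1 = 0 := by simp [W2]
  rw [z1] at w1
  rw [z2] at w2
  have fin : Finfty g (a ^ 2) p α (sphMax u r) =
      W1 g (a ^ 2) (1 / p) (sphMax u r) ^ (p / (p - 1)) + W2 g (a ^ 2) (1 / α) (sphMax u r) := by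
    unfold Finfty W1 W2
    rw [intervalIntegral.integral_of_le hMr1, intervalIntegral.integral_of_le hMr1]
  have e5 : SS g a p α (sphMax u R1) (sphMax u r) ≤ (1 + C3) * Finfty g (a ^ 2) p α (sphMax u r) := by
    rw [fin]
    unfold SS
    have pw : (W1 g (a ^ 2) (1 / p) (sphMax u r) - W1 g (a ^ 2) (1 / p) (sphMax u R1)) ^ (p / (p - 1)) ≤
        W1 g (a ^ 2) (1 / p) (sphMax u r) ^ (p / (p - 1)) :=
      Real.rpow_le_rpow (by linarith) (by linarith) (by positivity)
    have pw' := mul_le_mul_of_nonneg_left pw hC3.le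
    have : 0 ≤ C3 * W2 g (a ^ 2) (1 / α) (sphMax u r) := mul_nonneg hC3.le (by linarith)
    linarith
  rw [one_div, inv_mul_le_iff₀ (by positivity)]
  refine e4.trans ?_
  have := mul_le_mul_of_nonneg_left e5 (by positivity : 0 ≤ 2 * C0)
  linarith

/-- Theorem 2.2 (lower a priori estimate): if the `f_σ` integral diverges while at least one of
the `g_θ` integrals diverges, there is a constant `C > 0` depending only on
`n, p, θ, σ, α, C₁, C₂` such that every nontrivial nonnegative solution satisfies
`F_∞(M(r;u)) ≥ C ∫_{r₀}^r (ξ f_σ(ξ))^{1/(p-1)} dξ` (with `M(r;u) ≥ 1`) for all large `r`. -/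
theorem stmt_1 (n : ℕ) (hn : 2 ≤ n) (p C₁ C₂ α : ℝ) (hp : 1 < p)
    (hC₁ : 0 < C₁) (hC₂ : 0 < C₂) (hα₁ : p - 1 ≤ α) (hα₂ : α ≤ p)
    (θ σ : ℝ) (hθ : 1 < θ) (hσ : 1 < σ) :
    ∃ C : ℝ, 0 < C ∧
      ∀ (r₀ : ℝ), 0 < r₀ →
      ∀ (A : Euc n → Euc n → Euc n), StructCond A p C₁ C₂ →
      ∀ (b : Euc n → ℝ), Measurable b → (∀ x, 0 ≤ b x) → LocBdd b →
      ∀ (q : Euc n → ℝ), Measurable q → (∀ x, 0 ≤ q x) → LocBdd q →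
      ∀ (g : ℝ → ℝ), ContinuousOn g (Set.Ici 0) → (∀ t ∈ Set.Ici (0 : ℝ), 0 ≤ g t) →
        (∀ t : ℝ, 0 < t → 0 < g t) →
      (∫⁻ r in Set.Ioi r₀, ENNReal.ofReal ((r * fdef q b p α σ r) ^ (1 / (p - 1)))) = ⊤ →
      ((∫⁻ t in Set.Ioi (1 : ℝ), ENNReal.ofReal ((ginf g θ t * t) ^ (-(1 / p)))) = ⊤ ∨
        (∫⁻ t in Set.Ioi (1 : ℝ), ENNReal.ofReal (ginf g θ t ^ (-(1 / α)))) = ⊤) →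
      ∀ u : Euc n → ℝ, ContDiff ℝ 1 u → (∀ x, 0 ≤ u x) →
        IsWeakSol A b α (fun x => q x * g (u x)) Set.univ u →
        (∃ x, u x ≠ 0) →
        ∃ R : ℝ, r₀ < R ∧ ∀ r : ℝ, R ≤ r →
          1 ≤ sphMax u r ∧
            C * ∫ ξ in Set.Ioc r₀ r, (ξ * fdef q b p α σ ξ) ^ (1 / (p - 1)) ≤
              Finfty g θ p α (sphMax u r) := by

  have hp1 : 0 < p - 1 := by linarith
  have hα : 0 < α := by linarith
  have ha : 1 < Real.sqrt θ := by rw [Real.lt_sqrt (by norm_num)]; linarith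
  have hk : 1 < Real.sqrt σ := by rw [Real.lt_sqrt (by norm_num)]; linarith
  have haθ : Real.sqrt θ ^ 2 = θ := Real.sq_sqrt (by linarith)
  have hkσ : Real.sqrt σ ^ 2 = σ := Real.sq_sqrt (by linarith)
  set a := Real.sqrt θ
  set w := (3 * a + 1) / (2 * (a + 1)) with hw
  have hw1 : 1 < w := by rw [hw, lt_div_iff₀ (by linarith)]; linarith
  have hl : 1 < Real.sqrt w := by rw [Real.lt_sqrt (by norm_num)]; linarith
  have hlw : Real.sqrt w ^ 2 = w := Real.sq_sqrt (by linarith)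
  have hla : Real.sqrt w ^ 2 * (a + 1) < 2 * a := by
    rw [hlw, hw, div_mul_eq_mul_div, div_lt_iff₀ (by linarith)]; nlinarith
  obtain ⟨C, hC, hmain⟩ := main_aux n hn p C₁ C₂ α a (Real.sqrt w) (Real.sqrt σ) hp hC₁ hC₂ hα ha hl hla hk
  rw [haθ, hkσ] at hmain
  refine ⟨C, hC, ?_⟩
  intro r₀ hr₀ A hA b bm b0 bl q qm q0 ql g gc g0 gp hf _ u uc u0 uw hu
  exact hmain r₀ hr₀ ⟨hn, hp, hC₁, hC₂, hα₁, hα₂, hA, bm, b0, bl, qm, q0, ql, gc, g0, gp, uc, u0, uw⟩ hf hu
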